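/- Let n ≥ 2, let Ω₁ ⊂ ℝⁿ be a nonempty bounded open set and let Ω₂ ⊂ ℝⁿ be a nonempty bounded open convex set, with closure(Ω₁) ∩ closure(Ω₂) = ∅. Then there exist constants σ > 0 and C > 1 (depending only on Ω₁ and Ω₂) such that for every ε > 0 and every differentiable h : ℝⁿ → ℝ with gradient ∇h satisfying ∫_{Ω₂} h(x)² dx < ∞ and ∫_{Ω₂} |∇h(x)|² dx < ∞, there exist an index j ∈ {1, …, n} and a measurable f : ℝⁿ → ℝ with ∫_{Ω₁} f(y)² dy < ∞ such that ( ∫_{Ω₂} ( h(x) − (R_j^{Ω₁} f)(x) )² dx )^{1/2} ≤ ε and ‖f‖_{L²(Ω₁)} ≤ exp( C · (1 + ‖h‖_{H¹(Ω₂)}^{σ} / ε^{σ}) ) · ‖h‖_{L²(Ω₂)}. -/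

import Mathlib

/-!
The control is the Tikhonov-regularised solution `f` of `R f = h`, the minimiser of
`‖h - R f‖² + V η² ‖f‖²` with `V` the volume of `Ω₂` (`riesz_tikhonov`). Its residual `g = h - R f`
satisfies `∫ g h = ‖g‖² + V η² ‖f‖²`, which bounds the cost `‖f‖` by a multiple of `‖h‖ / η`, and the
dual Riesz potential of `g` on `Ω₁` equals `V η² f`, hence is of size `η`. So it suffices to prove, with
quantitative constants, that a density `g` on `Ω₂` whose dual potential is small on `Ω₁` is almost
orthogonal to functions in `H¹(Ω₂)`; then `‖g‖² ≤ ∫ g h` is small (`main_step`).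

*Unique continuation.* The potential is embedded in the family `HH` of holomorphic functions of
`(y, w)` with kernels `(x_j - y_j) (∑ᵢ (xᵢ - yᵢ)² + w)^{-(n+1)/2-k}`. A bound in `L²(Ω₁)` gives a
pointwise bound on a real ball (`HH_sup_small`), the two-constants theorem `small_of_segment` carries
it to a complex polydisc (`HH_polydisc`), and since the Laplacian in `y` and the derivative in `w` both
raise `k` (`HH_laplacian`, `HH_iteratedDeriv_w`), Cauchy estimates and a Taylor expansion carry it to
small `w ≠ 0` and all `k` (`HH_laplace_iter`, `HH_small_w`). Along the curve
`(y₀ + ζ (z - y₀), (|z - y₀|² + S) ζ - |z - y₀|² ζ²)` the base of the kernel is affine in `ζ`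
(`kq_path`), so the potential is holomorphic in a half plane, and a second application of the
two-constants theorem reaches the point `(z, S)` at `ζ = 1`, for any real `z` in a large ball
(`HH_propagate`). Altogether the potential at `(z, S)` is at most `C^{k+1} η^θ` (`HH_core`).

*Concentration.* At `w = S > 0` the kernel has no singularity, and it is a `j`-th partial derivative
of a multiple of the positive kernel `(|v|² + S)^{-m}`. Integrating in direction `e_j` bounds the
convolution of `g` with that positive kernel (`theta_bound`). For large `k` this kernel is concentrated
on the scale `τ`, with a relative tail `exp (-c τ² k)`, so it serves as an approximate identity. Convexity
of `Ω₂` allows the mollification to be combined with a contraction towards an interior point, which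
keeps the arguments of `h` in `Ω₂`; the resulting error is `O(τ) ‖∇h‖ ‖g‖` (`pairing_bound`,
`pairing_final`).

*Choice of parameters.* With `Q = ‖h‖_{H¹} / ε` one takes `τ` of order `1 / Q`, and then `k` and
`log (1 / η)` of order `Q³` (`parameters`). This gives the exponent `σ = 3`, for any fixed index `j`.
-/

open MeasureTheory Set

/-- Unnormalized `j`-th truncated Riesz transform:
`(R_j^Ω f)(x) = ∫_Ω f(y) (x_j - y_j)/|x - y|^{n+1} dy`. -/
noncomputable def truncRiesz (n : ℕ) (Ω : Set (EuclideanSpace ℝ (Fin n))) (j : Fin n)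
    (f : EuclideanSpace ℝ (Fin n) → ℝ) (x : EuclideanSpace ℝ (Fin n)) : ℝ :=
  ∫ y in Ω, f y * (x j - y j) / ‖x - y‖ ^ (n + 1)

/-! ### A two-constants theorem and holomorphic parameter integrals -/

lemma sq_norm_cosh (z : ℂ) : ‖Complex.cosh z‖ ^ 2 =
    Real.cosh z.re ^ 2 * Real.cos z.im ^ 2 + Real.sinh z.re ^ 2 * Real.sin z.im ^ 2 := by
  have h : Complex.cosh z = ((Real.cosh z.re * Real.cos z.im : ℝ) : ℂ) +
      ((Real.sinh z.re * Real.sin z.im : ℝ) : ℂ) * Complex.I := by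
    conv_lhs => rw [← Complex.re_add_im z]
    rw [Complex.cosh_add, Complex.cosh_mul_I, Complex.sinh_mul_I]
    push_cast
    ring
  rw [h, Complex.sq_norm, Complex.normSq_add_mul_I]
  ring

lemma norm_cosh_le (z : ℂ) : ‖Complex.cosh z‖ ≤ Real.cosh z.re := by
  apply le_of_sq_le_sq _ (Real.cosh_pos _).le
  rw [sq_norm_cosh, Real.sinh_sq]
  nlinarith [Real.sin_sq_add_cos_sq z.im, sq_nonneg (Real.sin z.im)]

lemma sq_sinh_le_norm_cosh (z : ℂ) : Real.sinh z.re ^ 2 ≤ ‖Complex.cosh z‖ ^ 2 := by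
  rw [sq_norm_cosh, Real.cosh_sq]
  nlinarith [Real.sin_sq_add_cos_sq z.im, sq_nonneg (Real.cos z.im)]

/-- Two-constants theorem for a disc and a diameter-centred segment: smallness of a bounded
holomorphic function on a real segment spreads, with a Hölder loss, to any smaller disc.
For small `s` the map `z ↦ s cosh z` carries a vertical strip into an ellipse inside the large disc
and the imaginary axis into the segment, which reduces the claim to the three-lines theorem. -/
lemma small_of_segment {r ρ R : ℝ} (hr : 0 < r) (hρ : 0 < ρ) (hρR : ρ < R) :
    ∃ θ : ℝ, 0 < θ ∧ θ < 1 ∧ ∀ (F : ℂ → ℂ) (M α : ℝ),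
      DifferentiableOn ℂ F (Metric.ball 0 R) → (∀ ζ ∈ Metric.ball (0 : ℂ) R, ‖F ζ‖ ≤ M) →
      0 < α → α ≤ M → (∀ t : ℝ, |t| ≤ r → ‖F t‖ ≤ α) →
      ∀ ζ : ℂ, ‖ζ‖ ≤ ρ → ‖F ζ‖ ≤ M ^ (1 - θ) * α ^ θ := by
  have hR : 0 < R := hρ.trans hρR
  -- the segment is shortened until a confocal ellipse around the disc of radius `ρ` fits in the
  -- disc of radius `R`
  obtain ⟨s, hs0, hsr, hsR⟩ : ∃ s : ℝ, 0 < s ∧ s ≤ r ∧ s ^ 2 + ρ ^ 2 < R ^ 2 := by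
    have h1 : 0 < R ^ 2 - ρ ^ 2 := by nlinarith
    refine ⟨min r (Real.sqrt ((R ^ 2 - ρ ^ 2) / 2)), lt_min hr (Real.sqrt_pos.2 (by linarith)),
      min_le_left _ _, ?_⟩
    have h2 : min r (Real.sqrt ((R ^ 2 - ρ ^ 2) / 2)) ^ 2 ≤
        Real.sqrt ((R ^ 2 - ρ ^ 2) / 2) ^ 2 := by
      apply pow_le_pow_left₀ (lt_min hr (Real.sqrt_pos.2 (by linarith))).le (min_le_right _ _)
    rw [Real.sq_sqrt (by linarith)] at h2
    linarith
  set b' := Real.arsinh (ρ / s) with hb'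
  have hsinh : Real.sinh b' = ρ / s := Real.sinh_arsinh _
  have hb'0 : 0 < b' := Real.arsinh_pos_iff.2 (by positivity)
  have hcosh : s * Real.cosh b' < R := by
    apply lt_of_pow_lt_pow_left₀ 2 hR.le
    rw [mul_pow, Real.cosh_sq, hsinh]
    have : s ^ 2 * ((ρ / s) ^ 2 + 1) = s ^ 2 + ρ ^ 2 := by field_simp; ring
    linarith
  obtain ⟨b, hbb', hbR⟩ : ∃ b, b' < b ∧ s * Real.cosh b < R := by
    have hc : Filter.Tendsto (fun t => s * Real.cosh t) (nhds b') (nhds (s * Real.cosh b')) :=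
      (continuous_const.mul Real.continuous_cosh).continuousAt
    have h1 := (hc.eventually (gt_mem_nhds hcosh))
    have h2 : ∀ᶠ t in nhdsWithin b' (Ioi b'), s * Real.cosh t < R := h1.filter_mono nhdsWithin_le_nhds
    obtain ⟨b, hb1, hb2⟩ := (h2.and self_mem_nhdsWithin).exists
    exact ⟨b, hb2, hb1⟩
  have hb0 : 0 < b := hb'0.trans hbb'
  refine ⟨1 - b' / b, ?_, ?_, ?_⟩
  · rw [sub_pos, div_lt_one hb0]; exact hbb'
  · have : 0 < b' / b := by positivity
    linarith
  intro F M α hF hM hα hαM hseg ζ hζ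
  have hM0 : 0 < M := hα.trans_le hαM
  obtain ⟨z, hz0, hz⟩ : ∃ z : ℂ, 0 ≤ z.re ∧ s * Complex.cosh z = ζ := by
    obtain ⟨w, hw⟩ := Complex.cos_surjective (ζ / s)
    have hs' : (s : ℂ) ≠ 0 := by exact_mod_cast hs0.ne'
    have h1 : s * Complex.cosh (w * Complex.I) = ζ := by
      rw [Complex.cosh_mul_I, hw]; field_simp
    by_cases h : 0 ≤ (w * Complex.I).re
    · exact ⟨_, h, h1⟩
    · refine ⟨-(w * Complex.I), ?_, by rw [Complex.cosh_neg, h1]⟩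
      rw [Complex.neg_re]; linarith
  have hzb : z.re ≤ b' := by
    have h1 := sq_sinh_le_norm_cosh z
    have h2 : ‖ζ‖ = s * ‖Complex.cosh z‖ := by
      rw [← hz, norm_mul, Complex.norm_real, Real.norm_of_nonneg hs0.le]
    have h3 : ‖Complex.cosh z‖ ≤ ρ / s := by
      rw [le_div_iff₀ hs0]; linarith
    have h4 : Real.sinh z.re ≤ Real.sinh b' := by
      rw [hsinh]
      exact (le_of_sq_le_sq h1 (norm_nonneg _)).trans h3
    exact Real.sinh_le_sinh.1 h4
  have hball : ∀ w : ℂ, |w.re| ≤ b → (s : ℂ) * Complex.cosh w ∈ Metric.ball (0 : ℂ) R := by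
    intro w hw
    rw [mem_ball_zero_iff, norm_mul, Complex.norm_real, Real.norm_of_nonneg hs0.le]
    refine lt_of_le_of_lt ?_ hbR
    have h1 : Real.cosh w.re ≤ Real.cosh b := by
      rw [Real.cosh_le_cosh, abs_of_pos hb0]; exact hw
    exact mul_le_mul_of_nonneg_left ((norm_cosh_le w).trans h1) hs0.le
  -- three-lines theorem on `0 ≤ Re w ≤ b`; the line `Re w = 0` is mapped into the segment
  have key := Complex.HadamardThreeLines.norm_le_interp_of_mem_verticalClosedStrip'
    (f := fun w => F (s * Complex.cosh w)) (z := z) (a := α) (b := M) (l := 0) (u := b) hb0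
    ?_ ?_ ?_ ?_ ?_
  · simp only [sub_zero, hz] at key
    refine key.trans ?_
    have e : M ^ (1 - (1 - b' / b)) * α ^ (1 - b' / b) = (M / α) ^ (b' / b) * α := by
      rw [Real.div_rpow hM0.le hα.le, Real.rpow_sub hα, Real.rpow_one]
      have : 0 < α ^ (b' / b) := by positivity
      field_simp
      congr 1; ring
    have e' : α ^ (1 - z.re / b) * M ^ (z.re / b) = (M / α) ^ (z.re / b) * α := by
      rw [Real.div_rpow hM0.le hα.le, Real.rpow_sub hα, Real.rpow_one]
      have : 0 < α ^ (z.re / b) := by positivity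
      field_simp
    rw [e, e']
    apply mul_le_mul_of_nonneg_right _ hα.le
    apply Real.rpow_le_rpow_of_exponent_le
    · rwa [one_le_div hα]
    · gcongr
  · exact ⟨hz0, by linarith⟩
  · apply DifferentiableOn.diffContOnCl
    rw [Complex.HadamardThreeLines.verticalStrip, Complex.closure_preimage_re,
      closure_Ioo hb0.ne]
    apply hF.comp (by fun_prop)
    intro w hw
    apply hball
    rw [abs_of_nonneg hw.1]; exact hw.2
  · refine ⟨M, ?_⟩
    rintro _ ⟨w, hw, rfl⟩
    apply hM
    apply hball
    rw [abs_of_nonneg hw.1]; exact hw.2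
  · intro w hw
    have hw : w.re = 0 := hw
    have : (s : ℂ) * Complex.cosh w = ((s * Real.cos w.im : ℝ) : ℂ) := by
      conv_lhs => rw [← Complex.re_add_im w, hw]
      rw [Complex.ofReal_zero, zero_add, Complex.cosh_mul_I]
      push_cast; rfl
    simp only [this]
    apply hseg
    rw [abs_mul, abs_of_pos hs0]
    nlinarith [Real.abs_cos_le_one w.im, abs_nonneg (Real.cos w.im)]
  · intro w hw
    have hw : w.re = b := hw
    apply hM
    apply hball
    rw [hw, abs_of_pos hb0]

/-- A holomorphic function with uniformly small normalised Taylor coefficients is small on the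
half-radius disc. -/
lemma taylor_bound {F : ℂ → ℂ} {R R' : ℝ} (hR' : 0 < R') (hRR : R' ≤ R)
    (hF : DifferentiableOn ℂ F (Metric.ball 0 R)) {β : ℝ}
    (hβ : ∀ i : ℕ, ‖iteratedDeriv i F 0‖ / i.factorial * R' ^ i ≤ β)
    {ζ : ℂ} (hζ : ‖ζ‖ ≤ R' / 2) : ‖F ζ‖ ≤ 2 * β := by
  have hs := Complex.hasSum_taylorSeries_on_ball (z := ζ) (c := 0) (r := R)
    (f := F) hF (by simpa using lt_of_le_of_lt hζ (by linarith : R' / 2 < R))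
  have hg : HasSum (fun i : ℕ => β * (1 / 2 : ℝ) ^ i) (β * 2) := by
    simpa using (hasSum_geometric_two).mul_left β
  rw [mul_comm 2 β]
  refine hs.norm_le_of_bounded hg ?_
  intro i
  rw [norm_smul, norm_smul, norm_inv, sub_zero, norm_pow, Complex.norm_natCast]
  have h1 : ‖ζ‖ ^ i ≤ (R' / 2) ^ i := pow_le_pow_left₀ (norm_nonneg _) hζ i
  calc ((i.factorial : ℝ))⁻¹ * (‖ζ‖ ^ i * ‖iteratedDeriv i F 0‖)
      ≤ ((i.factorial : ℝ))⁻¹ * ((R' / 2) ^ i * ‖iteratedDeriv i F 0‖) := by gcongr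
    _ = (‖iteratedDeriv i F 0‖ / i.factorial * R' ^ i) * (1 / 2) ^ i := by
      rw [div_pow, div_pow, one_pow]; field_simp
    _ ≤ _ := by gcongr; exact hβ i

/-- Holomorphic dependence of an integral on a parameter, for uniformly bounded integrands. -/
lemma hasDerivAt_param {X : Type*} [MeasurableSpace X] {ν : Measure X} {g : X → ℂ}
    (hg : Integrable g ν) {κ : X → ℂ → ℂ} {κ' : X → ℂ} {ζ₀ : ℂ} {r B : ℝ} (hr : 0 < r)
    (hmeas : ∀ ζ ∈ Metric.ball ζ₀ r, AEStronglyMeasurable (fun x => κ x ζ) ν)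
    (hd : ∀ᵐ x ∂ν, DifferentiableOn ℂ (κ x) (Metric.ball ζ₀ r))
    (hd' : ∀ᵐ x ∂ν, HasDerivAt (κ x) (κ' x) ζ₀)
    (hB : ∀ᵐ x ∂ν, ∀ ζ ∈ Metric.ball ζ₀ r, ‖κ x ζ‖ ≤ B) :
    HasDerivAt (fun ζ => ∫ x, g x * κ x ζ ∂ν) (∫ x, g x * κ' x ∂ν) ζ₀ := by
  have hmeas' : AEStronglyMeasurable κ' ν := by
    have hu : Filter.Tendsto (fun m : ℕ => ((r / 2 / (m + 1) : ℝ) : ℂ)) Filter.atTop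
        (nhdsWithin 0 {0}ᶜ) := by
      rw [tendsto_nhdsWithin_iff]
      constructor
      · rw [← Complex.ofReal_zero]
        apply (Complex.continuous_ofReal.tendsto _).comp
        exact tendsto_const_div_atTop_nhds_zero_nat (r / 2) |>.comp (Filter.tendsto_add_atTop_nat 1)
          |>.congr (fun m => by simp)
      · filter_upwards with m
        have : (0:ℝ) < r / 2 / (m + 1) := by positivity
        simp only [mem_compl_iff, mem_singleton_iff]
        exact_mod_cast this.ne'
    refine aestronglyMeasurable_of_tendsto_ae Filter.atTop (f := fun (m : ℕ) x =>
      ((r / 2 / (m + 1) : ℝ) : ℂ)⁻¹ • (κ x (ζ₀ + ((r / 2 / (m + 1) : ℝ) : ℂ)) - κ x ζ₀)) ?_ ?_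
    · intro m
      have hm : ζ₀ + ((r / 2 / (m + 1) : ℝ) : ℂ) ∈ Metric.ball ζ₀ r := by
        rw [Metric.mem_ball, dist_eq_norm, add_sub_cancel_left, Complex.norm_real,
          Real.norm_of_nonneg (by positivity)]
        rw [div_lt_iff₀ (by positivity)]
        nlinarith [(Nat.cast_nonneg m : (0:ℝ) ≤ m)]
      have h1 : AEStronglyMeasurable
          (fun x => κ x (ζ₀ + ((r / 2 / (m + 1) : ℝ) : ℂ)) - κ x ζ₀) ν :=
        (hmeas _ hm).sub (hmeas _ (Metric.mem_ball_self hr))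
      exact h1.const_smul (((r / 2 / (m + 1) : ℝ) : ℂ)⁻¹)
    · filter_upwards [hd'] with x hx
      rw [hasDerivAt_iff_tendsto_slope_zero] at hx
      exact hx.comp hu
  have hIg : ∀ ζ ∈ Metric.ball ζ₀ r, Integrable (fun x => g x * κ x ζ) ν := by
    intro ζ hζ
    apply hg.mul_bdd (c := B) (hmeas ζ hζ)
    filter_upwards [hB] with x hx
    exact hx ζ hζ
  have hB0 : ∀ᵐ x ∂ν, ∀ ζ ∈ Metric.ball ζ₀ (r / 2), ‖deriv (κ x) ζ‖ ≤ B / (r / 4) := by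
    filter_upwards [hd, hB] with x hx hxB ζ hζ
    rw [Metric.mem_ball] at hζ
    have hsub : Metric.closedBall ζ (r / 4) ⊆ Metric.ball ζ₀ r := by
      apply Metric.closedBall_subset_ball'
      linarith
    apply Complex.norm_deriv_le_of_forall_mem_sphere_norm_le (by positivity)
    · apply DifferentiableOn.diffContOnCl
      rw [closure_ball _ (by positivity)]
      exact hx.mono hsub
    · intro z hz
      exact hxB z (hsub (Metric.sphere_subset_closedBall hz))
  have key := hasDerivAt_integral_of_dominated_loc_of_deriv_le (μ := ν) (x₀ := ζ₀)
    (s := Metric.ball ζ₀ (r / 2)) (F := fun ζ x => g x * κ x ζ)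
    (F' := fun ζ x => g x * deriv (κ x) ζ) (bound := fun x => ‖g x‖ * (B / (r / 4)))
    (Metric.ball_mem_nhds _ (by positivity)) ?_ (hIg _ (Metric.mem_ball_self hr)) ?_ ?_ ?_ ?_
  · have e : ∫ x, g x * κ' x ∂ν = ∫ x, g x * deriv (κ x) ζ₀ ∂ν := by
      apply integral_congr_ae
      filter_upwards [hd'] with x hx
      simp only [hx.deriv]
    rw [e]
    exact key.2
  · filter_upwards [Metric.ball_mem_nhds ζ₀ hr] with ζ hζ
    exact (hIg ζ hζ).aestronglyMeasurable
  · apply hg.aestronglyMeasurable.mul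
    apply hmeas'.congr
    filter_upwards [hd'] with x hx
    simp only [hx.deriv]
  · filter_upwards [hB0] with x hx ζ hζ
    rw [norm_mul]
    exact mul_le_mul_of_nonneg_left (hx ζ hζ) (norm_nonneg _)
  · exact hg.norm.mul_const _
  · filter_upwards [hd] with x hx ζ hζ
    have : DifferentiableAt ℂ (κ x) ζ := by
      apply hx.differentiableAt
      apply Metric.isOpen_ball.mem_nhds
      exact Metric.ball_subset_ball (by linarith) hζ
    exact this.hasDerivAt.const_mul _

/-- The two-constants theorem with an arbitrary centre and with the smallness normalised to a relative
factor `q` of the global bound `M`, which makes it easy to iterate. -/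
lemma small_of_segment' {r ρ R : ℝ} (hr : 0 < r) (hρ : 0 < ρ) (hρR : ρ < R) :
    ∃ θ : ℝ, 0 < θ ∧ θ < 1 ∧ ∀ (F : ℂ → ℂ) (c : ℂ) (M q : ℝ),
      DifferentiableOn ℂ F (Metric.ball c R) → (∀ ζ ∈ Metric.ball c R, ‖F ζ‖ ≤ M) →
      0 < M → 0 < q → q ≤ 1 → (∀ t : ℝ, |t| ≤ r → ‖F (c + t)‖ ≤ M * q) →
      ∀ ζ : ℂ, ‖ζ - c‖ ≤ ρ → ‖F ζ‖ ≤ M * q ^ θ := by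
  obtain ⟨θ, h0, h1, h⟩ := small_of_segment hr hρ hρR
  refine ⟨θ, h0, h1, ?_⟩
  intro F c M q hF hM hM0 hq hq1 hs ζ hζ
  have hmap : MapsTo (fun z => c + z) (Metric.ball 0 R) (Metric.ball c R) := by
    intro z hz
    simpa using hz
  have := h (fun z => F (c + z)) M (M * q) (hF.comp (by fun_prop) hmap)
    (fun z hz => hM _ (hmap hz)) (by positivity) (mul_le_of_le_one_right hM0.le hq1) hs
    (ζ - c) hζ
  simp only [add_sub_cancel] at this
  refine this.trans (le_of_eq ?_)
  rw [Real.mul_rpow hM0.le hq.le, ← mul_assoc, ← Real.rpow_add hM0]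
  simp

/-! ### The complexified Riesz potentials -/

/-- The complexified square distance `∑ᵢ (xᵢ - yᵢ)²`, a polynomial in `y`. -/
noncomputable def kq {n : ℕ} (x : EuclideanSpace ℝ (Fin n)) (y : Fin n → ℂ) : ℂ :=
  ∑ i, ((x i : ℂ) - y i) ^ 2

/-- The exponent `(n + 1) / 2 + k`. -/
noncomputable def km (n k : ℕ) : ℝ := ((n : ℝ) + 1) / 2 + k

/-- The complexified kernel `(x_j - y_j) (∑ᵢ (xᵢ - yᵢ)² + w)^{-(n+1)/2 - k}`; the Riesz kernel
is the case `k = 0`, `w = 0`, `y` real. -/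
noncomputable def kk {n : ℕ} (j : Fin n) (k : ℕ) (x : EuclideanSpace ℝ (Fin n)) (y : Fin n → ℂ)
    (w : ℂ) : ℂ :=
  ((x j : ℂ) - y j) * (kq x y + w) ^ (-(km n k : ℂ))

/-- The potential of the density `g` on `Ω` for the kernel `kk`. -/
noncomputable def HH {n : ℕ} (Ω : Set (EuclideanSpace ℝ (Fin n)))
    (g : EuclideanSpace ℝ (Fin n) → ℝ) (j : Fin n) (k : ℕ) (y : Fin n → ℂ) (w : ℂ) : ℂ :=
  ∫ x in Ω, (g x : ℂ) * kk j k x y w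

/-- Admissibility of `(y, w)`: uniformly over `x ∈ Ω`, the base of the kernel has real part at least
`c` and the differences of coordinates are at most `K`. For `c > 0` the principal branch of the
power in `kk` is then holomorphic and the kernel is bounded. -/
def Adm {n : ℕ} (Ω : Set (EuclideanSpace ℝ (Fin n))) (c K : ℝ) (y : Fin n → ℂ) (w : ℂ) : Prop :=
  ∀ x ∈ Ω, c ≤ (kq x y + w).re ∧ ∀ i, ‖(x i : ℂ) - y i‖ ≤ K

lemma km_pos (n k : ℕ) : 0 < km n k := by unfold km; positivity

lemma km_succ (n k : ℕ) : km n (k + 1) = km n k + 1 := by unfold km; push_cast; ring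

lemma continuous_kq {n : ℕ} (y : Fin n → ℂ) : Continuous (fun x => kq x y) := by
  unfold kq; fun_prop

lemma measurable_pow {n : ℕ} (s : ℂ) (y : Fin n → ℂ) (w : ℂ) :
    Measurable (fun x : EuclideanSpace ℝ (Fin n) => (kq x y + w) ^ s) :=
  (((continuous_kq y).measurable).add_const w).pow_const s

lemma measurable_X {n : ℕ} (i : Fin n) (y : Fin n → ℂ) :
    Measurable (fun x : EuclideanSpace ℝ (Fin n) => (x i : ℂ) - y i) := by
  have : Continuous (fun x : EuclideanSpace ℝ (Fin n) => (x i : ℂ) - y i) := by fun_prop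
  exact this.measurable

lemma measurable_kk {n : ℕ} (j : Fin n) (k : ℕ) (y : Fin n → ℂ) (w : ℂ) :
    Measurable (fun x => kk j k x y w) :=
  (measurable_X j y).mul (measurable_pow _ y w)

lemma norm_cpow_neg_le {c : ℝ} (hc : 0 < c) {z : ℂ} (hz : c ≤ z.re) {s : ℝ} (hs : 0 < s) :
    ‖z ^ (-(s : ℂ))‖ ≤ c ^ (-s) := by
  have h0 : z ≠ 0 := by rintro rfl; simp at hz; linarith
  have h1 : (-(s : ℂ)) = ((-s : ℝ) : ℂ) := by push_cast; rfl
  rw [h1, Complex.norm_cpow_real]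
  apply Real.rpow_le_rpow_of_nonpos hc (hz.trans (Complex.re_le_norm z)) (by linarith)

lemma norm_kk_le {n : ℕ} {Ω : Set (EuclideanSpace ℝ (Fin n))} {c K : ℝ} (hc : 0 < c)
    {y : Fin n → ℂ} {w : ℂ} (h : Adm Ω c K y w) (j : Fin n) (k : ℕ) {x} (hx : x ∈ Ω) :
    ‖kk j k x y w‖ ≤ K * c ^ (-km n k) := by
  rw [kk, norm_mul]
  have h1 := (h x hx).2 j
  exact mul_le_mul h1 (norm_cpow_neg_le hc (h x hx).1 (km_pos n k)) (norm_nonneg _)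
    ((norm_nonneg _).trans h1)

lemma norm_HH_le {n : ℕ} {Ω : Set (EuclideanSpace ℝ (Fin n))} (hΩ : MeasurableSet Ω)
    {g : EuclideanSpace ℝ (Fin n) → ℝ} (hg : IntegrableOn g Ω) (hg1 : ∫ x in Ω, |g x| ≤ 1)
    {c K : ℝ} (hc : 0 < c) (hK : 0 ≤ K)
    {y : Fin n → ℂ} {w : ℂ} (h : Adm Ω c K y w) (j : Fin n) (k : ℕ) :
    ‖HH Ω g j k y w‖ ≤ K * c ^ (-km n k) := by
  have h0 : 0 ≤ K * c ^ (-km n k) := by positivity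
  calc ‖HH Ω g j k y w‖ ≤ ∫ x in Ω, |g x| * (K * c ^ (-km n k)) := by
        apply norm_integral_le_of_norm_le (hg.abs.mul_const _)
        filter_upwards [ae_restrict_mem hΩ] with x hx
        rw [norm_mul, Complex.norm_real, Real.norm_eq_abs]
        exact mul_le_mul_of_nonneg_left (norm_kk_le hc h j k hx) (abs_nonneg _)
    _ = (∫ x in Ω, |g x|) * (K * c ^ (-km n k)) := integral_mul_const _ _
    _ ≤ 1 * (K * c ^ (-km n k)) := by gcongr
    _ = _ := one_mul _

lemma ne_slit {c : ℝ} (hc : 0 < c) {z : ℂ} (hz : c ≤ z.re) : z ∈ Complex.slitPlane :=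
  Or.inl (hc.trans_le hz)

/-- Potentials are holomorphic along admissible holomorphic curves. -/
lemma HH_differentiableOn {n : ℕ} {Ω : Set (EuclideanSpace ℝ (Fin n))} (hΩ : MeasurableSet Ω)
    {g : EuclideanSpace ℝ (Fin n) → ℝ} (hg : IntegrableOn g Ω) (j : Fin n) (k : ℕ)
    {c K : ℝ} (hc : 0 < c) {D : Set ℂ} (hD : IsOpen D) {Y : ℂ → Fin n → ℂ} {W : ℂ → ℂ}
    (hY : ∀ i, DifferentiableOn ℂ (fun ζ => Y ζ i) D) (hW : DifferentiableOn ℂ W D)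
    (hA : ∀ ζ ∈ D, Adm Ω c K (Y ζ) (W ζ)) :
    DifferentiableOn ℂ (fun ζ => HH Ω g j k (Y ζ) (W ζ)) D := by
  intro ζ₀ hζ₀
  obtain ⟨r, hr, hrD⟩ := Metric.isOpen_iff.1 hD ζ₀ hζ₀
  have hd : ∀ x ∈ Ω, DifferentiableOn ℂ (fun ζ => kk j k x (Y ζ) (W ζ)) D := by
    intro x hx
    unfold kk
    apply DifferentiableOn.mul
    · exact (differentiableOn_const _).sub (hY j)
    · have h1 : DifferentiableOn ℂ (fun ζ => kq x (Y ζ) + W ζ) D := by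
        unfold kq
        apply DifferentiableOn.add _ hW
        apply DifferentiableOn.fun_sum
        intro i _
        exact ((differentiableOn_const _).sub (hY i)).pow 2
      exact h1.cpow (differentiableOn_const _) (fun ζ hζ => ne_slit hc (hA ζ hζ x hx).1)
  have := hasDerivAt_param (ν := volume.restrict Ω) (g := fun x => (g x : ℂ)) hg.ofReal
    (κ := fun x ζ => kk j k x (Y ζ) (W ζ))
    (κ' := fun x => deriv (fun ζ => kk j k x (Y ζ) (W ζ)) ζ₀)
    (ζ₀ := ζ₀) (B := K * c ^ (-km n k)) hr ?_ ?_ ?_ ?_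
  · exact this.differentiableAt.differentiableWithinAt
  · intro ζ _
    exact (measurable_kk j k _ _).aestronglyMeasurable
  · filter_upwards [ae_restrict_mem hΩ] with x hx
    exact (hd x hx).mono hrD
  · filter_upwards [ae_restrict_mem hΩ] with x hx
    exact ((hd x hx).differentiableAt (hD.mem_nhds hζ₀)).hasDerivAt
  · filter_upwards [ae_restrict_mem hΩ] with x hx ζ hζ
    exact norm_kk_le hc (hA ζ (hrD hζ)) j k hx

/-- Differentiation in `w` raises the index of the potential by one, up to an explicit factor. -/
lemma HH_hasDerivAt_w {n : ℕ} {Ω : Set (EuclideanSpace ℝ (Fin n))} (hΩ : MeasurableSet Ω)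
    {g : EuclideanSpace ℝ (Fin n) → ℝ} (hg : IntegrableOn g Ω) (j : Fin n) (k : ℕ)
    {c K : ℝ} (hc : 0 < c) {D : Set ℂ} (hD : IsOpen D) {y : Fin n → ℂ}
    (hA : ∀ w ∈ D, Adm Ω c K y w) {w : ℂ} (hw : w ∈ D) :
    HasDerivAt (fun w => HH Ω g j k y w) (-(km n k : ℂ) * HH Ω g j (k + 1) y w) w := by
  obtain ⟨r, hr, hrD⟩ := Metric.isOpen_iff.1 hD w hw
  have hd : ∀ x ∈ Ω, ∀ w ∈ D, HasDerivAt (fun w => kk j k x y w)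
      (-(km n k : ℂ) * kk j (k + 1) x y w) w := by
    intro x hx w hw
    unfold kk
    have h1 : HasDerivAt (fun w : ℂ => kq x y + w) 1 w := (hasDerivAt_id w).const_add _
    have h2 := (h1.cpow_const (c := -(km n k : ℂ))
      (ne_slit hc (hA w hw x hx).1)).const_mul ((x j : ℂ) - y j)
    refine h2.congr_deriv ?_
    rw [km_succ]
    have : (-((km n k + 1 : ℝ) : ℂ)) = -(km n k : ℂ) - 1 := by push_cast; ring
    rw [this]; ring
  have := hasDerivAt_param (ν := volume.restrict Ω) (g := fun x => (g x : ℂ)) hg.ofReal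
    (κ := fun x ζ => kk j k x y ζ)
    (κ' := fun x => -(km n k : ℂ) * kk j (k + 1) x y w)
    (ζ₀ := w) (B := K * c ^ (-km n k)) hr ?_ ?_ ?_ ?_
  · refine this.congr_deriv ?_
    unfold HH
    rw [← integral_const_mul]
    congr 1; ext x; ring
  · intro ζ _
    exact (measurable_kk j k _ _).aestronglyMeasurable
  · filter_upwards [ae_restrict_mem hΩ] with x hx ζ hζ
    exact (hd x hx ζ (hrD hζ)).differentiableAt.differentiableWithinAt
  · filter_upwards [ae_restrict_mem hΩ] with x hx
    exact hd x hx w hw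
  · filter_upwards [ae_restrict_mem hΩ] with x hx ζ hζ
    exact norm_kk_le hc (hA ζ (hrD hζ)) j k hx

/-- The Pochhammer-type product `∏_{i<k} ((n+1)/2 + i)`. -/
noncomputable def kp (n k : ℕ) : ℝ := ∏ i ∈ Finset.range k, km n i

lemma factorial_le_kp (n k : ℕ) (hn : 1 ≤ n) : (k.factorial : ℝ) ≤ kp n k := by
  unfold kp
  rw [← Finset.prod_range_add_one_eq_factorial]
  push_cast
  apply Finset.prod_le_prod (fun i _ => by positivity)
  intro i _
  unfold km
  have : (1:ℝ) ≤ n := by exact_mod_cast hn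
  linarith

lemma kp_pos (n k : ℕ) : 0 < kp n k := Finset.prod_pos (fun i _ => km_pos n i)

lemma kp_le_factorial (n k : ℕ) (hn : 1 ≤ n) : kp n k ≤ (n + 1) ^ k * k.factorial := by
  unfold kp
  rw [← Finset.prod_range_add_one_eq_factorial]
  push_cast
  rw [← Finset.card_range k, ← Finset.prod_const, Finset.card_range, ← Finset.prod_mul_distrib]
  apply Finset.prod_le_prod (fun i _ => (km_pos n i).le)
  intro i _
  unfold km
  have : (1:ℝ) ≤ n := by exact_mod_cast hn
  have : (0:ℝ) ≤ i := by positivity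
  nlinarith

lemma HH_iteratedDeriv_w {n : ℕ} {Ω : Set (EuclideanSpace ℝ (Fin n))} (hΩ : MeasurableSet Ω)
    {g : EuclideanSpace ℝ (Fin n) → ℝ} (hg : IntegrableOn g Ω) (j : Fin n) (k : ℕ)
    {c K : ℝ} (hc : 0 < c) {D : Set ℂ} (hD : IsOpen D) {y : Fin n → ℂ}
    (hA : ∀ w ∈ D, Adm Ω c K y w) : ∀ w ∈ D,
    iteratedDeriv k (fun w => HH Ω g j 0 y w) w = (-1) ^ k * kp n k * HH Ω g j k y w := by
  induction k with
  | zero => intro w _; simp [kp]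
  | succ k ih =>
    intro w hw
    rw [iteratedDeriv_succ]
    have h1 : iteratedDeriv k (fun w => HH Ω g j 0 y w) =ᶠ[nhds w]
        fun w => (-1) ^ k * kp n k * HH Ω g j k y w := by
      filter_upwards [hD.mem_nhds hw] with v hv using ih v hv
    rw [h1.deriv_eq, ((HH_hasDerivAt_w hΩ hg j k hc hD hA hw).const_mul _).deriv]
    have : kp n (k + 1) = kp n k * km n k := Finset.prod_range_succ _ _
    rw [this]
    push_cast; ring

lemma hasDerivAt_upd {n : ℕ} (y : Fin n → ℂ) (i l : Fin n) (ζ : ℂ) :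
    HasDerivAt (fun ζ => Function.update y i ζ l) (if i = l then 1 else 0) ζ := by
  by_cases h : i = l
  · subst h; simpa using hasDerivAt_id' ζ
  · simp [h, Function.update_of_ne (Ne.symm h)]
    exact hasDerivAt_const ζ (y l)

lemma hasDerivAt_kq {n : ℕ} (x : EuclideanSpace ℝ (Fin n)) (y : Fin n → ℂ) (i : Fin n) (w ζ : ℂ) :
    HasDerivAt (fun ζ => kq x (Function.update y i ζ) + w) (-2 * ((x i : ℂ) - ζ)) ζ := by
  have h1 : HasDerivAt (fun ζ => kq x (Function.update y i ζ))
      (∑ l, 2 * ((x l : ℂ) - Function.update y i ζ l) * (-(if i = l then 1 else 0))) ζ := by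
    unfold kq
    apply HasDerivAt.fun_sum
    intro l _
    have := ((hasDerivAt_upd y i l ζ).const_sub (x l : ℂ)).fun_pow 2
    simpa using this
  refine (h1.add_const w).congr_deriv ?_
  simp

lemma hasDerivAt_X {n : ℕ} (x : EuclideanSpace ℝ (Fin n)) (y : Fin n → ℂ) (i j : Fin n) (ζ : ℂ) :
    HasDerivAt (fun ζ => (x j : ℂ) - Function.update y i ζ j) (-(if i = j then 1 else 0)) ζ := by
  simpa using (hasDerivAt_upd y i j ζ).const_sub (x j : ℂ)

lemma hasDerivAt_kqpow {n : ℕ} (k : ℕ) (x : EuclideanSpace ℝ (Fin n)) (i : Fin n)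
    (y : Fin n → ℂ) (w ζ : ℂ) (h : kq x (Function.update y i ζ) + w ∈ Complex.slitPlane) :
    HasDerivAt (fun ζ => (kq x (Function.update y i ζ) + w) ^ (-(km n k : ℂ)))
      (2 * km n k * ((x i : ℂ) - ζ) *
        (kq x (Function.update y i ζ) + w) ^ (-(km n (k + 1) : ℂ))) ζ := by
  refine ((hasDerivAt_kq x y i w ζ).cpow_const (c := -(km n k : ℂ)) h).congr_deriv ?_
  have : (-(km n (k + 1) : ℂ)) = -(km n k : ℂ) - 1 := by rw [km_succ]; push_cast; ring
  rw [this]; ring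

/-- First derivative of the kernel along the `i`-th coordinate of `y`. -/
noncomputable def kk1 {n : ℕ} (j : Fin n) (k : ℕ) (x : EuclideanSpace ℝ (Fin n)) (i : Fin n)
    (y : Fin n → ℂ) (w : ℂ) : ℂ :=
  -(if i = j then 1 else 0) * (kq x y + w) ^ (-(km n k : ℂ)) +
    ((x j : ℂ) - y j) * (2 * km n k * ((x i : ℂ) - y i) * (kq x y + w) ^ (-(km n (k + 1) : ℂ)))

/-- Second derivative of the kernel along the `i`-th coordinate of `y`. -/
noncomputable def kk2 {n : ℕ} (j : Fin n) (k : ℕ) (x : EuclideanSpace ℝ (Fin n)) (i : Fin n)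
    (y : Fin n → ℂ) (w : ℂ) : ℂ :=
  -(if i = j then 1 else 0) * (4 * km n k * ((x i : ℂ) - y i) *
    (kq x y + w) ^ (-(km n (k + 1) : ℂ))) +
    ((x j : ℂ) - y j) * (-2 * km n k * (kq x y + w) ^ (-(km n (k + 1) : ℂ)) +
      4 * km n k * km n (k + 1) * ((x i : ℂ) - y i) ^ 2 *
        (kq x y + w) ^ (-(km n (k + 2) : ℂ)))

lemma kk_hasDerivAt_y {n : ℕ} (j : Fin n) (k : ℕ) (x : EuclideanSpace ℝ (Fin n)) (i : Fin n)
    (y : Fin n → ℂ) (w ζ : ℂ) (h : kq x (Function.update y i ζ) + w ∈ Complex.slitPlane) :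
    HasDerivAt (fun ζ => kk j k x (Function.update y i ζ) w)
      (kk1 j k x i (Function.update y i ζ) w) ζ := by
  refine ((hasDerivAt_X x y i j ζ).mul (hasDerivAt_kqpow k x i y w ζ h)).congr_deriv ?_
  rw [kk1, Function.update_self]

lemma kk1_hasDerivAt_y {n : ℕ} (j : Fin n) (k : ℕ) (x : EuclideanSpace ℝ (Fin n)) (i : Fin n)
    (y : Fin n → ℂ) (w ζ : ℂ) (h : kq x (Function.update y i ζ) + w ∈ Complex.slitPlane) :
    HasDerivAt (fun ζ => kk1 j k x i (Function.update y i ζ) w)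
      (kk2 j k x i (Function.update y i ζ) w) ζ := by
  unfold kk1
  refine (((hasDerivAt_kqpow k x i y w ζ h).const_mul _).add ((hasDerivAt_X x y i j ζ).fun_mul
    ((((hasDerivAt_X x y i i ζ)).const_mul (2 * (km n k : ℂ))).fun_mul
      (hasDerivAt_kqpow (k + 1) x i y w ζ h)))).congr_deriv ?_
  rw [kk2]
  simp only [Function.update_self, if_true]
  ring

/-- The Laplacian in `y` raises the index `k` of the kernel at `w = 0`. -/
lemma sum_kk2 {n : ℕ} (j : Fin n) (k : ℕ) (x : EuclideanSpace ℝ (Fin n))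
    (y : Fin n → ℂ) (h : kq x y ≠ 0) :
    ∑ i, kk2 j k x i y 0 = ((n + 1 + 2 * k) * (1 + 2 * k) : ℝ) * kk j (k + 1) x y 0 := by
  have e1 : (kq x y + 0) ^ (-(km n (k + 1) : ℂ)) =
      kq x y * (kq x y + 0) ^ (-(km n (k + 2) : ℂ)) := by
    have : (-(km n (k + 1) : ℂ)) = -(km n (k + 2) : ℂ) + 1 := by
      rw [km_succ n (k + 1)]; push_cast; ring
    rw [this, add_zero, Complex.cpow_add _ _ h, Complex.cpow_one, mul_comm]
  have e2 : ∑ i, ((x i : ℂ) - y i) ^ 2 = kq x y := rfl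
  rw [kk, e1]
  simp only [kk2, e1]
  generalize (kq x y + 0) ^ (-(km n (k + 2) : ℂ)) = P
  have e3 : ∀ i, -(if i = j then 1 else 0) * (4 * (km n k : ℂ) * ((x i : ℂ) - y i) *
      (kq x y * P)) + ((x j : ℂ) - y j) * (-2 * km n k * (kq x y * P) +
      4 * km n k * km n (k + 1) * ((x i : ℂ) - y i) ^ 2 * P) =
      (if i = j then -(4 * (km n k : ℂ) * ((x i : ℂ) - y i) * (kq x y * P)) else 0) +
      ((x j : ℂ) - y j) * (-2 * km n k * (kq x y * P)) +
      (((x j : ℂ) - y j) * (4 * km n k * km n (k + 1) * P)) * ((x i : ℂ) - y i) ^ 2 := by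
    intro i
    split_ifs <;> ring
  simp only [e3]
  rw [Finset.sum_add_distrib, Finset.sum_add_distrib,
    ← Finset.mul_sum (f := fun i => ((x i : ℂ) - y i) ^ 2), e2]
  simp only [Finset.sum_ite_eq', Finset.mem_univ, if_true, Finset.sum_const, Finset.card_univ,
    Fintype.card_fin, nsmul_eq_mul]
  rw [km_succ]
  unfold km
  push_cast
  ring

lemma norm_kk1_le {n : ℕ} {Ω : Set (EuclideanSpace ℝ (Fin n))} {c K : ℝ} (hc : 0 < c)
    {y : Fin n → ℂ} {w : ℂ} (h : Adm Ω c K y w) (j : Fin n) (k : ℕ) (i : Fin n) {x} (hx : x ∈ Ω) :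
    ‖kk1 j k x i y w‖ ≤ c ^ (-km n k) + K * (2 * km n k * K * c ^ (-km n (k + 1))) := by
  rw [kk1]
  refine (norm_add_le _ _).trans (add_le_add ?_ ?_)
  · rw [norm_mul, norm_neg]
    refine le_trans ?_ (norm_cpow_neg_le hc (h x hx).1 (km_pos n k))
    apply mul_le_of_le_one_left (norm_nonneg _)
    split_ifs <;> simp
  · have h1 := (h x hx).2 j
    have h2 := (h x hx).2 i
    have h3 := norm_cpow_neg_le hc (h x hx).1 (km_pos n (k + 1))
    have h4 := (km_pos n k).le
    rw [norm_mul, norm_mul, norm_mul, norm_mul, Complex.norm_ofNat, Complex.norm_real,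
      Real.norm_of_nonneg h4]
    have hK : 0 ≤ K := (norm_nonneg _).trans h1
    gcongr

lemma measurable_kk1 {n : ℕ} (j : Fin n) (k : ℕ) (i : Fin n) (y : Fin n → ℂ) (w : ℂ) :
    Measurable (fun x => kk1 j k x i y w) :=
  ((measurable_pow _ y w).const_mul _).add
    ((measurable_X j y).mul (((measurable_X i y).const_mul _).mul (measurable_pow _ y w)))

lemma HH_deriv2_y {n : ℕ} {Ω : Set (EuclideanSpace ℝ (Fin n))} (hΩ : MeasurableSet Ω)
    {g : EuclideanSpace ℝ (Fin n) → ℝ} (hg : IntegrableOn g Ω) (j : Fin n) (k : ℕ) (i : Fin n)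
    {c K : ℝ} (hc : 0 < c) {D : Set ℂ} (hD : IsOpen D) {y : Fin n → ℂ} {w : ℂ}
    (hA : ∀ ζ ∈ D, Adm Ω c K (Function.update y i ζ) w) {ζ : ℂ} (hζ : ζ ∈ D) :
    iteratedDeriv 2 (fun ζ => HH Ω g j k (Function.update y i ζ) w) ζ =
      ∫ x in Ω, (g x : ℂ) * kk2 j k x i (Function.update y i ζ) w := by
  have hs : ∀ ζ ∈ D, ∀ x ∈ Ω, kq x (Function.update y i ζ) + w ∈ Complex.slitPlane :=
    fun ζ hζ x hx => ne_slit hc (hA ζ hζ x hx).1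
  have h1 : ∀ ζ ∈ D, HasDerivAt (fun ζ => HH Ω g j k (Function.update y i ζ) w)
      (∫ x in Ω, (g x : ℂ) * kk1 j k x i (Function.update y i ζ) w) ζ := by
    intro ζ hζ
    obtain ⟨r, hr, hrD⟩ := Metric.isOpen_iff.1 hD ζ hζ
    refine hasDerivAt_param (ν := volume.restrict Ω) (g := fun x => (g x : ℂ)) hg.ofReal
      (κ := fun x ζ => kk j k x (Function.update y i ζ) w) (B := K * c ^ (-km n k)) hr ?_ ?_ ?_ ?_
    · intro ζ _
      exact (measurable_kk j k _ _).aestronglyMeasurable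
    · filter_upwards [ae_restrict_mem hΩ] with x hx ζ hζ
      exact (kk_hasDerivAt_y j k x i y w ζ
        (hs ζ (hrD hζ) x hx)).differentiableAt.differentiableWithinAt
    · filter_upwards [ae_restrict_mem hΩ] with x hx
      exact kk_hasDerivAt_y j k x i y w ζ (hs ζ hζ x hx)
    · filter_upwards [ae_restrict_mem hΩ] with x hx ζ hζ
      exact norm_kk_le hc (hA ζ (hrD hζ)) j k hx
  have h2 : HasDerivAt (fun ζ => ∫ x in Ω, (g x : ℂ) * kk1 j k x i (Function.update y i ζ) w)
      (∫ x in Ω, (g x : ℂ) * kk2 j k x i (Function.update y i ζ) w) ζ := by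
    obtain ⟨r, hr, hrD⟩ := Metric.isOpen_iff.1 hD ζ hζ
    refine hasDerivAt_param (ν := volume.restrict Ω) (g := fun x => (g x : ℂ)) hg.ofReal
      (κ := fun x ζ => kk1 j k x i (Function.update y i ζ) w)
      (B := c ^ (-km n k) + K * (2 * km n k * K * c ^ (-km n (k + 1)))) hr ?_ ?_ ?_ ?_
    · intro ζ _
      exact (measurable_kk1 j k i _ _).aestronglyMeasurable
    · filter_upwards [ae_restrict_mem hΩ] with x hx ζ hζ
      exact (kk1_hasDerivAt_y j k x i y w ζ
        (hs ζ (hrD hζ) x hx)).differentiableAt.differentiableWithinAt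
    · filter_upwards [ae_restrict_mem hΩ] with x hx
      exact kk1_hasDerivAt_y j k x i y w ζ (hs ζ hζ x hx)
    · filter_upwards [ae_restrict_mem hΩ] with x hx ζ hζ
      exact norm_kk1_le hc (hA ζ (hrD hζ)) j k i hx
  rw [iteratedDeriv_succ, iteratedDeriv_one]
  have h3 : deriv (fun ζ => HH Ω g j k (Function.update y i ζ) w) =ᶠ[nhds ζ]
      fun ζ => ∫ x in Ω, (g x : ℂ) * kk1 j k x i (Function.update y i ζ) w := by
    filter_upwards [hD.mem_nhds hζ] with v hv using (h1 v hv).deriv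
  rw [h3.deriv_eq, h2.deriv]

lemma norm_kk2_le {n : ℕ} {Ω : Set (EuclideanSpace ℝ (Fin n))} {c K : ℝ} (hc : 0 < c)
    {y : Fin n → ℂ} {w : ℂ} (h : Adm Ω c K y w) (j : Fin n) (k : ℕ) (i : Fin n) {x} (hx : x ∈ Ω) :
    ‖kk2 j k x i y w‖ ≤ 4 * km n k * K * c ^ (-km n (k + 1)) +
      K * (2 * km n k * c ^ (-km n (k + 1)) +
        4 * km n k * km n (k + 1) * K ^ 2 * c ^ (-km n (k + 2))) := by
  have h1 := (h x hx).2 j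
  have h2 := (h x hx).2 i
  have h3 := norm_cpow_neg_le hc (h x hx).1 (km_pos n (k + 1))
  have h3' := norm_cpow_neg_le hc (h x hx).1 (km_pos n (k + 2))
  have h4 := (km_pos n k).le
  have h4' := (km_pos n (k + 1)).le
  have hK : 0 ≤ K := (norm_nonneg _).trans h1
  rw [kk2]
  refine (norm_add_le _ _).trans (add_le_add ?_ ?_)
  · rw [norm_mul, norm_neg]
    have : ‖(if i = j then 1 else 0 : ℂ)‖ ≤ 1 := by split_ifs <;> simp
    refine (mul_le_of_le_one_left (norm_nonneg _) this).trans ?_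
    rw [norm_mul, norm_mul, norm_mul, Complex.norm_ofNat, Complex.norm_real,
      Real.norm_of_nonneg h4]
    gcongr
  · rw [norm_mul]
    refine mul_le_mul h1 ((norm_add_le _ _).trans (add_le_add ?_ ?_)) (norm_nonneg _) hK
    · rw [norm_mul, norm_mul, norm_neg, Complex.norm_ofNat, Complex.norm_real,
        Real.norm_of_nonneg h4]
      gcongr
    · rw [norm_mul, norm_mul, norm_mul, norm_mul, norm_pow, Complex.norm_ofNat, Complex.norm_real,
        Complex.norm_real, Real.norm_of_nonneg h4, Real.norm_of_nonneg h4']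
      gcongr

lemma measurable_kk2 {n : ℕ} (j : Fin n) (k : ℕ) (i : Fin n) (y : Fin n → ℂ) (w : ℂ) :
    Measurable (fun x => kk2 j k x i y w) :=
  (((((measurable_X i y).const_mul _).mul (measurable_pow _ y w))).const_mul _).add
    ((measurable_X j y).mul (((measurable_pow _ y w).const_mul _).add
      ((((measurable_X i y).pow_const 2).const_mul _).mul (measurable_pow _ y w))))

/-- The Laplacian in `y` also raises the index at `w = 0`. Since the factor on the left is nonzero, all
`w`-derivatives at `w = 0` are controlled by iterated Laplacians of the Riesz potential itself. -/
lemma HH_laplacian {n : ℕ} {Ω : Set (EuclideanSpace ℝ (Fin n))} (hΩ : MeasurableSet Ω)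
    {g : EuclideanSpace ℝ (Fin n) → ℝ} (hg : IntegrableOn g Ω) (j : Fin n) (k : ℕ)
    {c K r : ℝ} (hc : 0 < c) (hr : 0 < r) {y : Fin n → ℂ}
    (hA : ∀ i, ∀ ζ ∈ Metric.ball (y i) r, Adm Ω c K (Function.update y i ζ) 0) :
    ((n + 1 + 2 * k) * (1 + 2 * k) : ℝ) * HH Ω g j (k + 1) y 0 =
      ∑ i, iteratedDeriv 2 (fun ζ => HH Ω g j k (Function.update y i ζ) 0) (y i) := by
  have h1 : ∀ i, iteratedDeriv 2 (fun ζ => HH Ω g j k (Function.update y i ζ) 0) (y i) =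
      ∫ x in Ω, (g x : ℂ) * kk2 j k x i y 0 := by
    intro i
    rw [HH_deriv2_y hΩ hg j k i hc Metric.isOpen_ball (hA i) (Metric.mem_ball_self hr),
      Function.update_eq_self]
  have hA0 : Adm Ω c K y 0 := by
    have := hA j (y j) (Metric.mem_ball_self hr)
    rwa [Function.update_eq_self] at this
  simp_rw [h1]
  rw [← integral_finsetSum]
  · unfold HH
    rw [← integral_const_mul]
    apply setIntegral_congr_fun hΩ
    intro x hx
    simp only
    have h0 : kq x y ≠ 0 := by
      have := Complex.slitPlane_ne_zero (ne_slit hc (hA0 x hx).1)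
      simpa using this
    rw [← Finset.mul_sum, sum_kk2 j k x y h0]
    ring
  · intro i _
    refine (hg.ofReal (𝕜 := ℂ)).mul_bdd (c :=
        4 * km n k * K * c ^ (-km n (k + 1)) +
        K * (2 * km n k * c ^ (-km n (k + 1)) +
          4 * km n k * km n (k + 1) * K ^ 2 * c ^ (-km n (k + 2))))
        (measurable_kk2 j k i y 0).aestronglyMeasurable ?_
    · filter_upwards [ae_restrict_mem hΩ] with x hx
      exact norm_kk2_le hc hA0 j k i hx

/-! ### From `L²` smallness to pointwise smallness -/

/-- A real point as a point of `ℂⁿ`. -/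
noncomputable def rc {n : ℕ} (y : EuclideanSpace ℝ (Fin n)) : Fin n → ℂ := fun i => (y i : ℂ)

lemma abs_coord_le {n : ℕ} (x : EuclideanSpace ℝ (Fin n)) (i : Fin n) : |x i| ≤ ‖x‖ := by
  simpa using PiLp.norm_apply_le x i

lemma norm_rc {n : ℕ} (x y : EuclideanSpace ℝ (Fin n)) (i : Fin n) :
    ‖(x i : ℂ) - (y i : ℂ)‖ ≤ ‖x - y‖ := by
  rw [← Complex.ofReal_sub, Complex.norm_real, Real.norm_eq_abs]
  exact abs_coord_le (x - y) i

lemma kq_rc {n : ℕ} (x y : EuclideanSpace ℝ (Fin n)) : kq x (rc y) = ((‖x - y‖ ^ 2 : ℝ) : ℂ) := by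
  rw [EuclideanSpace.real_norm_sq_eq, kq]
  push_cast
  simp [rc]

/-- The geometric configuration: `Ω` lies in an annulus around `y0`, and `ρ` is small compared
with the inner radius. -/
structure Geo {n : ℕ} (Ω : Set (EuclideanSpace ℝ (Fin n))) (y0 : EuclideanSpace ℝ (Fin n))
    (d D ρ : ℝ) : Prop where
  d_pos : 0 < d
  D_nonneg : 0 ≤ D
  bounds : ∀ x ∈ Ω, d ≤ ‖x - y0‖ ∧ ‖x - y0‖ ≤ D
  ρ_pos : 0 < ρ
  ρ_le : ρ ≤ 1
  small : n * (2 * D + 1) * ρ ≤ d ^ 2 / 2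

/-- Arguments in the polydisc of radius `ρ` around `y0`, with `w` small, are admissible. -/
lemma Geo.adm {n : ℕ} {Ω : Set (EuclideanSpace ℝ (Fin n))} {y0 : EuclideanSpace ℝ (Fin n)}
    {d D ρ : ℝ} (G : Geo Ω y0 d D ρ) {y : Fin n → ℂ} {w : ℂ}
    (hy : ∀ i, ‖y i - y0 i‖ ≤ ρ) (hw : ‖w‖ ≤ d ^ 2 / 4) : Adm Ω (d ^ 2 / 4) (D + 1) y w := by
  intro x hx
  obtain ⟨h1, h2⟩ := G.bounds x hx
  have hX : ∀ i, ‖(x i : ℂ) - (y0 i : ℂ)‖ ≤ D := fun i => (norm_rc x y0 i).trans h2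
  have hρ := G.ρ_pos
  have hρ1 := G.ρ_le
  have hD := G.D_nonneg
  constructor
  · have h3 : ‖kq x y - kq x (rc y0)‖ ≤ n * ((2 * D + 1) * ρ) := by
      rw [kq, kq, ← Finset.sum_sub_distrib]
      refine (norm_sum_le _ _).trans ?_
      have : ∀ i ∈ Finset.univ, ‖((x i : ℂ) - y i) ^ 2 - ((x i : ℂ) - rc y0 i) ^ 2‖ ≤
          (2 * D + 1) * ρ := by
        intro i _
        have e : ((x i : ℂ) - y i) ^ 2 - ((x i : ℂ) - rc y0 i) ^ 2 =
            (-(y i - y0 i)) * (2 * ((x i : ℂ) - (y0 i : ℂ)) - (y i - y0 i)) := by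
          simp only [rc]; ring
        rw [e, norm_mul, norm_neg, mul_comm]
        refine mul_le_mul ?_ (hy i) (norm_nonneg _) (by positivity)
        refine (norm_sub_le _ _).trans ?_
        rw [norm_mul, Complex.norm_ofNat]
        have := hX i
        have := hy i
        linarith
      refine (Finset.sum_le_sum this).trans ?_
      simp
    have h4 : (kq x (rc y0)).re = ‖x - y0‖ ^ 2 := by rw [kq_rc, Complex.ofReal_re]
    have h5 : |(kq x y - kq x (rc y0)).re| ≤ d ^ 2 / 2 :=
      ((Complex.abs_re_le_norm _).trans h3).trans (by rw [← mul_assoc]; exact G.small)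
    have h6 := (Complex.abs_re_le_norm w).trans hw
    rw [Complex.sub_re, h4] at h5
    rw [Complex.add_re]
    have h7 : d ^ 2 ≤ ‖x - y0‖ ^ 2 := pow_le_pow_left₀ G.d_pos.le h1 2
    have := (abs_le.1 h5).1
    have := (abs_le.1 h6).1
    linarith
  · intro i
    have e : (x i : ℂ) - y i = ((x i : ℂ) - (y0 i : ℂ)) - (y i - y0 i) := by ring
    rw [e]
    refine (norm_sub_le _ _).trans ?_
    have := hX i
    have := hy i
    linarith

/-- Lipschitz bound for the potential near `y0`, from the Schwarz lemma on a complex line. -/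
lemma HH_lipschitz {n : ℕ} {Ω : Set (EuclideanSpace ℝ (Fin n))} (hΩ : MeasurableSet Ω)
    {g : EuclideanSpace ℝ (Fin n) → ℝ} (hg : IntegrableOn g Ω) (hg1 : ∫ x in Ω, |g x| ≤ 1)
    (j : Fin n) {y0 : EuclideanSpace ℝ (Fin n)} {d D ρ M : ℝ} (G : Geo Ω y0 d D ρ)
    (hM : (D + 1) * (d ^ 2 / 4) ^ (-km n 0) ≤ M)
    {y1 y2 : EuclideanSpace ℝ (Fin n)} (h1 : ‖y1 - y0‖ ≤ ρ / 2) (h2 : ‖y2 - y1‖ < ρ / 2) :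
    ‖HH Ω g j 0 (rc y2) 0 - HH Ω g j 0 (rc y1) 0‖ ≤ (2 * M + 1) / (ρ / 2) * ‖y2 - y1‖ := by
  have hρ := G.ρ_pos
  have hd := G.d_pos
  by_cases h0 : y2 = y1
  · subst h0; simp
  have hp : 0 < ‖y2 - y1‖ := norm_pos_iff.2 (sub_ne_zero.2 h0)
  set R := ρ / 2 / ‖y2 - y1‖ with hR
  have hR1 : 1 < R := by rw [hR, lt_div_iff₀ hp]; linarith
  set Y : ℂ → Fin n → ℂ := fun ζ i => (y1 i : ℂ) + ζ * ((y2 i : ℂ) - (y1 i : ℂ)) with hY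
  have hA : ∀ ζ ∈ Metric.ball (0 : ℂ) R, Adm Ω (d ^ 2 / 4) (D + 1) (Y ζ) 0 := by
    intro ζ hζ
    rw [mem_ball_zero_iff] at hζ
    apply G.adm
    · intro i
      have e : Y ζ i - y0 i = ((y1 i : ℂ) - (y0 i : ℂ)) + ζ * ((y2 i : ℂ) - (y1 i : ℂ)) := by
        simp only [hY]; ring
      rw [e]
      refine (norm_add_le _ _).trans ?_
      have h3 := (norm_rc y1 y0 i).trans h1
      have h4 : ‖ζ * ((y2 i : ℂ) - (y1 i : ℂ))‖ ≤ R * ‖y2 - y1‖ := by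
        rw [norm_mul]
        exact mul_le_mul hζ.le (norm_rc _ _ _) (norm_nonneg _) (by positivity)
      have h5 : R * ‖y2 - y1‖ = ρ / 2 := by rw [hR]; field_simp
      linarith
    · simp; positivity
  have hdiff := HH_differentiableOn hΩ hg j 0 (by positivity : (0:ℝ) < d ^ 2 / 4)
    (Metric.isOpen_ball (x := (0:ℂ)) (ε := R)) (Y := Y) (W := fun _ => 0)
    (fun i => by simp only [hY]; fun_prop) (differentiableOn_const _) hA
  have hb : ∀ ζ ∈ Metric.ball (0 : ℂ) R, ‖HH Ω g j 0 (Y ζ) 0‖ ≤ M := fun ζ hζ =>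
    (norm_HH_le hΩ hg hg1 (by positivity) (by linarith [G.D_nonneg]) (hA ζ hζ) j 0).trans hM
  have h00 : (0:ℂ) ∈ Metric.ball (0:ℂ) R := Metric.mem_ball_self (by positivity)
  have key := Complex.dist_le_div_mul_dist_of_mapsTo_ball (R₂ := 2 * M + 1) hdiff
    (z := 1) ?_ (by simpa using hR1)
  · have e1 : Y 1 = rc y2 := by ext i; simp [hY, rc]
    have e0 : Y 0 = rc y1 := by ext i; simp [hY, rc]
    rw [dist_eq_norm, e1, e0] at key
    refine key.trans (le_of_eq ?_)
    simp [hR]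
    field_simp
  · intro ζ hζ
    rw [Metric.mem_closedBall, dist_eq_norm]
    refine (norm_sub_le _ _).trans ?_
    linarith [hb ζ hζ, hb 0 h00]

/-- An `L²` bound on `Ω₁` gives a pointwise bound near `y0`. -/
lemma HH_sup_small {n : ℕ} (Ω₁ : Set (EuclideanSpace ℝ (Fin n)))
    {Ω : Set (EuclideanSpace ℝ (Fin n))} (hΩ : MeasurableSet Ω)
    (j : Fin n) {y0 : EuclideanSpace ℝ (Fin n)} {d D ρ M : ℝ} (G : Geo Ω y0 d D ρ)
    (hM : (D + 1) * (d ^ 2 / 4) ^ (-km n 0) ≤ M) (hsub : Metric.ball y0 ρ ⊆ Ω₁) :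
    ∃ C : ℝ, 0 < C ∧ ∀ g : EuclideanSpace ℝ (Fin n) → ℝ, IntegrableOn g Ω →
      ∫ x in Ω, |g x| ≤ 1 → ∀ η : ℝ, 0 < η →
      IntegrableOn (fun y => ‖HH Ω g j 0 (rc y) 0‖ ^ 2) Ω₁ →
      ∫ y in Ω₁, ‖HH Ω g j 0 (rc y) 0‖ ^ 2 ≤ η ^ 2 →
      ∀ y : EuclideanSpace ℝ (Fin n), ‖y - y0‖ ≤ ρ / 4 →
        ‖HH Ω g j 0 (rc y) 0‖ ≤ C * η ^ (2 / ((n : ℝ) + 2)) := by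
  have hρ := G.ρ_pos
  have hd := G.d_pos
  have : Nonempty (Fin n) := ⟨j⟩
  have hM0 : 0 < M := lt_of_lt_of_le (by have := G.D_nonneg; positivity) hM
  set L := (2 * M + 1) / (ρ / 2) with hL
  have hL0 : 0 < L := by positivity
  set V := (volume (Metric.ball (0 : EuclideanSpace ℝ (Fin n)) 1)).toReal with hV
  have hV0 : 0 < V := ENNReal.toReal_pos (Metric.measure_ball_pos _ _ one_pos).ne'
    measure_ball_lt_top.ne
  set C := 4 * (2 * L) ^ n / V with hC
  have hC0 : 0 < C := by positivity
  refine ⟨C ^ (1 / ((n : ℝ) + 2)), by positivity, ?_⟩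
  intro g hg hg1 η hη hIg hle y hy
  set α := ‖HH Ω g j 0 (rc y) 0‖ with hα
  have hα0 : 0 ≤ α := norm_nonneg _
  have hαM : α ≤ M := by
    refine (norm_HH_le hΩ hg hg1 (by positivity) (by linarith [G.D_nonneg])
      (G.adm (fun i => ?_) ?_) j 0).trans hM
    · exact (norm_rc y y0 i).trans (by linarith)
    · simp; positivity
  -- by the Lipschitz bound the potential has modulus at least `α / 2` on the ball of radius `s`
  set s := α / (2 * L) with hs
  have hs0 : 0 ≤ s := by positivity
  have hsρ : s < ρ / 4 := by
    rw [hs, div_lt_iff₀ (by positivity), hL]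
    field_simp
    nlinarith
  have hball : Metric.ball y s ⊆ Ω₁ := by
    refine subset_trans ?_ hsub
    apply Metric.ball_subset_ball'
    rw [dist_eq_norm]; linarith
  have hlow : ∀ y' ∈ Metric.ball y s, (α / 2) ^ 2 ≤ ‖HH Ω g j 0 (rc y') 0‖ ^ 2 := by
    intro y' hy'
    rw [Metric.mem_ball, dist_eq_norm] at hy'
    have := HH_lipschitz hΩ hg hg1 j G hM (y1 := y) (y2 := y') (by linarith) (by linarith)
    rw [← hL] at this
    have h2 : L * ‖y' - y‖ ≤ α / 2 := by
      calc L * ‖y' - y‖ ≤ L * s := by gcongr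
        _ = α / 2 := by rw [hs]; field_simp
    have h3 : α - ‖HH Ω g j 0 (rc y') 0‖ ≤ α / 2 := by
      have := norm_sub_norm_le (HH Ω g j 0 (rc y) 0) (HH Ω g j 0 (rc y') 0)
      rw [norm_sub_rev] at this
      change α - _ ≤ _ at this
      linarith
    apply pow_le_pow_left₀ (by positivity)
    linarith
  have h1 : (α / 2) ^ 2 * (s ^ n * V) ≤ η ^ 2 := by
    have hvol : (volume (Metric.ball y s)).toReal = s ^ n * V := by
      rw [Measure.addHaar_ball _ _ hs0, ENNReal.toReal_mul,
        ENNReal.toReal_ofReal (by positivity), finrank_euclideanSpace, Fintype.card_fin]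
    calc (α / 2) ^ 2 * (s ^ n * V) = ∫ y' in Metric.ball y s, (α / 2) ^ 2 := by
          rw [setIntegral_const, smul_eq_mul, mul_comm, Measure.real, hvol]
      _ ≤ ∫ y' in Metric.ball y s, ‖HH Ω g j 0 (rc y') 0‖ ^ 2 := by
          apply setIntegral_mono_on _ (hIg.mono_set hball) measurableSet_ball hlow
          exact integrableOn_const (measure_ball_lt_top.ne)
      _ ≤ ∫ y' in Ω₁, ‖HH Ω g j 0 (rc y') 0‖ ^ 2 := by
          apply setIntegral_mono_set hIg
          · exact Filter.Eventually.of_forall (fun _ => by positivity)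
          · exact hball.eventuallyLE
      _ ≤ η ^ 2 := hle
  have h2 : α ^ (n + 2) ≤ C * η ^ 2 := by
    have e : α ^ (n + 2) = C * ((α / 2) ^ 2 * (s ^ n * V)) := by
      rw [hC, hs, div_pow α (2 * L)]
      field_simp
      ring
    rw [e]; gcongr
  have hn2 : (0:ℝ) < (n : ℝ) + 2 := by positivity
  have h3 : α = (α ^ (n + 2)) ^ (1 / ((n : ℝ) + 2)) := by
    rw [← Real.rpow_natCast, ← Real.rpow_mul hα0]
    push_cast
    rw [mul_one_div_cancel hn2.ne', Real.rpow_one]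
  rw [h3]
  refine (Real.rpow_le_rpow (by positivity) h2 (by positivity)).trans (le_of_eq ?_)
  rw [Real.mul_rpow hC0.le (by positivity), ← Real.rpow_natCast, ← Real.rpow_mul hη.le]
  congr 2
  push_cast; ring

/-! ### Complex arguments and small `w` -/

/-- Smallness on a real cube spreads to a complex polydisc, one coordinate at a time. -/
lemma HH_polydisc {n : ℕ} {Ω : Set (EuclideanSpace ℝ (Fin n))} (hΩ : MeasurableSet Ω)
    (j : Fin n) {y0 : EuclideanSpace ℝ (Fin n)} {d D ρ ρ1 M : ℝ} (G : Geo Ω y0 d D ρ)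
    (hM : (D + 1) * (d ^ 2 / 4) ^ (-km n 0) ≤ M) (hρ1 : 0 < ρ1) (hρ1ρ : ρ1 < ρ) :
    ∃ θ : ℝ, 0 < θ ∧ ∀ g : EuclideanSpace ℝ (Fin n) → ℝ, IntegrableOn g Ω →
      ∫ x in Ω, |g x| ≤ 1 → ∀ q : ℝ, 0 < q → q ≤ 1 →
      (∀ y : EuclideanSpace ℝ (Fin n), (∀ i, |y i - y0 i| ≤ ρ1) →
        ‖HH Ω g j 0 (rc y) 0‖ ≤ M * q) →
      ∀ y : Fin n → ℂ, (∀ i, ‖y i - y0 i‖ ≤ ρ1) → ‖HH Ω g j 0 y 0‖ ≤ M * q ^ θ := by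
  have hd := G.d_pos
  obtain ⟨θ, hθ0, hθ1, hseg⟩ := small_of_segment' hρ1 hρ1 hρ1ρ
  refine ⟨θ ^ n, by positivity, ?_⟩
  intro g hg hg1 q hq hq1 hreal
  have hM0 : 0 < M := lt_of_lt_of_le (by have := G.D_nonneg; positivity) hM
  -- induction on the set of coordinates that are allowed to be complex
  have main : ∀ s : Finset (Fin n), ∀ y : Fin n → ℂ, (∀ i, ‖y i - y0 i‖ ≤ ρ1) →
      (∀ i, i ∉ s → (y i).im = 0) → ‖HH Ω g j 0 y 0‖ ≤ M * q ^ (θ ^ s.card) := by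
    intro s
    induction s using Finset.induction_on with
    | empty =>
      intro y hy hr
      simp only [Finset.card_empty, pow_zero, Real.rpow_one]
      have e : rc (WithLp.toLp 2 (fun i => (y i).re) : EuclideanSpace ℝ (Fin n)) = y := by
        ext i
        apply Complex.ext
        · simp [rc]
        · simp [rc, hr i (Finset.notMem_empty i)]
      rw [← e]
      apply hreal
      intro i
      refine le_trans ?_ (hy i)
      have := Complex.abs_re_le_norm (y i - y0 i)
      simpa using this
    | insert i s hi ih =>
      intro y hy hr
      have hA : ∀ ζ ∈ Metric.ball (y0 i : ℂ) ρ,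
          Adm Ω (d ^ 2 / 4) (D + 1) (Function.update y i ζ) 0 := by
        intro ζ hζ
        apply G.adm
        · intro l
          by_cases h : l = i
          · subst h
            rw [Function.update_self]
            rw [Metric.mem_ball, dist_eq_norm] at hζ
            exact hζ.le
          · rw [Function.update_of_ne h]
            exact (hy l).trans hρ1ρ.le
        · simp; positivity
      have hdiff := HH_differentiableOn hΩ hg j 0 (by positivity : (0:ℝ) < d ^ 2 / 4)
        Metric.isOpen_ball (Y := fun ζ => Function.update y i ζ) (W := fun _ => 0)
        (fun l => fun ζ _ => (hasDerivAt_upd y i l ζ).differentiableAt.differentiableWithinAt)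
        (differentiableOn_const _) hA
      have := hseg (fun ζ => HH Ω g j 0 (Function.update y i ζ) 0) (y0 i) M (q ^ (θ ^ s.card))
        hdiff (fun ζ hζ => (norm_HH_le hΩ hg hg1 (by positivity) (by linarith [G.D_nonneg])
          (hA ζ hζ) j 0).trans hM) hM0 (by positivity)
        (Real.rpow_le_one hq.le hq1 (by positivity)) ?_ (y i) (hy i)
      · rw [Function.update_eq_self, ← Real.rpow_mul hq.le, ← pow_succ] at this
        rwa [Finset.card_insert_of_notMem hi]
      · intro t ht
        apply ih
        · intro l
          by_cases h : l = i
          · subst h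
            rw [Function.update_self, add_sub_cancel_left, Complex.norm_real]
            exact ht
          · rw [Function.update_of_ne h]
            exact hy l
        · intro l hl
          by_cases h : l = i
          · subst h
            rw [Function.update_self]; simp
          · rw [Function.update_of_ne h]
            apply hr
            simp [h, hl]
  intro y hy
  have := main Finset.univ y hy (fun i hi => absurd (Finset.mem_univ i) hi)
  simpa using this

/-- Iterated Laplacians: Cauchy estimates on polydiscs shrinking in `N` steps lose only a
geometric factor, because the Laplacian gains a factor of order `k²` at the `k`-th step. -/
lemma HH_laplace_iter {n : ℕ} {Ω : Set (EuclideanSpace ℝ (Fin n))} (hΩ : MeasurableSet Ω)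
    (j : Fin n) {y0 : EuclideanSpace ℝ (Fin n)} {d D ρ ρ1 : ℝ} (G : Geo Ω y0 d D ρ)
    (hρ1 : 0 < ρ1) (hρ1ρ : ρ1 < ρ)
    {g : EuclideanSpace ℝ (Fin n) → ℝ} (hg : IntegrableOn g Ω) {β : ℝ} (hβ : 0 ≤ β)
    (h : ∀ y : Fin n → ℂ, (∀ i, ‖y i - y0 i‖ ≤ ρ1) → ‖HH Ω g j 0 y 0‖ ≤ β) (N : ℕ)
    (y : Fin n → ℂ) (hy : ∀ i, ‖y i - y0 i‖ ≤ ρ1 / 2) :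
    ‖HH Ω g j N y 0‖ ≤ (8 * n / ρ1 ^ 2 * Real.exp 2) ^ N * β := by
  have hd := G.d_pos
  rcases Nat.eq_zero_or_pos N with rfl | hN
  · simpa using h y (fun i => (hy i).trans (by linarith))
  have hN' : (0:ℝ) < N := by exact_mod_cast hN
  -- each Laplacian shrinks the polydisc by `a`; the total loss `N a` is half the radius
  set a := ρ1 / (2 * N) with ha
  have ha0 : 0 < a := by positivity
  have main : ∀ k : ℕ, k ≤ N → ∀ y : Fin n → ℂ, (∀ i, ‖y i - y0 i‖ ≤ ρ1 - k * a) →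
      ‖HH Ω g j k y 0‖ ≤ (2 * n / a ^ 2) ^ k / (k.factorial : ℝ) ^ 2 * β := by
    intro k
    induction k with
    | zero =>
      intro _ y hy
      simpa using h y (by simpa using hy)
    | succ k ih =>
      intro hk y hy
      set B := (2 * n / a ^ 2) ^ k / (k.factorial : ℝ) ^ 2 * β with hB
      have hB0 : 0 ≤ B := by positivity
      have hupd : ∀ s, 0 ≤ s → ∀ i, ∀ ζ : ℂ, ‖ζ - y i‖ ≤ a + s → ∀ l,
          ‖Function.update y i ζ l - y0 l‖ ≤ ρ1 - k * a + s := by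
        intro s hs i ζ hζ l
        have h3 : ρ1 - (k + 1 : ℕ) * a + a = ρ1 - k * a := by push_cast; ring
        by_cases hl : l = i
        · subst hl
          rw [Function.update_self]
          have e : ζ - y0 l = (ζ - y l) + (y l - y0 l) := by ring
          rw [e]
          refine (norm_add_le _ _).trans ?_
          linarith [hy l]
        · rw [Function.update_of_ne hl]
          linarith [hy l]
      have hka : 0 ≤ (k:ℝ) * a := by positivity
      have hA : ∀ i, ∀ ζ ∈ Metric.ball (y i) (a + (ρ - ρ1)),
          Adm Ω (d ^ 2 / 4) (D + 1) (Function.update y i ζ) 0 := by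
        intro i ζ hζ
        rw [Metric.mem_ball, dist_eq_norm] at hζ
        apply G.adm
        · intro l
          exact (hupd (ρ - ρ1) (by linarith) i ζ hζ.le l).trans (by linarith)
        · simp; positivity
      have hlap := HH_laplacian hΩ hg j k (by positivity : (0:ℝ) < d ^ 2 / 4) ha0
        (y := y) (fun i ζ hζ => hA i ζ (Metric.ball_subset_ball (by linarith) hζ))
      have hcauchy : ∀ i, ‖iteratedDeriv 2
          (fun ζ => HH Ω g j k (Function.update y i ζ) 0) (y i)‖ ≤ 2 * B / a ^ 2 := by
        intro i
        have hdiff := HH_differentiableOn hΩ hg j k (by positivity : (0:ℝ) < d ^ 2 / 4)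
          Metric.isOpen_ball (Y := fun ζ => Function.update y i ζ) (W := fun _ => 0)
          (fun l => fun ζ _ => (hasDerivAt_upd y i l ζ).differentiableAt.differentiableWithinAt)
          (differentiableOn_const _) (hA i)
        have hC := Complex.norm_iteratedDeriv_le_of_forall_mem_sphere_norm_le
          (f := fun ζ => HH Ω g j k (Function.update y i ζ) 0) (c := y i) (R := a) (C := B) 2
          ha0 ?_ ?_
        · simpa using hC
        · apply DifferentiableOn.diffContOnCl
          rw [closure_ball _ ha0.ne']
          exact hdiff.mono (Metric.closedBall_subset_ball (by linarith))
        · intro ζ hζ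
          rw [mem_sphere_iff_norm] at hζ
          apply ih (by omega)
          intro l
          simpa using hupd 0 le_rfl i ζ (by linarith) l
      have hnorm : ((n + 1 + 2 * k) * (1 + 2 * k) : ℝ) * ‖HH Ω g j (k + 1) y 0‖ ≤
          n * (2 * B / a ^ 2) := by
        have e : ((n + 1 + 2 * k) * (1 + 2 * k) : ℝ) * ‖HH Ω g j (k + 1) y 0‖ =
            ‖(((n + 1 + 2 * k) * (1 + 2 * k) : ℝ) : ℂ) * HH Ω g j (k + 1) y 0‖ := by
          rw [norm_mul, Complex.norm_real, Real.norm_of_nonneg (by positivity)]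
        rw [e, hlap]
        refine (norm_sum_le _ _).trans ((Finset.sum_le_sum (fun i _ => hcauchy i)).trans ?_)
        simp
      have hnorm2 : ((k:ℝ) + 1) ^ 2 * ‖HH Ω g j (k + 1) y 0‖ ≤ n * (2 * B / a ^ 2) := by
        refine le_trans ?_ hnorm
        apply mul_le_mul_of_nonneg_right _ (norm_nonneg _)
        have : (0:ℝ) ≤ n := by positivity
        have : (0:ℝ) ≤ k := by positivity
        nlinarith
      have e : (2 * n / a ^ 2) ^ (k + 1) / ((k + 1).factorial : ℝ) ^ 2 * β =
          n * (2 * B / a ^ 2) / ((k:ℝ) + 1) ^ 2 := by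
        rw [hB, Nat.factorial_succ, pow_succ]
        push_cast
        field_simp
      rw [e, le_div_iff₀ (by positivity), mul_comm]
      exact hnorm2
  refine (main N le_rfl y ?_).trans ?_
  · intro i
    refine (hy i).trans (le_of_eq ?_)
    rw [ha]; field_simp; ring
  · apply mul_le_mul_of_nonneg_right _ hβ
    have h1 : (N:ℝ) ^ N / N.factorial ≤ Real.exp N := Real.pow_div_factorial_le_exp _ hN'.le _
    have e : (2 * n / a ^ 2) ^ N / (N.factorial : ℝ) ^ 2 =
        (8 * n / ρ1 ^ 2) ^ N * ((N:ℝ) ^ N / N.factorial) ^ 2 := by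
      have : (2 * n / a ^ 2 : ℝ) = 8 * n / ρ1 ^ 2 * N ^ 2 := by
        rw [ha]; field_simp; ring
      rw [this, mul_pow, div_pow ((N:ℝ) ^ N)]
      ring
    rw [e, mul_pow]
    gcongr
    rw [← Real.exp_nat_mul]
    calc ((N:ℝ) ^ N / N.factorial) ^ 2 ≤ Real.exp N ^ 2 := by gcongr
      _ = Real.exp (N * 2) := by rw [← Real.exp_nat_mul]; congr 1; push_cast; ring

/-- Smallness of all iterated Laplacians at `w = 0` spreads to small `w` by Taylor expansion, and
then to every index `k` by Cauchy estimates in `w`. -/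
lemma HH_small_w {n : ℕ} {Ω : Set (EuclideanSpace ℝ (Fin n))} (hΩ : MeasurableSet Ω)
    (j : Fin n) {y0 : EuclideanSpace ℝ (Fin n)} {d D ρ ρ1 : ℝ} (G : Geo Ω y0 d D ρ)
    (hρ1ρ : ρ1 ≤ ρ) {g : EuclideanSpace ℝ (Fin n) → ℝ} (hg : IntegrableOn g Ω) {β c r : ℝ}
    (hc : 0 < c) (hr : 0 < r) (hr1 : r ≤ d ^ 2 / 4) (hr2 : r * ((n + 1) * c) ≤ 1) (hβ : 0 ≤ β)
    {y : Fin n → ℂ} (hy : ∀ i, ‖y i - y0 i‖ ≤ ρ1 / 2) (hρ1 : 0 < ρ1)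
    (h : ∀ N, ‖HH Ω g j N y 0‖ ≤ c ^ N * β) (k : ℕ) {w : ℂ} (hw : ‖w‖ ≤ r / 4) :
    ‖HH Ω g j k y w‖ ≤ (4 / r) ^ k * (2 * β) := by
  have hn : 1 ≤ n := Nat.one_le_iff_ne_zero.2 (fun h0 => by subst h0; exact j.elim0)
  have hd := G.d_pos
  have hc0 : (0:ℝ) < d ^ 2 / 4 := by positivity
  have hA : ∀ w ∈ Metric.ball (0:ℂ) (d ^ 2 / 4), Adm Ω (d ^ 2 / 4) (D + 1) y w := by
    intro w hw
    rw [mem_ball_zero_iff] at hw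
    exact G.adm (fun i => (hy i).trans (by linarith)) hw.le
  have hdiff : DifferentiableOn ℂ (fun w => HH Ω g j 0 y w) (Metric.ball 0 (d ^ 2 / 4)) :=
    fun w hw => (HH_hasDerivAt_w hΩ hg j 0 hc0 Metric.isOpen_ball hA
      hw).differentiableAt.differentiableWithinAt
  have h0 : ∀ w : ℂ, ‖w‖ ≤ r / 2 → ‖HH Ω g j 0 y w‖ ≤ 2 * β := by
    intro w hw
    refine taylor_bound hr hr1 hdiff ?_ hw
    intro i
    rw [HH_iteratedDeriv_w hΩ hg j i hc0 Metric.isOpen_ball hA 0 (Metric.mem_ball_self hc0)]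
    rw [norm_mul, norm_mul, norm_pow, norm_neg, norm_one, one_pow, one_mul, Complex.norm_real,
      Real.norm_of_nonneg (kp_pos n i).le]
    have h1 := kp_le_factorial n i hn
    calc kp n i * ‖HH Ω g j i y 0‖ / i.factorial * r ^ i
        ≤ ((n + 1) ^ i * i.factorial) * (c ^ i * β) / i.factorial * r ^ i := by
          gcongr
          exact h i
      _ = (r * ((n + 1) * c)) ^ i * β := by
          rw [mul_pow, mul_pow]; field_simp
      _ ≤ 1 ^ i * β := by gcongr
      _ = β := by simp
  have hwr : ∀ z ∈ Metric.closedBall w (r / 4), ‖z‖ ≤ r / 2 := by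
    intro z hz
    rw [Metric.mem_closedBall, dist_eq_norm] at hz
    have e : z = (z - w) + w := by ring
    rw [e]
    exact (norm_add_le _ _).trans (by linarith)
  have hC := Complex.norm_iteratedDeriv_le_of_forall_mem_sphere_norm_le
    (f := fun w => HH Ω g j 0 y w) (c := w) (R := r / 4) (C := 2 * β) k (by positivity) ?_ ?_
  · have hwb : w ∈ Metric.ball (0:ℂ) (d ^ 2 / 4) := by
      rw [mem_ball_zero_iff]; linarith
    rw [HH_iteratedDeriv_w hΩ hg j k hc0 Metric.isOpen_ball hA w hwb, norm_mul, norm_mul,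
      norm_pow, norm_neg, norm_one, one_pow, one_mul, Complex.norm_real,
      Real.norm_of_nonneg (kp_pos n k).le] at hC
    have h1 := factorial_le_kp n k hn
    have h2 : kp n k * ‖HH Ω g j k y w‖ ≤ kp n k * ((4 / r) ^ k * (2 * β)) := by
      refine hC.trans ?_
      have e : (k.factorial : ℝ) * (2 * β) / (r / 4) ^ k =
          k.factorial * ((4 / r) ^ k * (2 * β)) := by
        rw [div_pow, div_pow]; field_simp
      rw [e]
      gcongr
    exact le_of_mul_le_mul_left h2 (kp_pos n k)
  · apply DifferentiableOn.diffContOnCl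
    rw [closure_ball _ (by positivity)]
    apply hdiff.mono
    intro z hz
    rw [mem_ball_zero_iff]
    linarith [hwr z hz]
  · intro z hz
    exact h0 z (hwr z (Metric.sphere_subset_closedBall hz))

/-! ### Propagation to distant real arguments -/

/-- Along the path `(y₀ + ζ(z - y₀), (|z - y₀|² + S)ζ - |z - y₀|²ζ²)` the base of the kernel is
an affine function of `ζ`. -/
lemma kq_path {n : ℕ} (x y0 z : EuclideanSpace ℝ (Fin n)) (S : ℝ) (ζ : ℂ) :
    kq x (fun i => (y0 i : ℂ) + ζ * ((z i : ℂ) - (y0 i : ℂ))) +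
      ((‖z - y0‖ ^ 2 + S : ℝ) * ζ - ζ ^ 2 * (‖z - y0‖ ^ 2 : ℝ)) =
      (‖x - y0‖ ^ 2 : ℝ) + ζ * (‖z - x‖ ^ 2 - ‖x - y0‖ ^ 2 + S : ℝ) := by
  simp only [EuclideanSpace.real_norm_sq_eq, kq]
  have h : ∑ i, (((x i : ℂ) - ((y0 i : ℂ) + ζ * ((z i : ℂ) - (y0 i : ℂ)))) ^ 2
      + ζ * ((z i : ℂ) - (y0 i : ℂ)) ^ 2 - ζ ^ 2 * ((z i : ℂ) - (y0 i : ℂ)) ^ 2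
      - ((x i : ℂ) - (y0 i : ℂ)) ^ 2 - ζ * ((z i : ℂ) - (x i : ℂ)) ^ 2
      + ζ * ((x i : ℂ) - (y0 i : ℂ)) ^ 2) = 0 :=
    Finset.sum_eq_zero (fun i _ => by ring)
  simp only [Finset.sum_add_distrib, Finset.sum_sub_distrib, ← Finset.mul_sum] at h
  push_cast
  simp only [PiLp.sub_apply, Complex.ofReal_sub]
  linear_combination h

/-- The path of `kq_path`, with `S = D² + 1`, stays admissible in the half plane `Re ζ ≥ -δ`: the base
of the kernel is `‖x - y₀‖²` plus a bounded positive multiple of `ζ`. -/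
lemma path_adm {n : ℕ} {Ω : Set (EuclideanSpace ℝ (Fin n))} {y0 z : EuclideanSpace ℝ (Fin n)}
    {d D Rb Z δ : ℝ} (hd : 0 < d)
    (hb : ∀ x ∈ Ω, d ≤ ‖x - y0‖ ∧ ‖x - y0‖ ≤ D) (hz : ‖z - y0‖ ≤ Rb)
    (hδ : δ * ((Rb + D) ^ 2 + (D ^ 2 + 1)) ≤ d ^ 2 / 2) {ζ : ℂ} (hζ : -δ ≤ ζ.re) (hδ0 : 0 ≤ δ)
    (hZ : ‖ζ‖ ≤ Z) :
    Adm Ω (d ^ 2 / 2) (D + Z * Rb) (fun i => (y0 i : ℂ) + ζ * ((z i : ℂ) - (y0 i : ℂ)))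
      ((‖z - y0‖ ^ 2 + (D ^ 2 + 1) : ℝ) * ζ - ζ ^ 2 * (‖z - y0‖ ^ 2 : ℝ)) := by
  intro x hx
  obtain ⟨h1, h2⟩ := hb x hx
  constructor
  · rw [kq_path, Complex.add_re, Complex.ofReal_re, Complex.re_mul_ofReal]
    have h3 : ‖x - y0‖ ^ 2 ≤ D ^ 2 := pow_le_pow_left₀ (norm_nonneg _) h2 2
    have h4 : d ^ 2 ≤ ‖x - y0‖ ^ 2 := pow_le_pow_left₀ hd.le h1 2
    have h5 : ‖z - x‖ ≤ Rb + D := by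
      have e : z - x = (z - y0) - (x - y0) := by abel
      rw [e]
      exact (norm_sub_le _ _).trans (by linarith)
    have h6 : ‖z - x‖ ^ 2 ≤ (Rb + D) ^ 2 := pow_le_pow_left₀ (norm_nonneg _) h5 2
    set a := ‖z - x‖ ^ 2 - ‖x - y0‖ ^ 2 + (D ^ 2 + 1) with ha
    have ha0 : 0 ≤ a := by
      rw [ha]; nlinarith [sq_nonneg ‖z - x‖]
    have ha1 : a ≤ (Rb + D) ^ 2 + (D ^ 2 + 1) := by
      rw [ha]; nlinarith [sq_nonneg ‖x - y0‖]
    have h7 : -δ * a ≤ ζ.re * a := mul_le_mul_of_nonneg_right hζ ha0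
    have h8 : δ * a ≤ δ * ((Rb + D) ^ 2 + (D ^ 2 + 1)) := mul_le_mul_of_nonneg_left ha1 hδ0
    linarith
  · intro i
    have e : (x i : ℂ) - ((y0 i : ℂ) + ζ * ((z i : ℂ) - (y0 i : ℂ))) =
      ((x i : ℂ) - (y0 i : ℂ)) - ζ * ((z i : ℂ) - (y0 i : ℂ)) := by ring
    simp only [e]
    refine (norm_sub_le _ _).trans (add_le_add ((norm_rc _ _ _).trans h2) ?_)
    rw [norm_mul]
    exact mul_le_mul hZ ((norm_rc _ _ _).trans hz) (norm_nonneg _) ((norm_nonneg _).trans hZ)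

/-- The Cayley-type map `ξ ↦ 2δξ/(1-ξ)` sends the unit disc into the half plane `Re ≥ -δ`. -/
lemma cayley_re {δ : ℝ} (hδ : 0 ≤ δ) {ξ : ℂ} (hξ : ‖ξ‖ < 1) :
    -δ ≤ (2 * δ * ξ / (1 - ξ)).re := by
  have h1 : 1 - ξ ≠ 0 := by
    intro h
    have : ξ = 1 := by linear_combination -h
    rw [this] at hξ; simp at hξ
  have e : 2 * δ * ξ / (1 - ξ) = δ * ((1 + ξ) / (1 - ξ)) - δ := by
    field_simp; ring
  rw [e, Complex.sub_re, Complex.re_ofReal_mul, Complex.ofReal_re]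
  have h2 : 0 ≤ ((1 + ξ) / (1 - ξ)).re := by
    rw [Complex.div_re, ← add_div]
    apply div_nonneg _ (Complex.normSq_nonneg _)
    have h3 : ξ.re ^ 2 + ξ.im ^ 2 < 1 := by
      have := Complex.sq_norm ξ
      rw [Complex.normSq_apply] at this
      nlinarith [norm_nonneg ξ]
    simp
    nlinarith
  nlinarith

/-- Smallness near `(y₀, 0)` propagates to `(z, D² + 1)` for `z` in a prescribed ball: the two-constants
theorem is applied to the potential along the path of `kq_path`, which starts at `(y₀, 0)` and ends
at `(z, D² + 1)`, with the parameter `ζ = 2δξ/(1-ξ)`, `ξ` in a disc of radius less than `1`. -/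
lemma HH_propagate {n : ℕ} {Ω : Set (EuclideanSpace ℝ (Fin n))} (hΩ : MeasurableSet Ω)
    (j : Fin n) {y0 : EuclideanSpace ℝ (Fin n)} {d D Rb ρ' r' : ℝ} (hd : 0 < d) (hD : 0 ≤ D)
    (hRb : 0 ≤ Rb) (hb : ∀ x ∈ Ω, d ≤ ‖x - y0‖ ∧ ‖x - y0‖ ≤ D) (hρ' : 0 < ρ') (hr' : 0 < r') :
    ∃ A θ : ℝ, 0 < A ∧ 0 < θ ∧ ∀ g : EuclideanSpace ℝ (Fin n) → ℝ, IntegrableOn g Ω →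
      ∫ x in Ω, |g x| ≤ 1 → ∀ k : ℕ, ∀ M q : ℝ, A * (2 / d ^ 2) ^ k ≤ M → 0 < q → q ≤ 1 →
      (∀ y : Fin n → ℂ, (∀ i, ‖y i - y0 i‖ ≤ ρ') → ∀ w : ℂ, ‖w‖ ≤ r' →
        ‖HH Ω g j k y w‖ ≤ M * q) →
      ∀ z : EuclideanSpace ℝ (Fin n), ‖z - y0‖ ≤ Rb →
        ‖HH Ω g j k (rc z) (D ^ 2 + 1 : ℝ)‖ ≤ M * q ^ θ := by
  set a1 := (Rb + D) ^ 2 + (D ^ 2 + 1) with ha1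
  have ha10 : 0 < a1 := by positivity
  set δ := d ^ 2 / 2 / a1 with hδ
  have hδ0 : 0 < δ := by positivity
  have hδ1 : δ * a1 ≤ d ^ 2 / 2 := by rw [hδ]; field_simp; rfl
  -- `ξ1` is the parameter of the endpoint: `2 δ ξ1 / (1 - ξ1) = 1`
  set ξ1 := 1 / (1 + 2 * δ) with hξ1
  have hξ10 : 0 < ξ1 := by positivity
  have hξ11 : ξ1 < 1 := by rw [hξ1, div_lt_one (by positivity)]; linarith
  set R := (1 + ξ1) / 2 with hR
  have hR1 : R < 1 := by rw [hR]; linarith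
  have hR0 : ξ1 < R := by rw [hR]; linarith
  set Z := 2 * δ * R / (1 - R) with hZ
  have hZ0 : 0 < Z := by
    have : 0 < R := hξ10.trans hR0
    have : 0 < 1 - R := by linarith
    positivity
  set Λ := Rb ^ 2 + (D ^ 2 + 1) with hΛ
  set t := min 1 (min (ρ' / (Rb + 1)) (r' / (Λ + Rb ^ 2))) with ht
  have ht0 : 0 < t := by rw [ht]; positivity
  have ht1 : t ≤ 1 := min_le_left _ _
  have ht2 : t * (Rb + 1) ≤ ρ' := by
    rw [← le_div_iff₀ (by positivity)]
    exact (min_le_right _ _).trans (min_le_left _ _)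
  have ht3 : t * (Λ + Rb ^ 2) ≤ r' := by
    rw [← le_div_iff₀ (by positivity)]
    exact (min_le_right _ _).trans (min_le_right _ _)
  set r3 := min (1 / 2) (t / (4 * δ)) with hr3
  have hr30 : 0 < r3 := by rw [hr3]; positivity
  have hr31 : r3 ≤ 1 / 2 := min_le_left _ _
  have hr32 : 4 * δ * r3 ≤ t := by
    rw [mul_comm, ← le_div_iff₀ (by positivity)]
    exact min_le_right _ _
  obtain ⟨θ, hθ0, -, hseg⟩ := small_of_segment' hr30 hξ10 hR0
  refine ⟨(D + Z * Rb + 1) * (d ^ 2 / 2) ^ (-km n 0), θ, by positivity, hθ0, ?_⟩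
  intro g hg hg1 k M q hM hq hq1 hsmall z hz
  set Y : ℂ → Fin n → ℂ := fun ζ i => (y0 i : ℂ) + ζ * ((z i : ℂ) - (y0 i : ℂ)) with hY
  set W : ℂ → ℂ := fun ζ => (‖z - y0‖ ^ 2 + (D ^ 2 + 1) : ℝ) * ζ - ζ ^ 2 * (‖z - y0‖ ^ 2 : ℝ)
    with hW
  set φ : ℂ → ℂ := fun ξ => 2 * δ * ξ / (1 - ξ) with hφ
  have hne : ∀ ξ ∈ Metric.ball (0:ℂ) R, 1 - ξ ≠ 0 := by
    intro ξ hξ h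
    have : ξ = 1 := by linear_combination -h
    rw [this] at hξ; simp at hξ; linarith
  have hφd : DifferentiableOn ℂ φ (Metric.ball 0 R) := by
    apply DifferentiableOn.div (by fun_prop) (by fun_prop) hne
  have hφn : ∀ ξ ∈ Metric.ball (0:ℂ) R, ‖φ ξ‖ ≤ Z := by
    intro ξ hξ
    rw [mem_ball_zero_iff] at hξ
    have h1 : 1 - R ≤ ‖1 - ξ‖ := by
      have := norm_sub_norm_le (1:ℂ) ξ
      rw [norm_one] at this; linarith
    simp only [hφ]
    rw [norm_div, norm_mul, norm_mul, Complex.norm_ofNat, Complex.norm_real,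
      Real.norm_of_nonneg hδ0.le]
    have : 0 < 1 - R := by linarith
    rw [hZ]; gcongr
  have hA : ∀ ξ ∈ Metric.ball (0:ℂ) R, Adm Ω (d ^ 2 / 2) (D + Z * Rb) (Y (φ ξ)) (W (φ ξ)) := by
    intro ξ hξ
    refine path_adm hd hb hz hδ1 (cayley_re hδ0.le ?_) hδ0.le (hφn ξ hξ)
    rw [mem_ball_zero_iff] at hξ
    linarith
  have hd2 : (0:ℝ) < d ^ 2 / 2 := by positivity
  have hMk : (D + Z * Rb) * (d ^ 2 / 2) ^ (-km n k) ≤ M := by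
    refine le_trans ?_ hM
    have e : (d ^ 2 / 2) ^ (-km n k) = (d ^ 2 / 2) ^ (-km n 0) * (2 / d ^ 2) ^ k := by
      have : -km n k = -km n 0 + -(k:ℝ) := by unfold km; push_cast; ring
      rw [this, Real.rpow_add hd2, Real.rpow_neg hd2.le (k:ℝ), Real.rpow_natCast, ← inv_pow, inv_div]
    rw [e, ← mul_assoc]
    have h1 : D + Z * Rb ≤ D + Z * Rb + 1 := by linarith
    exact mul_le_mul_of_nonneg_right (mul_le_mul_of_nonneg_right h1 (by positivity))
      (by positivity)
  have hM0 : 0 < M := lt_of_lt_of_le (by positivity) hM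
  have hfin := hseg (fun ξ => HH Ω g j k (Y (φ ξ)) (W (φ ξ))) 0 M q
    (HH_differentiableOn hΩ hg j k hd2 Metric.isOpen_ball (Y := fun ξ => Y (φ ξ))
      (W := fun ξ => W (φ ξ)) (fun i => by simp only [hY]; fun_prop)
      (by simp only [hW]; fun_prop) hA)
    (fun ξ hξ => (norm_HH_le hΩ hg hg1 hd2 (by positivity) (hA ξ hξ) j k).trans hMk)
    hM0 hq hq1 ?_ (ξ1 : ℂ) ?_
  · have e1 : φ ξ1 = 1 := by
      simp only [hφ, hξ1]
      have : (1 + 2 * (δ:ℂ)) ≠ 0 := by exact_mod_cast (by positivity : (1 + 2 * δ) ≠ 0)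
      have : (δ:ℂ) ≠ 0 := by exact_mod_cast hδ0.ne'
      push_cast
      field_simp
      ring
    have e2 : Y 1 = rc z := by ext i; simp [hY, rc]
    have e3 : W 1 = (D ^ 2 + 1 : ℝ) := by simp [hW]
    simp only [e1, e2, e3] at hfin
    exact hfin
  · intro s hs
    rw [zero_add]
    have hφs : ‖φ s‖ ≤ t := by
      refine le_trans ?_ hr32
      simp only [hφ]
      have h1 : 1 / 2 ≤ ‖(1 - s : ℂ)‖ := by
        have := norm_sub_norm_le (1:ℂ) s
        rw [norm_one, Complex.norm_real, Real.norm_eq_abs] at this; linarith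
      rw [norm_div, norm_mul, norm_mul, Complex.norm_ofNat, Complex.norm_real, Complex.norm_real,
        Real.norm_of_nonneg hδ0.le, Real.norm_eq_abs, div_le_iff₀ (by linarith)]
      calc 2 * δ * |s| ≤ 2 * δ * r3 := mul_le_mul_of_nonneg_left hs (by positivity)
        _ = 4 * δ * r3 * (1 / 2) := by ring
        _ ≤ 4 * δ * r3 * ‖(1 - s : ℂ)‖ := mul_le_mul_of_nonneg_left h1 (by positivity)
    apply hsmall
    · intro i
      have e : Y (φ s) i - y0 i = φ s * ((z i : ℂ) - (y0 i : ℂ)) := by simp [hY]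
      rw [e, norm_mul]
      have h1 := (norm_rc z y0 i).trans hz
      calc ‖φ s‖ * ‖(z i : ℂ) - (y0 i : ℂ)‖ ≤ t * Rb := by gcongr
        _ ≤ t * (Rb + 1) := by gcongr; linarith
        _ ≤ ρ' := ht2
    · simp only [hW]
      refine (norm_sub_le _ _).trans ?_
      rw [norm_mul, norm_mul, norm_pow, Complex.norm_real, Complex.norm_real,
        Real.norm_of_nonneg (by positivity), Real.norm_of_nonneg (by positivity)]
      have h1 : ‖z - y0‖ ^ 2 ≤ Rb ^ 2 := pow_le_pow_left₀ (norm_nonneg _) hz 2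
      have h2 : ‖φ s‖ ^ 2 ≤ t := by
        calc ‖φ s‖ ^ 2 ≤ t ^ 2 := pow_le_pow_left₀ (norm_nonneg _) hφs 2
          _ = t * t := sq t
          _ ≤ t * 1 := mul_le_mul_of_nonneg_left ht1 ht0.le
          _ = t := mul_one t
      calc (‖z - y0‖ ^ 2 + (D ^ 2 + 1)) * ‖φ s‖ + ‖φ s‖ ^ 2 * ‖z - y0‖ ^ 2
          ≤ (Rb ^ 2 + (D ^ 2 + 1)) * t + t * Rb ^ 2 := by gcongr
        _ = t * (Λ + Rb ^ 2) := by rw [hΛ]; ring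
        _ ≤ r' := ht3
  · rw [sub_zero, Complex.norm_real, Real.norm_of_nonneg hξ10.le]

/-- Quantitative unique continuation for the potential: if it is small in `L²(Ω₁)` then all the
potentials with the regularised kernels are small on a prescribed large ball, with constants
growing only geometrically in the order `k`. -/
theorem HH_core {n : ℕ} {Ω₁ Ω : Set (EuclideanSpace ℝ (Fin n))} (hΩ : MeasurableSet Ω)
    (hΩ₁ : IsOpen Ω₁) (j : Fin n) {y0 : EuclideanSpace ℝ (Fin n)} (hy0 : y0 ∈ Ω₁) {d D Rb : ℝ}
    (hd : 0 < d) (hD : 0 ≤ D) (hRb : 0 ≤ Rb)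
    (hb : ∀ x ∈ Ω, d ≤ ‖x - y0‖ ∧ ‖x - y0‖ ≤ D) :
    ∃ C θ : ℝ, 1 ≤ C ∧ 0 < θ ∧ ∀ g : EuclideanSpace ℝ (Fin n) → ℝ, IntegrableOn g Ω →
      ∫ x in Ω, |g x| ≤ 1 → ∀ η : ℝ, 0 < η → η ≤ 1 →
      IntegrableOn (fun y => ‖HH Ω g j 0 (rc y) 0‖ ^ 2) Ω₁ →
      ∫ y in Ω₁, ‖HH Ω g j 0 (rc y) 0‖ ^ 2 ≤ η ^ 2 →
      ∀ k : ℕ, ∀ z : EuclideanSpace ℝ (Fin n), ‖z - y0‖ ≤ Rb →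
        ‖HH Ω g j k (rc z) (D ^ 2 + 1 : ℝ)‖ ≤ C ^ (k + 1) * η ^ θ := by
  obtain ⟨ρ0, hρ00, hρ0⟩ := Metric.isOpen_iff.1 hΩ₁ y0 hy0
  have hn : 1 ≤ n := Nat.one_le_iff_ne_zero.2 (fun h0 => by subst h0; exact j.elim0)
  have hn' : (0:ℝ) < n := by exact_mod_cast hn
  set ρ := min (min 1 ρ0) (d ^ 2 / 2 / (n * (2 * D + 1))) with hρdef
  have hρ : 0 < ρ := by rw [hρdef]; positivity
  have G : Geo Ω y0 d D ρ := by
    refine ⟨hd, hD, hb, hρ, (min_le_left _ _).trans (min_le_left _ _), ?_⟩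
    rw [mul_comm, ← le_div_iff₀ (by positivity)]
    exact min_le_right _ _
  have hsub : Metric.ball y0 ρ ⊆ Ω₁ :=
    (Metric.ball_subset_ball ((min_le_left _ _).trans (min_le_right _ _))).trans hρ0
  obtain ⟨C1, hC1, hsup⟩ := HH_sup_small Ω₁ hΩ j G le_rfl hsub
  set M := max ((D + 1) * (d ^ 2 / 4) ^ (-km n 0)) C1 with hM
  have hM0 : 0 < M := lt_of_lt_of_le hC1 (le_max_right _ _)
  set ρ1 := ρ / (4 * n) with hρ1def
  have hρ1 : 0 < ρ1 := by positivity
  have hρ1ρ : ρ1 < ρ := by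
    rw [hρ1def, div_lt_iff₀ (by positivity)]
    have : (1:ℝ) ≤ n := by exact_mod_cast hn
    nlinarith
  obtain ⟨θ2, hθ2, hpoly⟩ := HH_polydisc hΩ j G (M := M) (le_max_left _ _) hρ1 hρ1ρ
  set c := 8 * n / ρ1 ^ 2 * Real.exp 2 with hc
  have hc0 : 0 < c := by positivity
  set r := min (d ^ 2 / 4) (1 / ((n + 1) * c)) with hr
  have hr0 : 0 < r := by rw [hr]; positivity
  have hr2 : r * ((n + 1) * c) ≤ 1 := by
    rw [← le_div_iff₀ (by positivity)]
    exact min_le_right _ _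
  obtain ⟨A, θ3, hA, hθ3, hprop⟩ := HH_propagate hΩ j hd hD hRb hb (half_pos hρ1)
    (by positivity : 0 < r / 4)
  set A' := A + 2 * M + 1 with hA'
  set B := 2 / d ^ 2 + 4 / r with hB
  have hB0 : 0 < B := by positivity
  refine ⟨A' + B, 2 / ((n : ℝ) + 2) * θ2 * θ3, by rw [hA']; linarith, by positivity, ?_⟩
  intro g hg hg1 η hη hη1 hIg hle k z hz
  set q := η ^ (2 / ((n : ℝ) + 2)) with hq
  have hq0 : 0 < q := by positivity
  have hq1 : q ≤ 1 := Real.rpow_le_one hη.le hη1 (by positivity)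
  have h1 : ∀ y : Fin n → ℂ, (∀ i, ‖y i - y0 i‖ ≤ ρ1) → ‖HH Ω g j 0 y 0‖ ≤ M * q ^ θ2 := by
    apply hpoly g hg hg1 q hq0 hq1
    intro y hy
    refine (hsup g hg hg1 η hη hIg hle y ?_).trans ?_
    · have h2 : ‖y - y0‖ ≤ ∑ i, |y i - y0 i| := by
        rw [EuclideanSpace.norm_eq]
        refine (Real.sqrt_le_sqrt (y := (∑ i, |y i - y0 i|) ^ 2) ?_).trans
          (Real.sqrt_sq (Finset.sum_nonneg fun i _ => abs_nonneg _)).le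
        exact Finset.sum_sq_le_sq_sum_of_nonneg (fun i _ => abs_nonneg _)
      refine h2.trans ((Finset.sum_le_sum (fun i _ => hy i)).trans (le_of_eq ?_))
      simp only [Finset.sum_const, Finset.card_univ, Fintype.card_fin, nsmul_eq_mul, hρ1def]
      field_simp
    · gcongr
      exact le_max_right _ _
  have hβ0 : 0 ≤ M * q ^ θ2 := by positivity
  have h2 : ∀ y : Fin n → ℂ, (∀ i, ‖y i - y0 i‖ ≤ ρ1 / 2) → ∀ w : ℂ, ‖w‖ ≤ r / 4 →
      ‖HH Ω g j k y w‖ ≤ A' * B ^ k * q ^ θ2 := by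
    intro y hy w hw
    refine (HH_small_w hΩ j G hρ1ρ.le hg hc0 hr0 (min_le_left _ _) hr2 hβ0 hy hρ1
      (fun N => HH_laplace_iter hΩ j G hρ1 hρ1ρ hg hβ0 h1 N y hy) k hw).trans ?_
    calc (4 / r) ^ k * (2 * (M * q ^ θ2)) = 2 * M * (4 / r) ^ k * q ^ θ2 := by ring
      _ ≤ A' * B ^ k * q ^ θ2 := by
        gcongr
        · rw [hA']; linarith
        · rw [hB]; linarith [show 0 < 2 / d ^ 2 by positivity]
  have h3 := hprop g hg hg1 k (A' * B ^ k) (q ^ θ2) ?_ (by positivity)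
    (Real.rpow_le_one hq0.le hq1 hθ2.le) h2 z hz
  · refine h3.trans ?_
    rw [← Real.rpow_mul hq0.le, hq, ← Real.rpow_mul hη.le, ← mul_assoc]
    gcongr
    rw [pow_succ, mul_comm]
    gcongr
    · linarith
    · linarith
  · gcongr
    · rw [hA']; linarith
    · rw [hB]; linarith [show 0 < 4 / r by positivity]

/-! ### Tikhonov regularisation -/

/-- Tikhonov regularisation in Hilbert space: the normal equation `A†(h - A f) = τ f` is solvable
for every `τ > 0`, by Lax–Milgram. -/
lemma tikhonov_abstract {H K : Type*} [NormedAddCommGroup H] [InnerProductSpace ℝ H]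
    [CompleteSpace H] [NormedAddCommGroup K] [InnerProductSpace ℝ K] [CompleteSpace K]
    (A : H →L[ℝ] K) (h : K) {τ : ℝ} (hτ : 0 < τ) :
    ∃ f : H, ∀ u : H, inner ℝ (h - A f) (A u) = τ * inner ℝ f u := by
  let B : H →L[ℝ] H →L[ℝ] ℝ :=
    (innerSL ℝ).comp (A.adjoint.comp A + τ • ContinuousLinearMap.id ℝ H)
  have hB : ∀ u v, B u v = inner ℝ (A u) (A v) + τ * inner ℝ u v := by
    intro u v
    simp only [B, ContinuousLinearMap.comp_apply, innerSL_apply_apply,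
      add_apply, smul_apply, ContinuousLinearMap.id_apply,
      inner_add_left, ContinuousLinearMap.adjoint_inner_left, inner_smul_left]
    simp
  have hc : IsCoercive B := by
    refine ⟨τ, hτ, fun u => ?_⟩
    rw [hB, real_inner_self_eq_norm_sq, real_inner_self_eq_norm_sq]
    nlinarith [sq_nonneg ‖A u‖]
  refine ⟨hc.continuousLinearEquivOfBilin.symm (A.adjoint h), fun u => ?_⟩
  set f := hc.continuousLinearEquivOfBilin.symm (A.adjoint h) with hf
  have h1 := hc.continuousLinearEquivOfBilin_apply f u
  rw [hf, ContinuousLinearEquiv.apply_symm_apply, ← hf, hB,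
    ContinuousLinearMap.adjoint_inner_left] at h1
  rw [inner_sub_left, h1]; ring

lemma memLp_of_bdd {X : Type*} [MeasurableSpace X] {μ : Measure X} [IsFiniteMeasure μ] {f : X → ℝ}
    (hf : AEStronglyMeasurable f μ) {M : ℝ} (hM : ∀ x, |f x| ≤ M) : MemLp f 2 μ :=
  MemLp.of_bound hf M (Filter.Eventually.of_forall hM)

/-- Tikhonov regularisation for an integral operator with bounded kernel: `f` is the regularised
solution and `g` its residual. -/
lemma tikhonov {X Y : Type*} [MeasurableSpace X] [MeasurableSpace Y] (μ : Measure X)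
    (ν : Measure Y) [IsFiniteMeasure μ] [IsFiniteMeasure ν] {K : Y → X → ℝ}
    (hK : Measurable (Function.uncurry K)) {M : ℝ} (hM : ∀ y x, |K y x| ≤ M) {h : Y → ℝ}
    (hh : MemLp h 2 ν) {τ : ℝ} (hτ : 0 < τ) :
    ∃ f : X → ℝ, Measurable f ∧ MemLp f 2 μ ∧ ∃ g : Y → ℝ, Measurable g ∧ MemLp g 2 ν ∧
      (∀ᵐ y ∂ν, g y = h y - ∫ x, K y x * f x ∂μ) ∧
      (∀ᵐ x ∂μ, ∫ y, g y * K y x ∂ν = τ * f x) ∧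
      ∫ y, g y * h y ∂ν = ∫ y, g y ^ 2 ∂ν + τ * ∫ x, f x ^ 2 ∂μ := by
  have hKy : ∀ y, MemLp (K y) 2 μ := fun y =>
    memLp_of_bdd (hK.comp measurable_prodMk_left).aestronglyMeasurable (hM y)
  obtain ⟨C, hC0, hC⟩ : ∃ C, 0 ≤ C ∧ ∀ y, ‖(hKy y).toLp‖ ≤ C := by
    refine ⟨(measureUnivNNReal μ : ℝ) ^ (2 : ENNReal).toReal⁻¹ * max M 0, by positivity, fun y => ?_⟩
    apply Lp.norm_le_of_ae_bound (le_max_right _ _)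
    filter_upwards [(hKy y).coeFn_toLp] with x hx
    rw [hx]; exact (hM y x).trans (le_max_left _ _)
  have hIg : ∀ (y : Y) (u : Lp ℝ 2 μ), inner ℝ (hKy y).toLp u = ∫ x, K y x * u x ∂μ := by
    intro y u
    rw [L2.inner_def]
    apply integral_congr_ae
    filter_upwards [(hKy y).coeFn_toLp] with x hx
    rw [hx]; simp [mul_comm]
  have hms : ∀ u : Lp ℝ 2 μ, AEStronglyMeasurable (fun y => inner ℝ (hKy y).toLp u) ν := by
    intro u
    simp_rw [hIg]
    have h1 : StronglyMeasurable (fun p : Y × X => K p.1 p.2 * u p.2) :=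
      hK.stronglyMeasurable.mul ((Lp.stronglyMeasurable u).comp_measurable measurable_snd)
    exact h1.integral_prod_right.aestronglyMeasurable
  have hbd : ∀ (u : Lp ℝ 2 μ) y, |inner ℝ (hKy y).toLp u| ≤ C * ‖u‖ := fun u y =>
    (abs_real_inner_le_norm _ _).trans (mul_le_mul_of_nonneg_right (hC y) (norm_nonneg _))
  have hmem : ∀ u : Lp ℝ 2 μ, MemLp (fun y => inner ℝ (hKy y).toLp u) 2 ν := fun u =>
    memLp_of_bdd (hms u) (hbd u)
  let A0 : Lp ℝ 2 μ →ₗ[ℝ] Lp ℝ 2 ν :=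
    { toFun := fun u => (hmem u).toLp
      map_add' := fun u v => by
        rw [← MemLp.toLp_add]
        apply MemLp.toLp_congr
        exact Filter.Eventually.of_forall fun y => by simp [inner_add_right]
      map_smul' := fun c u => by
        rw [RingHom.id_apply, ← MemLp.toLp_const_smul]
        apply MemLp.toLp_congr
        exact Filter.Eventually.of_forall fun y => by simp [inner_smul_right] }
  let A : Lp ℝ 2 μ →L[ℝ] Lp ℝ 2 ν := A0.mkContinuous
    ((measureUnivNNReal ν : ℝ) ^ (2 : ENNReal).toReal⁻¹ * C) (fun u => by
      rw [mul_assoc]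
      apply Lp.norm_le_of_ae_bound (by positivity)
      filter_upwards [(hmem u).coeFn_toLp] with y hy
      change ‖((hmem u).toLp _ : Lp ℝ 2 ν) y‖ ≤ _
      rw [hy]; exact hbd u y)
  have hA : ∀ u, A u = (hmem u).toLp := fun u => rfl
  obtain ⟨f, hf⟩ := tikhonov_abstract A (hh.toLp h) hτ
  set g := (hh.toLp h) - A f with hg
  have hgh : ∀ᵐ y ∂ν, g y = h y - ∫ x, K y x * f x ∂μ := by
    filter_upwards [Lp.coeFn_sub (hh.toLp h) (A f), hh.coeFn_toLp, (hmem f).coeFn_toLp]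
      with y h1 h2 h3
    rw [hg, h1, Pi.sub_apply, h2, hA, h3, hIg]
  have hgm : Integrable g ν := (Lp.memLp g).integrable (by norm_num)
  have hwb : ∀ x, |∫ y, g y * K y x ∂ν| ≤ M * ∫ y, |g y| ∂ν := by
    intro x
    rw [← integral_const_mul]
    refine (abs_integral_le_integral_abs).trans ?_
    apply integral_mono_of_nonneg (Filter.Eventually.of_forall fun _ => abs_nonneg _)
      (hgm.abs.const_mul M) (Filter.Eventually.of_forall fun y => ?_)
    change |g y * K y x| ≤ M * |g y|
    rw [abs_mul, mul_comm]
    exact mul_le_mul_of_nonneg_right (hM y x) (abs_nonneg _)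
  have hwm : StronglyMeasurable (fun x => ∫ y, g y * K y x ∂ν) := by
    have h1 : StronglyMeasurable (fun p : X × Y => g p.2 * K p.2 p.1) :=
      ((Lp.stronglyMeasurable g).comp_measurable measurable_snd).mul
        (hK.comp measurable_swap).stronglyMeasurable
    exact h1.integral_prod_right
  have hw := memLp_of_bdd (μ := μ) hwm.aestronglyMeasurable hwb
  have hadj : ∀ u : Lp ℝ 2 μ, inner ℝ g (A u) = inner ℝ (hw.toLp _) u := by
    intro u
    have hum : Integrable u μ := (Lp.memLp u).integrable (by norm_num)
    have e1 : inner ℝ g (A u) = ∫ y, ∫ x, g y * K y x * u x ∂μ ∂ν := by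
      rw [L2.inner_def]
      apply integral_congr_ae
      filter_upwards [(hmem u).coeFn_toLp] with y hy
      rw [hA, hy, hIg]
      simp only [RCLike.inner_apply, conj_trivial, mul_assoc]
      rw [integral_const_mul]; ring
    have e2 : inner ℝ (hw.toLp _) u = ∫ x, ∫ y, g y * K y x * u x ∂ν ∂μ := by
      rw [L2.inner_def]
      apply integral_congr_ae
      filter_upwards [hw.coeFn_toLp] with x hx
      rw [hx]
      simp only [RCLike.inner_apply, conj_trivial]
      rw [integral_mul_const]; ring
    rw [e1, e2]
    apply integral_integral_swap
    have h2 : Integrable (fun p : Y × X => g p.1 * u p.2) (ν.prod μ) := hgm.mul_prod hum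
    have h3 := h2.bdd_mul (c := M) hK.aestronglyMeasurable
      (Filter.Eventually.of_forall fun p => hM p.1 p.2)
    refine h3.congr (Filter.Eventually.of_forall fun p => ?_)
    simp only [Function.uncurry]; ring
  have hwf : (hw.toLp _) = τ • f := by
    apply ext_inner_right ℝ
    intro u
    rw [← hadj, hf, inner_smul_left]; simp
  refine ⟨f, (Lp.stronglyMeasurable f).measurable, Lp.memLp f, g,
    (Lp.stronglyMeasurable g).measurable, Lp.memLp g, hgh, ?_, ?_⟩
  · filter_upwards [hw.coeFn_toLp, Lp.coeFn_smul τ f] with x h1 h2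
    rw [← h1, hwf, h2]; rfl
  · have e1 : ∀ u : Lp ℝ 2 μ, ∫ x, u x ^ 2 ∂μ = inner ℝ u u := by
      intro u; rw [L2.inner_def]; simp [sq]
    have e2 : ∫ y, g y ^ 2 ∂ν = inner ℝ g g := by
      rw [L2.inner_def]; simp [sq]
    have e3 : ∫ y, g y * h y ∂ν = inner ℝ g (hh.toLp h) := by
      rw [L2.inner_def]
      apply integral_congr_ae
      filter_upwards [hh.coeFn_toLp] with y hy
      rw [hy]; simp [mul_comm]
    rw [e1, e2, e3, ← hf f, ← inner_add_right]
    congr 1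
    rw [hg]; abel

/-! ### Translation estimates -/

/-- The increment of a differentiable function is controlled by the `L²` norm of its derivative,
which need not be assumed finite. -/
lemma sq_increment_le {f : ℝ → ℝ} (hf : Differentiable ℝ f) :
    ENNReal.ofReal ((f 1 - f 0) ^ 2) ≤ ∫⁻ t in Icc (0:ℝ) 1, ENNReal.ofReal (deriv f t ^ 2) := by
  set μ := volume.restrict (Icc (0:ℝ) 1) with hμ
  have : IsProbabilityMeasure μ := ⟨by simp [hμ]⟩
  have hm : Measurable (deriv f) := measurable_deriv f
  by_cases htop : ∫⁻ t in Icc (0:ℝ) 1, ENNReal.ofReal (deriv f t ^ 2) = ⊤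
  · rw [htop]; exact le_top
  have hsq : Integrable (fun t => deriv f t ^ 2) μ := by
    refine ⟨(hm.pow_const 2).aestronglyMeasurable, ?_⟩
    rw [hasFiniteIntegral_iff_ofReal (Filter.Eventually.of_forall fun t => sq_nonneg _)]
    exact lt_top_iff_ne_top.2 htop
  have h2 : MemLp (deriv f) 2 μ := (memLp_two_iff_integrable_sq hm.aestronglyMeasurable).2 hsq
  have h1 : Integrable (deriv f) μ := h2.integrable (by norm_num)
  have hii : IntervalIntegrable (deriv f) volume 0 1 := by
    rw [intervalIntegrable_iff_integrableOn_Icc_of_le zero_le_one]; exact h1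
  have hftc := intervalIntegral.integral_eq_sub_of_hasDerivAt
    (fun x _ => (hf x).hasDerivAt) hii
  rw [intervalIntegral.integral_of_le zero_le_one, ← integral_Icc_eq_integral_Ioc] at hftc
  rw [← ofReal_integral_eq_lintegral_ofReal hsq (Filter.Eventually.of_forall fun t => sq_nonneg _)]
  apply ENNReal.ofReal_le_ofReal
  rw [← hftc]
  -- Jensen in the form of nonnegativity of the variance
  have h3 : 0 ≤ ∫ t, (deriv f t - ∫ s, deriv f s ∂μ) ^ 2 ∂μ := integral_nonneg fun t => sq_nonneg _
  set m := ∫ s, deriv f s ∂μ with hmdef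
  have h4 : ∫ t, (deriv f t - m) ^ 2 ∂μ = ∫ t, deriv f t ^ 2 ∂μ - m ^ 2 := by
    have : ∀ t, (deriv f t - m) ^ 2 = deriv f t ^ 2 - (2 * m * deriv f t - m ^ 2) := fun t => by ring
    simp_rw [this]
    have h5 : Integrable (fun t => 2 * m * deriv f t) μ := h1.const_mul _
    have h6 : Integrable (fun t => 2 * m * deriv f t - m ^ 2) μ := h5.sub (integrable_const _)
    rw [integral_sub hsq h6, integral_sub h5 (integrable_const _), integral_const_mul, ← hmdef]
    simp; ring
  linarith

/-- Scaling of Lebesgue measure under the affine map `x ↦ c x + b`. -/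
lemma lintegral_affine {n : ℕ} (F : EuclideanSpace ℝ (Fin n) → ENNReal) {c : ℝ} (hc : 0 < c)
    (b : EuclideanSpace ℝ (Fin n)) :
    ∫⁻ x, F (c • x + b) = ENNReal.ofReal ((c ^ n)⁻¹) * ∫⁻ x, F x := by
  have h1 : ∫⁻ x, F (c • x + b) = ∫⁻ x, F (x + b) ∂(Measure.map (c • ·) volume) := by
    rw [(measurableEmbedding_const_smul₀ hc.ne').lintegral_map]
  rw [h1, Measure.map_addHaar_smul volume hc.ne', lintegral_smul_measure,
    lintegral_add_right_eq_self]
  simp [abs_of_pos hc]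

lemma norm_gradient_eq {n : ℕ} (h : EuclideanSpace ℝ (Fin n) → ℝ) (x) :
    ‖gradient h x‖ = ‖fderiv ℝ h x‖ := by
  simp [gradient]

/-- The `L²` distance between `h` and its composition with `x ↦ x₀ + (1 - τ)(x - v - x₀)`. -/
lemma shift_estimate {n : ℕ} {Ω : Set (EuclideanSpace ℝ (Fin n))} (hΩ : MeasurableSet Ω)
    (hconv : Convex ℝ Ω) {x0 v : EuclideanSpace ℝ (Fin n)} {τ L : ℝ} (hτ : 0 < τ) (hτ1 : τ ≤ 1 / 2)
    (hφ : ∀ x ∈ Ω, x0 + (1 - τ) • (x - v - x0) ∈ Ω)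
    (hL : ∀ x ∈ Ω, ‖x0 + (1 - τ) • (x - v - x0) - x‖ ≤ L)
    {h : EuclideanSpace ℝ (Fin n) → ℝ} (hh : Differentiable ℝ h) :
    ∫⁻ x in Ω, ENNReal.ofReal ((h x - h (x0 + (1 - τ) • (x - v - x0))) ^ 2) ≤
      ENNReal.ofReal (L ^ 2 * 2 ^ n) * ∫⁻ x in Ω, ENNReal.ofReal (‖gradient h x‖ ^ 2) := by
  set ψ : EuclideanSpace ℝ (Fin n) → EuclideanSpace ℝ (Fin n) :=
    fun x => x0 + (1 - τ) • (x - v - x0) with hψ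
  set G : EuclideanSpace ℝ (Fin n) → ENNReal := fun x => ENNReal.ofReal (‖gradient h x‖ ^ 2) with hG
  have hGm : Measurable G := by
    simp only [hG, norm_gradient_eq]
    exact (((measurable_fderiv ℝ h).norm).pow_const 2).ennreal_ofReal
  have hψc : Continuous ψ := by simp only [hψ]; fun_prop
  have h1 : ∀ x ∈ Ω, ENNReal.ofReal ((h x - h (ψ x)) ^ 2) ≤
      ∫⁻ t in Icc (0:ℝ) 1, ENNReal.ofReal (L ^ 2) * G (x + t • (ψ x - x)) := by
    intro x hx
    have hd : ∀ t : ℝ, HasDerivAt (fun t : ℝ => h (x + t • (ψ x - x)))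
        (fderiv ℝ h (x + t • (ψ x - x)) (ψ x - x)) t := by
      intro t
      have e1 : HasDerivAt (fun t : ℝ => x + t • (ψ x - x)) (ψ x - x) t := by
        simpa using ((hasDerivAt_id t).smul_const (ψ x - x)).const_add x
      exact (hh _).hasFDerivAt.comp_hasDerivAt t e1
    have h2 := sq_increment_le (f := fun t : ℝ => h (x + t • (ψ x - x)))
      (fun t => (hd t).differentiableAt)
    simp only [one_smul, zero_smul, add_zero, add_sub_cancel] at h2
    rw [show (h x - h (ψ x)) ^ 2 = (h (ψ x) - h x) ^ 2 by ring]
    refine h2.trans (lintegral_mono fun t => ?_)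
    simp only [hG, (hd t).deriv]
    rw [← ENNReal.ofReal_mul (sq_nonneg L), norm_gradient_eq, ← mul_pow]
    apply ENNReal.ofReal_le_ofReal
    apply sq_le_sq.2
    have hL0 := (norm_nonneg _).trans (hL x hx)
    rw [abs_of_nonneg (by positivity : 0 ≤ L * ‖fderiv ℝ h (x + t • (ψ x - x))‖), mul_comm]
    rw [← Real.norm_eq_abs]
    refine ((fderiv ℝ h (x + t • (ψ x - x))).le_opNorm (ψ x - x)).trans ?_
    gcongr
    exact hL x hx
  have hjm : Measurable (Function.uncurry fun (x : EuclideanSpace ℝ (Fin n)) (t : ℝ) =>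
      ENNReal.ofReal (L ^ 2) * G (x + t • (ψ x - x))) := by
    apply Measurable.const_mul
    apply hGm.comp
    apply Continuous.measurable
    fun_prop
  have h3 : ∀ t ∈ Icc (0:ℝ) 1, ∫⁻ x in Ω, G (x + t • (ψ x - x)) ≤
      ENNReal.ofReal (2 ^ n) * ∫⁻ x in Ω, G x := by
    intro t ht
    have hc : 0 < 1 - t * τ := by nlinarith [ht.1, ht.2]
    have e : ∀ x, x + t • (ψ x - x) = (1 - t * τ) • x + t • (τ • x0 - (1 - τ) • v) := by
      intro x; simp only [hψ]; module
    rw [← lintegral_indicator hΩ, ← lintegral_indicator hΩ]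
    calc ∫⁻ x, Ω.indicator (fun x => G (x + t • (ψ x - x))) x
        ≤ ∫⁻ x, Ω.indicator G ((1 - t * τ) • x + t • (τ • x0 - (1 - τ) • v)) := by
          apply lintegral_mono
          intro x
          by_cases hx : x ∈ Ω
          · have hmem : x + t • (ψ x - x) ∈ Ω := hconv.add_smul_sub_mem hx (hφ x hx) ht
            simp only [← e]
            rw [indicator_of_mem hx, indicator_of_mem hmem]
          · rw [indicator_of_notMem hx]; exact zero_le
      _ = ENNReal.ofReal (((1 - t * τ) ^ n)⁻¹) * ∫⁻ x, Ω.indicator G x := lintegral_affine _ hc _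
      _ ≤ _ := by
          gcongr
          rw [← inv_pow]
          apply pow_le_pow_left₀ (by positivity)
          rw [inv_le_comm₀ hc (by norm_num)]
          nlinarith [ht.1, ht.2]
  calc ∫⁻ x in Ω, ENNReal.ofReal ((h x - h (ψ x)) ^ 2)
      ≤ ∫⁻ x in Ω, ∫⁻ t in Icc (0:ℝ) 1, ENNReal.ofReal (L ^ 2) * G (x + t • (ψ x - x)) :=
        setLIntegral_mono' hΩ h1
    _ = ∫⁻ t in Icc (0:ℝ) 1, ∫⁻ x in Ω, ENNReal.ofReal (L ^ 2) * G (x + t • (ψ x - x)) :=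
        lintegral_lintegral_swap hjm.aemeasurable
    _ ≤ ∫⁻ t in Icc (0:ℝ) 1, ENNReal.ofReal (L ^ 2) * (ENNReal.ofReal (2 ^ n) * ∫⁻ x in Ω, G x) := by
        apply setLIntegral_mono' measurableSet_Icc
        intro t ht
        rw [lintegral_const_mul' _ _ ENNReal.ofReal_ne_top]
        gcongr
        exact h3 t ht
    _ = _ := by
        rw [lintegral_const]
        simp [ENNReal.ofReal_mul, mul_assoc, sq_nonneg]

/-! ### Mollification on a convex set -/

/-- Cauchy–Schwarz for the averaged commutator: the pairing of `g` with the difference between `h`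
and its mollifications is controlled by a uniform bound for the translation error. -/
lemma averaged_error {n : ℕ} {Ω B : Set (EuclideanSpace ℝ (Fin n))} (hΩ : MeasurableSet Ω)
    {P : EuclideanSpace ℝ (Fin n) → ℝ} (hP : Measurable P) (hB : MeasurableSet B)
    (hP0 : ∀ v, 0 ≤ P v) (hPi : IntegrableOn P B)
    {Δ : EuclideanSpace ℝ (Fin n) → EuclideanSpace ℝ (Fin n) → ℝ}
    (hΔ : Measurable (Function.uncurry Δ)) {g S : EuclideanSpace ℝ (Fin n) → ℝ}
    (hgm : Measurable g) (hg : IntegrableOn (fun x => g x ^ 2) Ω) {δ : ℝ} (hδ0 : 0 ≤ δ)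
    (hδ : ∀ v ∈ B, ∫⁻ x in Ω, ENNReal.ofReal (Δ x v ^ 2) ≤ ENNReal.ofReal (δ ^ 2))
    (hS : ∀ x ∈ Ω, S x = ∫ v in B, P v * Δ x v) :
    |∫ x in Ω, g x * S x| ≤ (∫ v in B, P v) * (Real.sqrt (∫ x in Ω, g x ^ 2) * δ) := by
  have hI0 : 0 ≤ ∫ v in B, P v := integral_nonneg hP0
  rw [← ENNReal.ofReal_le_ofReal_iff (by positivity), ← Real.norm_eq_abs, ofReal_norm]
  have hsq : ∀ r : ℝ, ‖r‖ₑ ^ (2:ℝ) = ENNReal.ofReal (r ^ 2) := by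
    intro r
    rw [Real.enorm_eq_ofReal_abs, ENNReal.ofReal_rpow_of_nonneg (abs_nonneg _) (by norm_num)]
    norm_num
  have hg2 : (∫⁻ x in Ω, ‖g x‖ₑ ^ (2:ℝ)) ^ (1 / (2:ℝ)) =
      ENNReal.ofReal (Real.sqrt (∫ x in Ω, g x ^ 2)) := by
    simp_rw [hsq]
    rw [← ofReal_integral_eq_lintegral_ofReal hg (Filter.Eventually.of_forall fun x => sq_nonneg _),
      ENNReal.ofReal_rpow_of_nonneg (integral_nonneg fun x => sq_nonneg _) (by norm_num),
      Real.sqrt_eq_rpow]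
  calc ‖∫ x in Ω, g x * S x‖ₑ ≤ ∫⁻ x in Ω, ‖g x * S x‖ₑ := enorm_integral_le_lintegral_enorm _
    _ ≤ ∫⁻ x in Ω, ∫⁻ v in B, ‖P v‖ₑ * (‖g x‖ₑ * ‖Δ x v‖ₑ) := by
        apply setLIntegral_mono' hΩ
        intro x hx
        rw [enorm_mul, hS x hx]
        refine (mul_le_mul_right (enorm_integral_le_lintegral_enorm _) _).trans ?_
        rw [← lintegral_const_mul' _ _ enorm_ne_top]
        apply lintegral_mono
        intro v
        simp only [enorm_mul]
        rw [← mul_assoc, ← mul_assoc, mul_comm ‖g x‖ₑ]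
    _ = ∫⁻ v in B, ∫⁻ x in Ω, ‖P v‖ₑ * (‖g x‖ₑ * ‖Δ x v‖ₑ) := by
        apply lintegral_lintegral_swap
        apply Measurable.aemeasurable
        exact (hP.comp measurable_snd).enorm.mul ((hgm.comp measurable_fst).enorm.mul hΔ.enorm)
    _ ≤ ∫⁻ v in B, ‖P v‖ₑ * (ENNReal.ofReal (Real.sqrt (∫ x in Ω, g x ^ 2)) *
          ENNReal.ofReal δ) := by
        apply setLIntegral_mono' hB
        intro v hv
        rw [lintegral_const_mul' _ _ enorm_ne_top]
        gcongr
        have hΔv : Measurable (fun x => Δ x v) := hΔ.comp measurable_prodMk_right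
        refine (ENNReal.lintegral_mul_le_Lp_mul_Lq _ Real.HolderConjugate.two_two
          hgm.enorm.aemeasurable hΔv.enorm.aemeasurable).trans ?_
        rw [hg2]
        gcongr
        simp_rw [hsq]
        refine (ENNReal.rpow_le_rpow (hδ v hv) (by norm_num)).trans (le_of_eq ?_)
        rw [ENNReal.ofReal_rpow_of_nonneg (sq_nonneg _) (by norm_num), ← Real.sqrt_eq_rpow,
          Real.sqrt_sq hδ0]
    _ = _ := by
        rw [lintegral_mul_const' _ _ (by finiteness), ← ENNReal.ofReal_mul (Real.sqrt_nonneg _),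
          ENNReal.ofReal_mul hI0, ofReal_integral_eq_lintegral_ofReal hPi
            (Filter.Eventually.of_forall hP0)]
        congr 1
        apply lintegral_congr
        intro v
        rw [Real.enorm_eq_ofReal (hP0 v)]

/-- Mollification at scale `a = τ r₀` combined with a contraction of ratio `1 - τ` towards an
interior point, which by convexity keeps all arguments of `h` inside `Ω`: the pairing of `g` and
`h` is small if `g` has small local convolutions with `P`. -/
lemma pairing_bound {n : ℕ} {Ω : Set (EuclideanSpace ℝ (Fin n))} (hΩ : MeasurableSet Ω)
    (hΩb : volume Ω ≠ ⊤)
    (hconv : Convex ℝ Ω) {x0 : EuclideanSpace ℝ (Fin n)} {r0 D τ : ℝ} (hr0 : 0 < r0)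
    (hball : Metric.ball x0 r0 ⊆ Ω) (hD : ∀ x ∈ Ω, ‖x - x0‖ ≤ D) (hτ : 0 < τ) (hτ1 : τ ≤ 1 / 2)
    {P : EuclideanSpace ℝ (Fin n) → ℝ} (hP : Continuous P) (hP0 : ∀ v, 0 ≤ P v) {M : ℝ}
    (hPM : ∀ v, P v ≤ M) {h g : EuclideanSpace ℝ (Fin n) → ℝ} (hh : Differentiable ℝ h)
    (hh2 : IntegrableOn (fun x => h x ^ 2) Ω) (hG2 : IntegrableOn (fun x => ‖gradient h x‖ ^ 2) Ω)
    (hgm : Measurable g) (hg2 : IntegrableOn (fun x => g x ^ 2) Ω) {Θ : ℝ}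
    (hΘ : ∀ z, ‖z - x0‖ ≤ 2 * D →
      |∫ x in Ω, g x * (Metric.ball 0 (τ * r0)).indicator P (x - z)| ≤ Θ) :
    |∫ x in Ω, g x * h x| * (∫ v in Metric.ball 0 (τ * r0), P v) ≤
      (∫ v in Metric.ball 0 (τ * r0), P v) * (Real.sqrt (∫ x in Ω, g x ^ 2) *
        (τ * (D + r0) * Real.sqrt (2 ^ n * ∫ x in Ω, ‖gradient h x‖ ^ 2))) +
      Θ * (2 ^ n * ∫ x in Ω, |h x|) := by
  have : IsFiniteMeasure (volume.restrict Ω) := ⟨by simpa using hΩb.lt_top⟩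
  have hx0 : x0 ∈ Ω := hball (Metric.mem_ball_self hr0)
  have hD0 : 0 ≤ D := (norm_nonneg _).trans (hD x0 hx0)
  have hΘ0 : 0 ≤ Θ := (abs_nonneg _).trans (hΘ x0 (by simpa using hD0))
  set B := Metric.ball (0 : EuclideanSpace ℝ (Fin n)) (τ * r0) with hB
  have hBm : MeasurableSet B := measurableSet_ball
  set φ : EuclideanSpace ℝ (Fin n) → EuclideanSpace ℝ (Fin n) :=
    fun z => x0 + (1 - τ) • (z - x0) with hφ
  have hφc : Continuous φ := by simp only [hφ]; fun_prop
  have hmaps : ∀ x ∈ Ω, ∀ v ∈ B, φ (x - v) ∈ Ω := by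
    intro x hx v hv
    have e : φ (x - v) = (1 - τ) • x + τ • (x0 - ((1 - τ) / τ) • v) := by
      simp only [hφ, smul_sub, smul_smul]
      rw [mul_div_cancel₀ _ hτ.ne']; module
    rw [e]
    refine hconv hx (hball ?_) (by linarith) hτ.le (by ring)
    rw [Metric.mem_ball, dist_eq_norm, sub_sub_cancel_left, norm_neg, norm_smul,
      Real.norm_of_nonneg (div_nonneg (by linarith) hτ.le)]
    rw [hB, mem_ball_zero_iff] at hv
    calc (1 - τ) / τ * ‖v‖ ≤ 1 / τ * ‖v‖ := by gcongr; linarith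
      _ < 1 / τ * (τ * r0) := by gcongr
      _ = r0 := by field_simp
  have hdisp : ∀ x ∈ Ω, ∀ v ∈ B, ‖φ (x - v) - x‖ ≤ τ * (D + r0) := by
    intro x hx v hv
    have e : φ (x - v) - x = -(τ • (x - x0)) - (1 - τ) • v := by simp only [hφ]; module
    rw [hB, mem_ball_zero_iff] at hv
    rw [e]
    refine (norm_sub_le _ _).trans ?_
    rw [norm_neg, norm_smul, norm_smul, Real.norm_of_nonneg hτ.le,
      Real.norm_of_nonneg (by linarith : 0 ≤ 1 - τ)]
    have h1 := mul_le_mul_of_nonneg_left (hD x hx) hτ.le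
    have h2 : (1 - τ) * ‖v‖ ≤ 1 * ‖v‖ := by gcongr; linarith
    linarith
  have hhM : MemLp h 2 (volume.restrict Ω) :=
    (memLp_two_iff_integrable_sq hh.continuous.aestronglyMeasurable).2 hh2
  have hgM : MemLp g 2 (volume.restrict Ω) :=
    (memLp_two_iff_integrable_sq hgm.aestronglyMeasurable).2 hg2
  have hhi : IntegrableOn h Ω := hhM.integrable (by norm_num)
  have hgi : IntegrableOn g Ω := hgM.integrable (by norm_num)
  set hb := Ω.indicator h with hhb
  set gb := Ω.indicator g with hgb
  have hhbi : Integrable hb := hhi.integrable_indicator hΩ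
  have hgbi : Integrable gb := hgi.integrable_indicator hΩ
  have h1τ : (1 - τ) ≠ 0 := by linarith
  have hφe : ∀ z, φ z = (1 - τ) • z + τ • x0 := fun z => by simp only [hφ]; module
  have hhφ : Integrable (fun z => hb (φ z)) := by
    simp_rw [hφe]
    exact (hhbi.comp_add_right (τ • x0)).comp_smul h1τ
  have hhφ1 : ∫ z, |hb (φ z)| ≤ 2 ^ n * ∫ x in Ω, |h x| := by
    have e1 : ∫ z, |hb (φ z)| = ((1 - τ) ^ n)⁻¹ * ∫ x, |hb x| := by
      simp_rw [hφe]
      rw [Measure.integral_comp_smul volume (fun y => |hb (y + τ • x0)|) (1 - τ),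
        integral_add_right_eq_self (fun y => |hb y|)]
      rw [abs_of_nonneg (by have : 0 < 1 - τ := by linarith
                            positivity)]
      simp
    have e2 : ∫ x, |hb x| = ∫ x in Ω, |h x| := by
      rw [← integral_indicator hΩ]
      congr 1; ext x
      by_cases hx : x ∈ Ω <;> simp [hhb, hx]
    rw [e1, e2]
    gcongr
    rw [← inv_pow]
    apply pow_le_pow_left₀ (inv_nonneg.2 (by linarith))
    rw [inv_le_comm₀ (by linarith) (by norm_num)]
    linarith
  set PB := B.indicator P with hPB
  have hPBm : Measurable PB := hP.measurable.indicator hBm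
  have hPB1 : ∀ v, ‖PB v‖ ≤ M := by
    intro v
    have hM0 : 0 ≤ M := (hP0 v).trans (hPM v)
    by_cases hv : v ∈ B
    · rw [hPB, indicator_of_mem hv, Real.norm_of_nonneg (hP0 v)]; exact hPM v
    · rw [hPB, indicator_of_notMem hv, norm_zero]; exact hM0
  set S : EuclideanSpace ℝ (Fin n) → ℝ := fun x => ∫ z, PB (x - z) * hb (φ z) with hS
  have hPi : IntegrableOn P B := (hP.continuousOn.integrableOn_compact
    (isCompact_closedBall 0 (τ * r0))).mono_set Metric.ball_subset_closedBall
  have hjoint : Integrable (fun p : EuclideanSpace ℝ (Fin n) × EuclideanSpace ℝ (Fin n) =>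
      PB (p.1 - p.2) * (gb p.1 * hb (φ p.2))) (volume.prod volume) := by
    refine (hgbi.mul_prod hhφ).bdd_mul (c := M) ?_ (Filter.Eventually.of_forall fun p => hPB1 _)
    exact (hPBm.comp (measurable_fst.sub measurable_snd)).aestronglyMeasurable
  have hgS : ∫ x in Ω, g x * S x = ∫ z, hb (φ z) * ∫ x in Ω, g x * PB (x - z) := by
    have e1 : ∫ x in Ω, g x * S x = ∫ x, ∫ z, PB (x - z) * (gb x * hb (φ z)) := by
      rw [← integral_indicator hΩ]
      congr 1; ext x
      by_cases hx : x ∈ Ω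
      · rw [indicator_of_mem hx, hgb, indicator_of_mem hx, hS]
        simp only
        rw [← integral_const_mul]
        congr 1; ext z; ring
      · simp [hgb, hx]
    rw [e1, integral_integral_swap hjoint]
    congr 1; ext z
    rw [← integral_const_mul, ← integral_indicator hΩ]
    congr 1; ext x
    by_cases hx : x ∈ Ω
    · simp only [hgb, indicator_of_mem hx]; ring
    · simp [hgb, hx]
  have hgSb : |∫ x in Ω, g x * S x| ≤ Θ * (2 ^ n * ∫ x in Ω, |h x|) := by
    rw [hgS]
    refine abs_integral_le_integral_abs.trans ?_
    refine le_trans ?_ (mul_le_mul_of_nonneg_left hhφ1 hΘ0)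
    rw [← integral_const_mul]
    apply integral_mono_of_nonneg (Filter.Eventually.of_forall fun _ => abs_nonneg _)
      (hhφ.abs.const_mul Θ) (Filter.Eventually.of_forall fun z => ?_)
    change |_ * _| ≤ Θ * |hb (φ z)|
    rw [abs_mul, mul_comm]
    by_cases hz : φ z ∈ Ω
    · gcongr
      apply hΘ
      have h2 := hD _ hz
      simp only [hφ, add_sub_cancel_left, norm_smul] at h2
      rw [Real.norm_of_nonneg (by linarith : 0 ≤ 1 - τ)] at h2
      nlinarith [norm_nonneg (z - x0)]
    · simp [hhb, hz]
  set Z := ∫ v in B, P v with hZ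
  have hdiff : ∀ x ∈ Ω, h x * Z - S x = ∫ v in B, P v * (h x - h (φ (x - v))) := by
    intro x hx
    have e1 : S x = ∫ v in B, P v * h (φ (x - v)) := by
      simp only [hS]
      rw [← integral_sub_left_eq_self _ volume x, ← integral_indicator hBm]
      congr 1; ext v
      rw [sub_sub_cancel]
      by_cases hv : v ∈ B
      · simp only [hPB, hhb, indicator_of_mem hv, indicator_of_mem (hmaps x hx v hv)]
      · simp [hPB, hv]
    have hc : IntegrableOn (fun v => P v * h (φ (x - v))) B :=
      (Continuous.continuousOn (hP.mul (hh.continuous.comp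
        (hφc.comp (continuous_const.sub continuous_id))))).integrableOn_compact
        (isCompact_closedBall 0 (τ * r0)) |>.mono_set Metric.ball_subset_closedBall
    rw [e1, hZ, mul_comm, ← integral_mul_const, ← integral_sub (hPi.mul_const _) hc]
    congr 1; ext v; ring
  have hshift := averaged_error (S := fun x => h x * Z - S x)
    (Δ := fun x v => h x - h (φ (x - v))) hΩ hP.measurable hBm hP0 hPi ?_ hgm hg2
    (δ := τ * (D + r0) * Real.sqrt (2 ^ n * ∫ x in Ω, ‖gradient h x‖ ^ 2)) (by positivity) ?_ hdiff
  · have hgh : IntegrableOn (fun x => g x * h x) Ω := hgM.integrable_mul hhM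
    have hgSi : IntegrableOn (fun x => g x * S x) Ω := by
      rw [← integrable_indicator_iff hΩ]
      refine hjoint.integral_prod_left.congr (Filter.Eventually.of_forall fun x => ?_)
      by_cases hx : x ∈ Ω
      · simp only [hgb, indicator_of_mem hx, hS]
        rw [← integral_const_mul]
        congr 1; ext z; ring
      · simp [hgb, hx]
    have e : ∫ x in Ω, g x * (h x * Z - S x) = (∫ x in Ω, g x * h x) * Z - ∫ x in Ω, g x * S x := by
      rw [← integral_mul_const, ← integral_sub (hgh.mul_const _) hgSi]
      congr 1; ext x; ring
    rw [e] at hshift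
    have hZ0 : 0 ≤ Z := integral_nonneg hP0
    have := abs_sub_abs_le_abs_sub ((∫ x in Ω, g x * h x) * Z) (∫ x in Ω, g x * S x)
    rw [abs_mul, abs_of_nonneg hZ0] at this
    linarith
  · apply Continuous.measurable
    have := hh.continuous
    change Continuous fun p : EuclideanSpace ℝ (Fin n) × EuclideanSpace ℝ (Fin n) =>
      h p.1 - h (φ (p.1 - p.2))
    fun_prop
  · intro v hv
    refine (shift_estimate hΩ hconv hτ hτ1 (fun x hx => hmaps x hx v hv)
      (fun x hx => hdisp x hx v hv) hh).trans (le_of_eq ?_)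
    rw [← ofReal_integral_eq_lintegral_ofReal hG2
      (Filter.Eventually.of_forall fun x => sq_nonneg _), ← ENNReal.ofReal_mul (by positivity)]
    have e := Real.sq_sqrt (mul_nonneg (by positivity : (0:ℝ) ≤ 2 ^ n)
      (integral_nonneg fun x => sq_nonneg ‖gradient h x‖ : 0 ≤ ∫ x in Ω, ‖gradient h x‖ ^ 2))
    rw [mul_pow (τ * (D + r0)), e]
    congr 1; ring

/-! ### Local convolutions with the positive kernel -/

lemma HH_real {n : ℕ} (Ω : Set (EuclideanSpace ℝ (Fin n))) (g : EuclideanSpace ℝ (Fin n) → ℝ)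
    (j : Fin n) (k : ℕ) (z : EuclideanSpace ℝ (Fin n)) {s : ℝ} (hs : 0 < s) :
    HH Ω g j k (rc z) (s : ℂ) =
      ((∫ x in Ω, g x * ((x j - z j) * (‖x - z‖ ^ 2 + s) ^ (-km n k)) : ℝ) : ℂ) := by
  rw [HH, ← integral_complex_ofReal]
  congr 1; ext x
  rw [kk, kq_rc, ← Complex.ofReal_add, ← Complex.ofReal_neg,
    ← Complex.ofReal_cpow (by positivity), rc]
  push_cast; rfl

/-- At `k = 0`, `w = 0` and a real point, `HH` is the dual Riesz potential of `g`. -/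
lemma HH_real_zero {n : ℕ} (Ω : Set (EuclideanSpace ℝ (Fin n)))
    (g : EuclideanSpace ℝ (Fin n) → ℝ) (j : Fin n) (y : EuclideanSpace ℝ (Fin n)) :
    HH Ω g j 0 (rc y) 0 =
      ((∫ x in Ω, g x * ((x j - y j) / ‖x - y‖ ^ (n + 1)) : ℝ) : ℂ) := by
  rw [HH, ← integral_complex_ofReal]
  congr 1; ext x
  rw [kk, kq_rc, add_zero, ← Complex.ofReal_neg, ← Complex.ofReal_cpow (by positivity), rc]
  have e : (‖x - y‖ ^ 2) ^ (-km n 0) = (‖x - y‖ ^ (n + 1))⁻¹ := by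
    rw [← Real.rpow_natCast ‖x - y‖ 2, ← Real.rpow_mul (norm_nonneg _),
      ← Real.rpow_natCast ‖x - y‖ (n + 1), ← Real.rpow_neg (norm_nonneg _)]
    congr 1; unfold km; push_cast; ring
  rw [e, div_eq_mul_inv]
  push_cast; rfl

/-- The truncated convolutions of `g` with the positive kernel `(|v|² + S)^{-m}`, whose `j`-th
partial derivative is a multiple of the kernel of `HH`: integrate the derivative along the direction `e_j` up to
a point so far away that the kernel is negligible. -/
lemma theta_bound {n : ℕ} {Ω : Set (EuclideanSpace ℝ (Fin n))} (hΩ : MeasurableSet Ω)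
    {x0 : EuclideanSpace ℝ (Fin n)} {D T a S β m : ℝ} (hD : ∀ x ∈ Ω, ‖x - x0‖ ≤ D)
    (hD0 : 0 ≤ D) (ha : 0 ≤ a) (hT : a + 3 * D ≤ T) (hS : 0 < S) (j : Fin n) (k : ℕ)
    (hm : m = km n k - 1) (hm0 : 0 < m)
    {g : EuclideanSpace ℝ (Fin n) → ℝ} (hg : IntegrableOn g Ω) (hg1 : ∫ x in Ω, |g x| ≤ 1)
    (hH : ∀ z, ‖z - x0‖ ≤ 2 * D + T → ‖HH Ω g j k (rc z) (S : ℝ)‖ ≤ β)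
    {z : EuclideanSpace ℝ (Fin n)} (hz : ‖z - x0‖ ≤ 2 * D) :
    |∫ x in Ω, g x * (Metric.ball 0 a).indicator (fun v => (‖v‖ ^ 2 + S) ^ (-m)) (x - z)| ≤
      2 * (a ^ 2 + S) ^ (-m) + 2 * m * T * β := by
  have hT0 : 0 ≤ T := by linarith
  set e : EuclideanSpace ℝ (Fin n) := EuclideanSpace.single j (1:ℝ) with he
  have hen : ‖e‖ = 1 := by simp [he]
  set P : EuclideanSpace ℝ (Fin n) → ℝ := fun v => (‖v‖ ^ 2 + S) ^ (-m) with hP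
  have hPc : Continuous P := by
    simp only [hP]
    apply Continuous.rpow_const (by fun_prop)
    intro v; left; positivity
  have hP0 : ∀ v, 0 ≤ P v := fun v => by simp only [hP]; positivity
  have hPM : ∀ v, ‖P v‖ ≤ S ^ (-m) := fun v => by
    rw [Real.norm_of_nonneg (hP0 v)]
    apply Real.rpow_le_rpow_of_nonpos hS (by nlinarith [sq_nonneg ‖v‖]) (by linarith)
  have hPfar : ∀ v, a ≤ ‖v‖ → P v ≤ (a ^ 2 + S) ^ (-m) := fun v hv => by
    apply Real.rpow_le_rpow_of_nonpos (by positivity) _ (by linarith)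
    gcongr
  -- a convolution with a kernel that is uniformly small
  have hsmall : ∀ Q : EuclideanSpace ℝ (Fin n) → ℝ, (∀ x ∈ Ω, |Q x| ≤ (a ^ 2 + S) ^ (-m)) →
      |∫ x in Ω, g x * Q x| ≤ (a ^ 2 + S) ^ (-m) := by
    intro Q hQ
    calc |∫ x in Ω, g x * Q x| ≤ ∫ x in Ω, |g x * Q x| := abs_integral_le_integral_abs
      _ ≤ ∫ x in Ω, |g x| * (a ^ 2 + S) ^ (-m) := by
        apply integral_mono_of_nonneg (Filter.Eventually.of_forall fun _ => abs_nonneg _)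
          (hg.abs.mul_const _)
        filter_upwards [ae_restrict_mem hΩ] with x hx
        rw [abs_mul]
        exact mul_le_mul_of_nonneg_left (hQ x hx) (abs_nonneg _)
      _ = (∫ x in Ω, |g x|) * (a ^ 2 + S) ^ (-m) := integral_mul_const _ _
      _ ≤ 1 * (a ^ 2 + S) ^ (-m) := by gcongr
      _ = _ := one_mul _
  set F : ℝ → ℝ := fun t => ∫ x in Ω, g x * P (x - z - t • e) with hF
  have hgP : ∀ t : ℝ, IntegrableOn (fun x => g x * P (x - z - t • e)) Ω := by
    intro t
    have h1 := hg.bdd_mul (c := S ^ (-m)) (f := fun x => P (x - z - t • e))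
      (hPc.comp (by fun_prop : Continuous fun x => x - z - t • e)).aestronglyMeasurable
      (Filter.Eventually.of_forall fun x => hPM _)
    exact h1.congr (Filter.Eventually.of_forall fun x => mul_comm _ _)
  have hsq : ∀ (u : EuclideanSpace ℝ (Fin n)) (t : ℝ),
      ‖u - t • e‖ ^ 2 = ‖u‖ ^ 2 - 2 * t * u j + t ^ 2 := by
    intro u t
    rw [norm_sub_sq_real, inner_smul_right, norm_smul, hen]
    have : inner ℝ u e = u j := by rw [he, EuclideanSpace.inner_single_right]; simp
    rw [this, Real.norm_eq_abs, mul_one, sq_abs]; ring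
  have hcoord : ∀ (u : EuclideanSpace ℝ (Fin n)) (t : ℝ), (u - t • e) j = u j - t := by
    intro u t; simp [he]
  have hPd : ∀ (u : EuclideanSpace ℝ (Fin n)) (t : ℝ), HasDerivAt (fun t : ℝ => P (u - t • e))
      (2 * m * ((u - t • e) j * (‖u - t • e‖ ^ 2 + S) ^ (-km n k))) t := by
    intro u t
    have h1 : HasDerivAt (fun t : ℝ => ‖u‖ ^ 2 - 2 * t * u j + t ^ 2 + S) (-2 * u j + 2 * t) t := by
      have a1 := ((hasDerivAt_id t).const_mul (2:ℝ)).mul_const (u j)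
      have a2 := ((a1.const_sub (‖u‖ ^ 2)).add (hasDerivAt_pow 2 t)).add_const S
      exact a2.congr_deriv (by simp)
    have hpos : 0 < ‖u‖ ^ 2 - 2 * t * u j + t ^ 2 + S := by rw [← hsq]; positivity
    have h2 := h1.rpow_const (p := -m) (Or.inl hpos.ne')
    simp only [hP, hsq, hcoord]
    convert h2 using 1
    rw [show -m - 1 = -km n k by rw [hm]; ring]
    ring
  have hFd : ∀ t ∈ Icc (0:ℝ) T, HasDerivAt F
      (∫ x in Ω, g x * (2 * m * ((x - z - t • e) j *
        (‖x - z - t • e‖ ^ 2 + S) ^ (-km n k)))) t := by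
    intro t ht
    have hkm := km_pos n k
    set K := 3 * D + T + 1 with hK
    refine (hasDerivAt_integral_of_dominated_loc_of_deriv_le (μ := volume.restrict Ω)
      (F := fun (t : ℝ) x => g x * P (x - z - t • e))
      (F' := fun (t : ℝ) x => g x * (2 * m * ((x - z - t • e) j *
        (‖x - z - t • e‖ ^ 2 + S) ^ (-km n k))))
      (bound := fun x => |g x| * (2 * m * (K * S ^ (-km n k))))
      (Metric.ball_mem_nhds t one_pos) (Filter.Eventually.of_forall fun t => (hgP t).1) (hgP t)
      ?_ ?_ (hg.abs.mul_const _) ?_).2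
    · apply hg.1.mul
      apply Continuous.aestronglyMeasurable
      apply Continuous.mul continuous_const
      apply Continuous.mul (by fun_prop)
      apply Continuous.rpow_const (by fun_prop)
      intro v; left; positivity
    · filter_upwards [ae_restrict_mem hΩ] with x hx s hs
      rw [Real.norm_eq_abs, abs_mul, abs_mul, abs_of_pos (by positivity : 0 < 2 * m), abs_mul]
      have h1 : |(x - z - s • e) j| ≤ K := by
        refine (abs_coord_le _ j).trans ?_
        have e1 : x - z - s • e = (x - x0) - (z - x0) - s • e := by abel
        rw [Metric.mem_ball, Real.dist_eq] at hs
        have h2 : |s| ≤ T + 1 := by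
          have := abs_sub_abs_le_abs_sub s t
          rw [abs_of_nonneg ht.1] at this
          linarith [ht.2]
        calc ‖x - z - s • e‖ ≤ ‖x - x0‖ + ‖z - x0‖ + ‖s • e‖ := by
              rw [e1]
              exact (norm_sub_le _ _).trans (by gcongr; exact norm_sub_le _ _)
          _ ≤ D + 2 * D + (T + 1) := by
              rw [norm_smul, hen, mul_one, Real.norm_eq_abs]
              have := hD x hx
              gcongr
          _ = K := by rw [hK]; ring
      have h2 : |(‖x - z - s • e‖ ^ 2 + S) ^ (-km n k)| ≤ S ^ (-km n k) := by
        rw [abs_of_nonneg (by positivity)]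
        apply Real.rpow_le_rpow_of_nonpos hS (by nlinarith [sq_nonneg ‖x - z - s • e‖])
          (by linarith)
      have hK0 : 0 ≤ K := (abs_nonneg _).trans h1
      gcongr
    · exact Filter.Eventually.of_forall fun x s hs => (hPd (x - z) s).const_mul (g x)
  have hderiv : ∀ t ∈ Icc (0:ℝ) T, ‖∫ x in Ω, g x * (2 * m * ((x - z - t • e) j *
        (‖x - z - t • e‖ ^ 2 + S) ^ (-km n k)))‖ ≤ 2 * m * β := by
    intro t ht
    have e1 : ∫ x in Ω, g x * (2 * m * ((x - z - t • e) j *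
        (‖x - z - t • e‖ ^ 2 + S) ^ (-km n k))) = 2 * m * ∫ x in Ω, g x *
        ((x j - (z + t • e) j) * (‖x - (z + t • e)‖ ^ 2 + S) ^ (-km n k)) := by
      rw [← integral_const_mul]
      congr 1; ext x
      rw [sub_sub, PiLp.sub_apply]; ring
    rw [e1, norm_mul, Real.norm_of_nonneg (by positivity : 0 ≤ 2 * m)]
    gcongr
    have h1 := hH (z + t • e) (by
      calc ‖z + t • e - x0‖ = ‖(z - x0) + t • e‖ := by congr 1; abel
        _ ≤ ‖z - x0‖ + ‖t • e‖ := norm_add_le _ _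
        _ ≤ 2 * D + T := by
          rw [norm_smul, hen, mul_one, Real.norm_of_nonneg ht.1]
          exact add_le_add hz ht.2)
    rw [HH_real Ω g j k _ hS, Complex.norm_real] at h1
    exact h1
  have hmv : ‖F T - F 0‖ ≤ 2 * m * β * ‖T - 0‖ :=
    (convex_Icc (0:ℝ) T).norm_image_sub_le_of_norm_hasDerivWithin_le
      (fun t ht => (hFd t ht).hasDerivWithinAt) hderiv (left_mem_Icc.2 hT0) (right_mem_Icc.2 hT0)
  rw [sub_zero, Real.norm_of_nonneg hT0, Real.norm_eq_abs] at hmv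
  have hFT : |F T| ≤ (a ^ 2 + S) ^ (-m) := by
    apply hsmall
    intro x hx
    rw [abs_of_nonneg (hP0 _)]
    apply hPfar
    have e1 : T • e = -(x - z - T • e) + ((x - x0) - (z - x0)) := by abel
    have h1 : ‖T • e‖ ≤ ‖x - z - T • e‖ + (‖x - x0‖ + ‖z - x0‖) := by
      rw [e1]
      refine (norm_add_le _ _).trans ?_
      rw [norm_neg, ← e1]
      gcongr
      exact norm_sub_le _ _
    rw [norm_smul, hen, mul_one, Real.norm_of_nonneg hT0] at h1
    linarith [hD x hx]
  have hsplit : ∫ x in Ω, g x * (Metric.ball 0 a).indicator P (x - z) =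
      F 0 - ∫ x in Ω, g x * (Metric.ball 0 a)ᶜ.indicator P (x - z) := by
    have hi : IntegrableOn (fun x => g x * (Metric.ball 0 a)ᶜ.indicator P (x - z)) Ω := by
      have h1 := hg.bdd_mul (c := S ^ (-m)) (f := fun x => (Metric.ball 0 a)ᶜ.indicator P (x - z))
        (((hPc.measurable.indicator measurableSet_ball.compl).comp
          (measurable_id.sub_const z)).aestronglyMeasurable)
        (Filter.Eventually.of_forall fun x => (norm_indicator_le_norm_self _ _).trans (hPM _))
      exact h1.congr (Filter.Eventually.of_forall fun x => mul_comm _ _)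
    rw [hF]
    simp only
    rw [← integral_sub (hgP 0) hi]
    congr 1; ext x
    rw [zero_smul, sub_zero, ← mul_sub]
    congr 1
    rw [indicator_compl]; simp
  have hcompl : |∫ x in Ω, g x * (Metric.ball 0 a)ᶜ.indicator P (x - z)| ≤ (a ^ 2 + S) ^ (-m) := by
    apply hsmall
    intro x _
    by_cases hx : x - z ∈ Metric.ball (0 : EuclideanSpace ℝ (Fin n)) a
    · rw [indicator_of_notMem (by simpa using hx), abs_zero]; positivity
    · rw [indicator_of_mem hx, abs_of_nonneg (hP0 _)]
      apply hPfar
      rw [mem_ball_zero_iff] at hx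
      linarith
  rw [hsplit]
  rw [abs_le] at *
  constructor <;> nlinarith [hmv.1, hmv.2, hFT.1, hFT.2, hcompl.1, hcompl.2]

/-! ### The regularised control and the choice of parameters -/

/-- The regularised control `f` for the truncated Riesz transform and its residual `g`. The dual
potential of `g` on `Ω₁` is a multiple of `f`, and `g` pairs with `h` to the minimal value of the
regularised functional. -/
lemma riesz_tikhonov {n : ℕ} {Ω₁ Ω₂ : Set (EuclideanSpace ℝ (Fin n))} (hΩ₁ : MeasurableSet Ω₁)
    (hΩ₂ : MeasurableSet Ω₂) (hV₁ : volume Ω₁ ≠ ⊤) (hV₂ : volume Ω₂ ≠ ⊤) (j : Fin n) {d : ℝ}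
    (hd : 0 < d) (hsep : ∀ x ∈ Ω₂, ∀ y ∈ Ω₁, d ≤ ‖x - y‖)
    {h : EuclideanSpace ℝ (Fin n) → ℝ} (hm : Measurable h)
    (hh : IntegrableOn (fun x => h x ^ 2) Ω₂) {τ : ℝ} (hτ : 0 < τ) :
    ∃ f g : EuclideanSpace ℝ (Fin n) → ℝ, Measurable f ∧ Measurable g ∧
      IntegrableOn (fun y => f y ^ 2) Ω₁ ∧ IntegrableOn (fun x => g x ^ 2) Ω₂ ∧
      (∀ᵐ x ∂volume.restrict Ω₂, g x = h x - truncRiesz n Ω₁ j f x) ∧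
      (∀ᵐ y ∂volume.restrict Ω₁,
        ∫ x in Ω₂, g x * ((x j - y j) / ‖x - y‖ ^ (n + 1)) = τ * f y) ∧
      ∫ x in Ω₂, g x * h x = (∫ x in Ω₂, g x ^ 2) + τ * ∫ y in Ω₁, f y ^ 2 := by
  have : IsFiniteMeasure (volume.restrict Ω₁) := ⟨by simpa using hV₁.lt_top⟩
  have : IsFiniteMeasure (volume.restrict Ω₂) := ⟨by simpa using hV₂.lt_top⟩
  -- the kernel is modified near the diagonal, away from `Ω₂ × Ω₁`, to make it bounded
  set K : EuclideanSpace ℝ (Fin n) → EuclideanSpace ℝ (Fin n) → ℝ :=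
    fun x y => (x j - y j) / max ‖x - y‖ d ^ (n + 1) with hK
  have hKm : Measurable (Function.uncurry K) := by
    apply Continuous.measurable
    change Continuous fun p : EuclideanSpace ℝ (Fin n) × EuclideanSpace ℝ (Fin n) =>
      (p.1 j - p.2 j) / max ‖p.1 - p.2‖ d ^ (n + 1)
    apply Continuous.div (by fun_prop) (by fun_prop)
    intro p
    have : 0 < max ‖p.1 - p.2‖ d := lt_max_of_lt_right hd
    positivity
  have hKb : ∀ x y, |K x y| ≤ (d ^ n)⁻¹ := by
    intro x y
    have hpos : 0 < max ‖x - y‖ d := lt_max_of_lt_right hd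
    have h1 : |x j - y j| ≤ max ‖x - y‖ d :=
      (abs_coord_le (x - y) j).trans (le_max_left _ _)
    simp only [hK]
    rw [abs_div, abs_of_pos (pow_pos hpos _), div_le_iff₀ (pow_pos hpos _), pow_succ, ← mul_assoc]
    refine h1.trans (le_mul_of_one_le_left hpos.le ?_)
    rw [inv_mul_eq_div, one_le_div (by positivity)]
    exact pow_le_pow_left₀ hd.le (le_max_right _ _) n
  have hKe : ∀ x ∈ Ω₂, ∀ y ∈ Ω₁, K x y = (x j - y j) / ‖x - y‖ ^ (n + 1) := by
    intro x hx y hy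
    simp only [hK]
    rw [max_eq_left (hsep x hx y hy)]
  obtain ⟨f, hf, hf2, g, hg, hg2, h1, h2, h3⟩ := tikhonov (volume.restrict Ω₁)
    (volume.restrict Ω₂) hKm hKb ((memLp_two_iff_integrable_sq hm.aestronglyMeasurable).2 hh) hτ
  refine ⟨f, g, hf, hg, (memLp_two_iff_integrable_sq hf.aestronglyMeasurable).1 hf2,
    (memLp_two_iff_integrable_sq hg.aestronglyMeasurable).1 hg2, ?_, ?_, h3⟩
  · filter_upwards [h1, ae_restrict_mem hΩ₂] with x hx hxm
    rw [hx, truncRiesz]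
    congr 1
    apply setIntegral_congr_fun hΩ₁
    intro y hy
    simp only [hKe x hxm y hy]; ring
  · filter_upwards [h2, ae_restrict_mem hΩ₁] with y hy hym
    rw [← hy]
    apply setIntegral_congr_fun hΩ₂
    intro x hx
    simp only [hKe x hx y hym]

/-- The choice of the order `k` of the kernel and of the smallness `η` of the dual potential in
terms of the frequency `Q = ‖h‖_{H¹} / ε`. -/
lemma parameters (n : ℕ) {K V B c θ : ℝ} (hK : 0 < K) (hV : 0 < V) (hB : 1 ≤ B) (hc : 0 < c)
    (hθ : 0 < θ) : ∃ C : ℝ, 1 < C ∧ ∀ Q : ℝ, 1 ≤ Q → ∃ (k : ℕ) (η : ℝ), 0 < η ∧ η ≤ 1 ∧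
      K * V * (2 * K * Q) ^ n * Q ^ 2 *
        (Real.exp (-(c * (1 / (2 * K * Q)) ^ 2 * k)) + B ^ (k + 1) * η ^ θ) ≤ 1 / 2 ∧
      (Real.sqrt V)⁻¹ * η⁻¹ ≤ Real.exp (C * (1 + Q ^ 3)) := by
  -- the factorial comes from `Q ^ (n + 2) ≤ (n + 2)! * exp Q`, which absorbs the powers of `Q`
  set W := K * V * (2 * K) ^ n * (n + 2).factorial with hW
  have hW0 : 0 < W := by positivity
  set C4 := 4 * K ^ 2 / c * (1 + 4 * W) with hC4
  have hC40 : 0 < C4 := by positivity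
  set C5 := (4 * W + 1 + (C4 + 2) * B) / θ with hC5
  have hC50 : 0 < C5 := by positivity
  refine ⟨(Real.sqrt V)⁻¹ + C5 + 2, by
    have : 0 ≤ (Real.sqrt V)⁻¹ := by positivity
    linarith, fun Q hQ => ?_⟩
  have hQ0 : 0 < Q := by linarith
  have hQ3 : 1 ≤ Q ^ 3 := one_le_pow₀ hQ
  have hQQ3 : Q ≤ Q ^ 3 := le_self_pow₀ hQ (by norm_num)
  have hWe : W ≤ 1 / 4 * Real.exp (4 * W) := by linarith [Real.add_one_le_exp (4 * W)]
  have hpre : K * V * (2 * K * Q) ^ n * Q ^ 2 ≤ W * Real.exp Q := by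
    have h1 := Real.pow_div_factorial_le_exp Q hQ0.le (n + 2)
    rw [div_le_iff₀ (by positivity)] at h1
    calc K * V * (2 * K * Q) ^ n * Q ^ 2 = K * V * (2 * K) ^ n * Q ^ (n + 2) := by
          rw [mul_pow, pow_add]; ring
      _ ≤ K * V * (2 * K) ^ n * (Real.exp Q * (n + 2).factorial) := by gcongr
      _ = W * Real.exp Q := by rw [hW]; ring
  set k := ⌈C4 * Q ^ 3⌉₊ with hk
  have hk1 : C4 * Q ^ 3 ≤ k := Nat.le_ceil _
  have hk2 : (k : ℝ) + 1 ≤ (C4 + 2) * Q ^ 3 := by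
    have := (Nat.ceil_lt_add_one (by positivity : 0 ≤ C4 * Q ^ 3)).le
    rw [← hk] at this
    nlinarith
  refine ⟨k, Real.exp (-(C5 * Q ^ 3)), Real.exp_pos _, ?_, ?_, ?_⟩
  · rw [Real.exp_le_one_iff]
    have : 0 < C5 * Q ^ 3 := by positivity
    linarith
  · have t1 : W * Real.exp Q * Real.exp (-(c * (1 / (2 * K * Q)) ^ 2 * k)) ≤ 1 / 4 := by
      have e1 : Q + 4 * W ≤ c * (1 / (2 * K * Q)) ^ 2 * k := by
        calc Q + 4 * W ≤ Q * (1 + 4 * W) := by nlinarith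
          _ = c * (1 / (2 * K * Q)) ^ 2 * (C4 * Q ^ 3) := by
            rw [hC4]; field_simp
            try ring
          _ ≤ _ := by gcongr
      calc W * Real.exp Q * Real.exp (-(c * (1 / (2 * K * Q)) ^ 2 * k))
          ≤ 1 / 4 * Real.exp (4 * W) * Real.exp Q * Real.exp (-(Q + 4 * W)) := by gcongr
        _ = 1 / 4 := by
          rw [mul_assoc, mul_assoc, ← Real.exp_add, ← Real.exp_add]
          rw [show 4 * W + (Q + -(Q + 4 * W)) = 0 by ring]; simp
    have t2 : W * Real.exp Q * (B ^ (k + 1) * Real.exp (-(C5 * Q ^ 3)) ^ θ) ≤ 1 / 4 := by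
      have e1 : B ^ (k + 1) ≤ Real.exp ((C4 + 2) * Q ^ 3 * B) := by
        calc B ^ (k + 1) ≤ Real.exp B ^ (k + 1) := by
              gcongr; linarith [Real.add_one_le_exp B]
          _ = Real.exp ((k + 1 : ℕ) * B) := (Real.exp_nat_mul _ _).symm
          _ ≤ _ := by
            gcongr; push_cast; exact hk2
      have e2 : Real.exp (-(C5 * Q ^ 3)) ^ θ = Real.exp (-((4 * W + 1 + (C4 + 2) * B) * Q ^ 3)) := by
        rw [← Real.exp_mul, hC5]; congr 1; field_simp
      calc W * Real.exp Q * (B ^ (k + 1) * Real.exp (-(C5 * Q ^ 3)) ^ θ)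
          ≤ 1 / 4 * Real.exp (4 * W * Q ^ 3) * Real.exp (Q ^ 3) * (Real.exp ((C4 + 2) * Q ^ 3 * B) *
              Real.exp (-((4 * W + 1 + (C4 + 2) * B) * Q ^ 3))) := by
            rw [e2]
            have : W ≤ 1 / 4 * Real.exp (4 * W * Q ^ 3) := by
              exact hWe.trans (mul_le_mul_of_nonneg_left
                (Real.exp_le_exp.2 (by nlinarith : 4 * W ≤ 4 * W * Q ^ 3)) (by norm_num))
            gcongr
        _ = 1 / 4 := by
          rw [mul_assoc, mul_assoc, ← Real.exp_add, ← Real.exp_add, ← Real.exp_add]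
          rw [show 4 * W * Q ^ 3 + (Q ^ 3 + ((C4 + 2) * Q ^ 3 * B +
            -((4 * W + 1 + (C4 + 2) * B) * Q ^ 3))) = 0 by ring]; simp
    refine (mul_le_mul_of_nonneg_right hpre (by positivity)).trans ?_
    rw [mul_add]; linarith
  · rw [← Real.exp_neg, neg_neg]
    have hs : 0 ≤ (Real.sqrt V)⁻¹ := by positivity
    calc (Real.sqrt V)⁻¹ * Real.exp (C5 * Q ^ 3)
        ≤ Real.exp ((Real.sqrt V)⁻¹) * Real.exp (C5 * Q ^ 3) := by
          gcongr; linarith [Real.add_one_le_exp (Real.sqrt V)⁻¹]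
      _ = Real.exp ((Real.sqrt V)⁻¹ + C5 * Q ^ 3) := (Real.exp_add _ _).symm
      _ ≤ _ := by
          gcongr
          nlinarith

/-! ### The dual estimate -/

/-- The mass of the kernel on the ball of radius `τ r₀`, bounded below by its mass on half that ball. -/
lemma mass_lower {n : ℕ} (hn : 1 ≤ n) {r0 τ S m : ℝ} (hr0 : 0 < r0) (hτ : 0 < τ) (hS : 0 < S)
    (hm : 0 < m) :
    τ ^ n * ((r0 / 2) ^ n * volume.real (Metric.ball (0 : EuclideanSpace ℝ (Fin n)) 1)) *
      ((τ * r0) ^ 2 / 4 + S) ^ (-m) ≤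
      ∫ v in Metric.ball (0 : EuclideanSpace ℝ (Fin n)) (τ * r0), (‖v‖ ^ 2 + S) ^ (-m) := by
  have : Nonempty (Fin n) := ⟨⟨0, hn⟩⟩
  have hP : Continuous fun v : EuclideanSpace ℝ (Fin n) => (‖v‖ ^ 2 + S) ^ (-m) := by
    apply Continuous.rpow_const (by fun_prop)
    intro v; left; positivity
  have hi : ∀ r, IntegrableOn (fun v : EuclideanSpace ℝ (Fin n) => (‖v‖ ^ 2 + S) ^ (-m))
      (Metric.ball 0 r) := fun r =>
    (hP.continuousOn.integrableOn_compact (isCompact_closedBall 0 r)).mono_set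
      Metric.ball_subset_closedBall
  have hv : volume.real (Metric.ball (0 : EuclideanSpace ℝ (Fin n)) (τ * r0 / 2)) =
      τ ^ n * ((r0 / 2) ^ n * volume.real (Metric.ball (0 : EuclideanSpace ℝ (Fin n)) 1)) := by
    rw [measureReal_def, Measure.addHaar_ball _ _ (by positivity), ENNReal.toReal_mul,
      ENNReal.toReal_ofReal (by positivity), measureReal_def]
    simp only [finrank_euclideanSpace, Fintype.card_fin]
    rw [mul_div_assoc, mul_pow, mul_assoc]
  rw [← hv]
  calc volume.real (Metric.ball (0 : EuclideanSpace ℝ (Fin n)) (τ * r0 / 2)) *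
        ((τ * r0) ^ 2 / 4 + S) ^ (-m)
      = ∫ v in Metric.ball (0 : EuclideanSpace ℝ (Fin n)) (τ * r0 / 2),
        ((τ * r0) ^ 2 / 4 + S) ^ (-m) := by simp
    _ ≤ ∫ v in Metric.ball (0 : EuclideanSpace ℝ (Fin n)) (τ * r0 / 2), (‖v‖ ^ 2 + S) ^ (-m) := by
      apply setIntegral_mono_on _ (hi _) measurableSet_ball
      · intro v hv
        rw [mem_ball_zero_iff] at hv
        apply Real.rpow_le_rpow_of_nonpos (by positivity) _ (by linarith)
        have : ‖v‖ ^ 2 ≤ (τ * r0 / 2) ^ 2 := by gcongr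
        linarith
      · exact integrableOn_const Metric.isBounded_ball.measure_lt_top.ne
    _ ≤ _ := by
      apply setIntegral_mono_set (hi _)
      · exact Filter.Eventually.of_forall fun v => by positivity
      · exact (Metric.ball_subset_ball (by nlinarith)).eventuallyLE

/-- The tail of the kernel relative to its mass: this is the exponential gain in `k`. -/
lemma ratio_bound {r0 τ S m k : ℝ} (hr0 : 0 < r0) (hτ : 0 < τ) (hτ1 : τ ≤ 1) (hS : 0 < S)
    (hk : k ≤ m) (hk0 : 0 ≤ k) :
    ((τ * r0) ^ 2 + S) ^ (-m) * ((τ * r0) ^ 2 / 4 + S) ^ m ≤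
      Real.exp (-(3 / 4 * r0 ^ 2 / (r0 ^ 2 + S) * τ ^ 2 * k)) := by
  have hq : 0 < (τ * r0) ^ 2 + S := by positivity
  have hm : 0 ≤ m := hk0.trans hk
  rw [Real.rpow_neg hq.le, inv_mul_eq_div, ← Real.div_rpow (by positivity) hq.le]
  have h1 : ((τ * r0) ^ 2 / 4 + S) / ((τ * r0) ^ 2 + S) ≤
      Real.exp (-(3 / 4 * r0 ^ 2 / (r0 ^ 2 + S) * τ ^ 2)) := by
    have e1 : ((τ * r0) ^ 2 / 4 + S) / ((τ * r0) ^ 2 + S) =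
        1 - 3 / 4 * (τ * r0) ^ 2 / ((τ * r0) ^ 2 + S) := by field_simp; ring
    have e2 : 3 / 4 * r0 ^ 2 / (r0 ^ 2 + S) * τ ^ 2 ≤
        3 / 4 * (τ * r0) ^ 2 / ((τ * r0) ^ 2 + S) := by
      have : 3 / 4 * r0 ^ 2 / (r0 ^ 2 + S) * τ ^ 2 = 3 / 4 * (τ * r0) ^ 2 / (r0 ^ 2 + S) := by
        ring
      rw [this]
      have hle : (τ * r0) ^ 2 ≤ r0 ^ 2 := by
        gcongr; nlinarith
      gcongr
    have := Real.add_one_le_exp (-(3 / 4 * r0 ^ 2 / (r0 ^ 2 + S) * τ ^ 2))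
    linarith
  calc (((τ * r0) ^ 2 / 4 + S) / ((τ * r0) ^ 2 + S)) ^ m
      ≤ Real.exp (-(3 / 4 * r0 ^ 2 / (r0 ^ 2 + S) * τ ^ 2)) ^ m :=
        Real.rpow_le_rpow (by positivity) h1 hm
    _ = Real.exp (-(3 / 4 * r0 ^ 2 / (r0 ^ 2 + S) * τ ^ 2) * m) := (Real.exp_mul _ _).symm
    _ ≤ _ := by
      apply Real.exp_le_exp.2
      have : 0 ≤ 3 / 4 * r0 ^ 2 / (r0 ^ 2 + S) * τ ^ 2 := by positivity
      nlinarith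

/-- After normalisation by the mass of the kernel, the loss in `HH_core` is still geometric in `k`. -/
lemma growth_bound {n : ℕ} (hn : 1 ≤ n) {A T C m : ℝ} (hA : 1 ≤ A) (hT : 0 ≤ T) (hC : 1 ≤ C)
    {k : ℕ} (hm0 : 0 ≤ m) (hm : m ≤ n + k) {b : ℝ} (hb : 0 ≤ b) (hbA : b ≤ A) :
    m * T * C ^ (k + 1) * b ^ m ≤ ((1 + T) * (2 * A) ^ n * C) ^ (k + 1) := by
  have h1 : b ^ m ≤ A ^ (n + k) := by
    calc b ^ m ≤ A ^ m := Real.rpow_le_rpow hb hbA hm0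
      _ ≤ A ^ ((n + k : ℕ) : ℝ) := Real.rpow_le_rpow_of_exponent_le hA (by push_cast; exact hm)
      _ = _ := Real.rpow_natCast _ _
  have h2 : m ≤ 2 ^ (n + k) := by
    refine hm.trans ?_
    have : n + k ≤ 2 ^ (n + k) := Nat.lt_two_pow_self.le
    exact_mod_cast this
  have h3 : T ≤ (1 + T) ^ (k + 1) := by
    calc T ≤ 1 + T := by linarith
      _ ≤ _ := le_self_pow₀ (by linarith) (by omega)
  calc m * T * C ^ (k + 1) * b ^ m ≤ 2 ^ (n + k) * (1 + T) ^ (k + 1) * C ^ (k + 1) * A ^ (n + k) := by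
        gcongr
    _ = (1 + T) ^ (k + 1) * (2 * A) ^ (n + k) * C ^ (k + 1) := by rw [mul_pow]; ring
    _ ≤ (1 + T) ^ (k + 1) * (2 * A) ^ (n * (k + 1)) * C ^ (k + 1) := by
        gcongr
        · linarith
        · nlinarith
    _ = _ := by rw [pow_mul, ← mul_pow, ← mul_pow]

lemma mass_alg {n : ℕ} {X Y q q' v t E Z : ℝ} (hq : q * q' = 1) (ht : 0 < t) (hv : 0 < v)
    (hq' : 0 < q') (hE : 0 ≤ E) (h : (X + Y) * q ≤ E) (hZ : t ^ n * v * q' ≤ Z) :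
    2 * (X + Y) ≤ 2 / v * (1 / t) ^ n * E * Z := by
  calc 2 * (X + Y) = 2 * ((X + Y) * q) * q' := by linear_combination (-2 * (X + Y)) * hq
    _ ≤ 2 * E * q' := by gcongr
    _ = 2 / v * (1 / t) ^ n * E * (t ^ n * v * q') := by
      rw [one_div, inv_pow]; field_simp
    _ ≤ _ := by gcongr

lemma pairing_alg {X N t w s G I E v q p Z Θ : ℝ} (hp : X * Z ≤ Z * (N * (t * w * (s * G))) + Θ * (q * I))
    (hΘ : Θ ≤ 2 / v * p * E * Z) (ht : 0 ≤ t) (hw : 0 ≤ w) (hs : 0 ≤ s) (hN : 0 ≤ N) (hG : 0 ≤ G)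
    (hq : 0 ≤ q) (hv : 0 < v) (hp0 : 0 ≤ p) (hI : 0 ≤ I) (hE : 0 ≤ E) (hZ : 0 < Z) :
    X ≤ t * (1 + w * s + 2 * q / v) * N * G + (1 + w * s + 2 * q / v) * p * I * E := by
  have h1 : X * Z ≤ (t * (w * s) * N * G + 2 * q / v * p * I * E) * Z := by
    refine hp.trans ?_
    have := mul_le_mul_of_nonneg_right hΘ (mul_nonneg hq hI)
    refine (add_le_add le_rfl this).trans (le_of_eq ?_)
    ring
  refine (le_of_mul_le_mul_right h1 hZ).trans ?_
  have h2 : 0 ≤ w * s := mul_nonneg hw hs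
  have h3 : 0 ≤ 2 * q / v := by positivity
  gcongr <;> linarith

set_option maxHeartbeats 1000000 in
/-- The quantitative unique continuation estimate in dual form: if the dual potential of `g` is
of size `η` on `Ω₁`, then `g` is almost orthogonal to functions with square-integrable
gradient. The parameters `τ` (length scale) and `k` (order of the kernel) are free. -/
lemma pairing_final {n : ℕ} (hn : 2 ≤ n) {Ω₁ Ω : Set (EuclideanSpace ℝ (Fin n))}
    (hΩ₁ : IsOpen Ω₁) (hΩ₁ne : Ω₁.Nonempty) (hΩ : IsOpen Ω) (hΩb : Bornology.IsBounded Ω)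
    (hΩne : Ω.Nonempty) (hconv : Convex ℝ Ω) (j : Fin n) {d : ℝ} (hd : 0 < d)
    (hsep : ∀ x ∈ Ω, ∀ y ∈ Ω₁, d ≤ ‖x - y‖) :
    ∃ K B c θ : ℝ, 1 ≤ K ∧ 1 ≤ B ∧ 0 < c ∧ 0 < θ ∧
      ∀ h g : EuclideanSpace ℝ (Fin n) → ℝ, Differentiable ℝ h →
      IntegrableOn (fun x => h x ^ 2) Ω → IntegrableOn (fun x => ‖gradient h x‖ ^ 2) Ω →
      Measurable g → IntegrableOn (fun x => g x ^ 2) Ω → ∫ x in Ω, |g x| ≤ 1 →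
      ∀ η : ℝ, 0 < η → η ≤ 1 →
      IntegrableOn (fun y => (∫ x in Ω, g x * ((x j - y j) / ‖x - y‖ ^ (n + 1))) ^ 2) Ω₁ →
      ∫ y in Ω₁, (∫ x in Ω, g x * ((x j - y j) / ‖x - y‖ ^ (n + 1))) ^ 2 ≤ η ^ 2 →
      ∀ τ : ℝ, 0 < τ → τ ≤ 1 / 2 → ∀ k : ℕ,
      |∫ x in Ω, g x * h x| ≤
        τ * K * Real.sqrt (∫ x in Ω, g x ^ 2) * Real.sqrt (∫ x in Ω, ‖gradient h x‖ ^ 2) +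
        K * (1 / τ) ^ n * (∫ x in Ω, |h x|) *
          (Real.exp (-(c * τ ^ 2 * k)) + B ^ (k + 1) * η ^ θ) := by
  have hn1 : 1 ≤ n := by omega
  obtain ⟨y0, hy0⟩ := hΩ₁ne
  obtain ⟨x0, hx0⟩ := hΩne
  obtain ⟨r0, hr0, hball⟩ := Metric.isOpen_iff.1 hΩ x0 hx0
  obtain ⟨D', hD'⟩ := hΩb.subset_closedBall x0
  set D := max D' 0 with hDdef
  have hD0 : 0 ≤ D := le_max_right _ _
  have hD : ∀ x ∈ Ω, ‖x - x0‖ ≤ D := fun x hx => by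
    have := hD' hx
    rw [mem_closedBall_iff_norm] at this
    exact this.trans (le_max_left _ _)
  set L := ‖x0 - y0‖ with hL
  have hL0 : 0 ≤ L := norm_nonneg _
  have htri : ∀ z, ‖z - y0‖ ≤ ‖z - x0‖ + L := fun z => by
    have := norm_add_le (z - x0) (x0 - y0)
    rwa [sub_add_sub_cancel] at this
  set T := 3 * D + r0 with hT
  have hT0 : 0 ≤ T := by positivity
  obtain ⟨C, θ, hC, hθ, hcore⟩ := HH_core hΩ.measurableSet hΩ₁ j hy0 hd
    (add_nonneg hD0 hL0) (by positivity : 0 ≤ 2 * D + T + L)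
    (fun x hx => ⟨hsep x hx y0 hy0, (htri x).trans (by linarith [hD x hx])⟩)
  set S := (D + L) ^ 2 + 1 with hS
  have hS1 : 1 ≤ S := by have := sq_nonneg (D + L); linarith
  have hS0 : 0 < S := by linarith
  set A := S + r0 ^ 2 with hA
  have hA1 : 1 ≤ A := by have := sq_nonneg r0; linarith
  set v0 := (r0 / 2) ^ n * volume.real (Metric.ball (0 : EuclideanSpace ℝ (Fin n)) 1) with hv0
  have hv0p : 0 < v0 := by
    have : 0 < volume.real (Metric.ball (0 : EuclideanSpace ℝ (Fin n)) 1) :=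
      ENNReal.toReal_pos (Metric.measure_ball_pos volume _ one_pos).ne'
        Metric.isBounded_ball.measure_lt_top.ne
    positivity
  refine ⟨1 + (D + r0) * Real.sqrt (2 ^ n) + 2 * 2 ^ n / v0, (1 + T) * (2 * A) ^ n * C,
    3 / 4 * r0 ^ 2 / (r0 ^ 2 + S), θ, ?_, ?_, by positivity, hθ, ?_⟩
  · have h1 : 0 ≤ (D + r0) * Real.sqrt (2 ^ n) := by positivity
    have h2 : 0 ≤ 2 * 2 ^ n / v0 := by positivity
    linarith
  · have h1 : 1 ≤ (2 * A) ^ n := one_le_pow₀ (by linarith)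
    exact one_le_mul_of_one_le_of_one_le (one_le_mul_of_one_le_of_one_le (by linarith) h1) hC
  intro h g hh hh2 hG2 hgm hg2 hg1 η hη hη1 hu hu2 τ hτ hτ1 k
  have hfin : IsFiniteMeasure (volume.restrict Ω) := ⟨by simpa using hΩb.measure_lt_top⟩
  have hgi : IntegrableOn g Ω :=
    ((memLp_two_iff_integrable_sq hgm.aestronglyMeasurable).2 hg2).integrable (by norm_num)
  have hnorm : ∀ y, ‖HH Ω g j 0 (rc y) 0‖ ^ 2 =
      (∫ x in Ω, g x * ((x j - y j) / ‖x - y‖ ^ (n + 1))) ^ 2 := fun y => by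
    rw [HH_real_zero, Complex.norm_real, Real.norm_eq_abs, sq_abs]
  have hβ := hcore g hgi hg1 η hη hη1 (by simpa only [hnorm] using hu)
    (by simpa only [hnorm] using hu2) k
  set β := C ^ (k + 1) * η ^ θ with hβd
  set m := km n k - 1 with hm
  have hmk : m = ((n : ℝ) - 1) / 2 + k := by rw [hm, km]; ring
  have hnR : (2 : ℝ) ≤ n := by exact_mod_cast hn
  have hk0 : (0 : ℝ) ≤ k := Nat.cast_nonneg k
  have hm0 : 0 < m := by rw [hmk]; linarith
  set a := τ * r0 with ha
  have ha0 : 0 < a := by positivity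
  have har : a ≤ r0 := by nlinarith
  set P : EuclideanSpace ℝ (Fin n) → ℝ := fun v => (‖v‖ ^ 2 + S) ^ (-m) with hP
  have hPc : Continuous P := by
    simp only [hP]
    apply Continuous.rpow_const (by fun_prop)
    intro v; left; positivity
  have hp := pairing_bound hΩ.measurableSet hΩb.measure_lt_top.ne hconv hr0 hball hD hτ hτ1 hPc
    (fun v => by simp only [hP]; positivity) (M := S ^ (-m)) (fun v => by
      simp only [hP]
      apply Real.rpow_le_rpow_of_nonpos hS0 _ (by linarith)
      have := sq_nonneg ‖v‖
      linarith) hh hh2 hG2 hgm hg2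
    (Θ := 2 * (a ^ 2 + S) ^ (-m) + 2 * m * T * β) (fun z hz =>
      theta_bound hΩ.measurableSet hD hD0 ha0.le (by linarith) hS0 j k hm hm0 hgi hg1
        (fun z hz => hβ z ((htri z).trans (by linarith))) hz)
  have hZ := mass_lower (n := n) hn1 (m := m) hr0 hτ hS0 hm0
  rw [← ha, ← hv0] at hZ
  set Z := ∫ v in Metric.ball 0 a, P v with hZd
  change _ ≤ Z at hZ
  have hb0 : 0 < a ^ 2 / 4 + S := by positivity
  have hlow : 0 < τ ^ n * v0 * (a ^ 2 / 4 + S) ^ (-m) := by positivity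
  have hZ0 : 0 < Z := hlow.trans_le hZ
  set E := Real.exp (-(3 / 4 * r0 ^ 2 / (r0 ^ 2 + S) * τ ^ 2 * k)) +
    ((1 + T) * (2 * A) ^ n * C) ^ (k + 1) * η ^ θ with hE
  have hE0 : 0 ≤ E := by
    have : 0 ≤ A := by linarith
    have : 0 ≤ C := by linarith
    positivity
  have hΘ : 2 * (a ^ 2 + S) ^ (-m) + 2 * m * T * β ≤ 2 / v0 * (1 / τ) ^ n * E * Z := by
    have r1 := ratio_bound (m := m) (k := k) hr0 hτ (by linarith) hS0 (by rw [hmk]; linarith) hk0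
    have r2 := growth_bound hn1 hA1 hT0 hC (k := k) hm0.le (by rw [hmk]; linarith) hb0.le
      (by rw [hA]; nlinarith)
    rw [← ha] at r1
    have r3 : ((a ^ 2 + S) ^ (-m) + m * T * β) * (a ^ 2 / 4 + S) ^ m ≤ E := by
      rw [add_mul, hE]
      refine add_le_add r1 ?_
      calc m * T * β * (a ^ 2 / 4 + S) ^ m
          = m * T * C ^ (k + 1) * (a ^ 2 / 4 + S) ^ m * η ^ θ := by rw [hβd]; ring
        _ ≤ _ := mul_le_mul_of_nonneg_right r2 (by positivity)
    have e := mass_alg (n := n) (by rw [← Real.rpow_add hb0, add_neg_cancel, Real.rpow_zero]) hτ hv0p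
      (by positivity) hE0 r3 hZ
    refine le_trans (le_of_eq ?_) e
    ring
  have hI0 : 0 ≤ ∫ x in Ω, |h x| := integral_nonneg fun x => abs_nonneg _
  rw [Real.sqrt_mul (by positivity)] at hp
  exact pairing_alg hp hΘ hτ.le (by positivity) (by positivity) (Real.sqrt_nonneg _)
    (Real.sqrt_nonneg _) (by positivity) hv0p (by positivity) hI0 hE0 hZ0

/-! ### Residual and cost of the control -/

lemma integral_abs_mul_le {X : Type*} [MeasurableSpace X] {μ : Measure X} {u v : X → ℝ}
    (hu : MemLp u 2 μ) (hv : MemLp v 2 μ) :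
    ∫ x, |u x * v x| ∂μ ≤ Real.sqrt (∫ x, u x ^ 2 ∂μ) * Real.sqrt (∫ x, v x ^ 2 ∂μ) := by
  have e : ENNReal.ofReal 2 = 2 := by simp
  have := integral_mul_le_Lp_mul_Lq_of_nonneg (μ := μ) Real.HolderConjugate.two_two
    (f := fun x => |u x|) (g := fun x => |v x|)
    (Filter.Eventually.of_forall fun x => abs_nonneg _)
    (Filter.Eventually.of_forall fun x => abs_nonneg _) (by rw [e]; exact hu.abs)
    (by rw [e]; exact hv.abs)
  simpa [abs_mul, Real.sqrt_eq_rpow] using this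

set_option maxHeartbeats 400000 in
/-- The control `f` is the minimizer of `‖h - R f‖² + V η² ‖f‖²`; its residual `g` is small because
`g` pairs with `h` to at least `‖g‖²`, while its dual potential is of size `η`. -/
lemma main_step {n : ℕ} {Ω₁ Ω : Set (EuclideanSpace ℝ (Fin n))} (hΩ₁ : MeasurableSet Ω₁)
    (hΩ : MeasurableSet Ω) (hV₁ : volume Ω₁ ≠ ⊤) (hV₂ : volume Ω ≠ ⊤) (j : Fin n) {d : ℝ}
    (hd : 0 < d) (hsep : ∀ x ∈ Ω, ∀ y ∈ Ω₁, d ≤ ‖x - y‖) {h : EuclideanSpace ℝ (Fin n) → ℝ}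
    (hm : Measurable h) (hh : IntegrableOn (fun x => h x ^ 2) Ω) {V η γ ε Γ a b : ℝ}
    (hV : V = volume.real Ω) (hV0 : 0 < V) (hγ : γ = Real.sqrt (∫ x in Ω, h x ^ 2)) (hγ0 : 0 < γ)
    (hε : 0 < ε) (hη : 0 < η) (ha : a * Γ ≤ ε / 2)
    (hb : b * (V * γ ^ 2) ≤ ε ^ 2 / 2) (hb0 : 0 ≤ b)
    (hpair : ∀ g : EuclideanSpace ℝ (Fin n) → ℝ, Measurable g →
      IntegrableOn (fun x => g x ^ 2) Ω → ∫ x in Ω, |g x| ≤ 1 →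
      IntegrableOn (fun y => (∫ x in Ω, g x * ((x j - y j) / ‖x - y‖ ^ (n + 1))) ^ 2) Ω₁ →
      ∫ y in Ω₁, (∫ x in Ω, g x * ((x j - y j) / ‖x - y‖ ^ (n + 1))) ^ 2 ≤ η ^ 2 →
      |∫ x in Ω, g x * h x| ≤
        a * Real.sqrt (∫ x in Ω, g x ^ 2) * Γ + b * ∫ x in Ω, |h x|) :
    ∃ f : EuclideanSpace ℝ (Fin n) → ℝ, Measurable f ∧ IntegrableOn (fun y => f y ^ 2) Ω₁ ∧
      Real.sqrt (∫ x in Ω, (h x - truncRiesz n Ω₁ j f x) ^ 2) ≤ ε ∧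
      Real.sqrt (∫ y in Ω₁, f y ^ 2) ≤ (Real.sqrt V)⁻¹ * η⁻¹ * γ := by
  have hfin : IsFiniteMeasure (volume.restrict Ω) := ⟨by simpa using hV₂.lt_top⟩
  obtain ⟨f, g, hf, hg, hf2, hg2, h1, h2, h3⟩ := riesz_tikhonov hΩ₁ hΩ hV₁ hV₂ j hd hsep hm hh
    (by positivity : 0 < V * η ^ 2)
  have hgL := (memLp_two_iff_integrable_sq hg.aestronglyMeasurable).2 hg2
  have hhL := (memLp_two_iff_integrable_sq hm.aestronglyMeasurable).2 hh
  have hsqrt1 : Real.sqrt (∫ x in Ω, (1:ℝ) ^ 2) = Real.sqrt V := by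
    simp [hV]
  set N := Real.sqrt (∫ x in Ω, g x ^ 2) with hN
  have hN0 : 0 ≤ N := Real.sqrt_nonneg _
  have hNsq : ∫ x in Ω, g x ^ 2 = N ^ 2 :=
    (Real.sq_sqrt (integral_nonneg fun x => sq_nonneg _)).symm
  set F := Real.sqrt (∫ y in Ω₁, f y ^ 2) with hF
  have hF0 : 0 ≤ F := Real.sqrt_nonneg _
  have hFsq : ∫ y in Ω₁, f y ^ 2 = F ^ 2 :=
    (Real.sq_sqrt (integral_nonneg fun x => sq_nonneg _)).symm
  have hs0 : 0 < Real.sqrt V := Real.sqrt_pos.2 hV0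
  have hsV : Real.sqrt V ^ 2 = V := Real.sq_sqrt hV0.le
  set w := Real.sqrt V with hw
  have hI1 : ∫ x in Ω, g x * h x ≤ N * γ := by
    rw [hγ]
    refine le_trans ?_ (integral_abs_mul_le hgL hhL)
    exact (le_abs_self _).trans (abs_integral_le_integral_abs)
  have hg1 : ∫ x in Ω, |g x| ≤ N * w := by
    have := integral_abs_mul_le hgL (memLp_const (1:ℝ))
    rw [hsqrt1] at this
    simpa using this
  have hh1 : ∫ x in Ω, |h x| ≤ γ * w := by
    have := integral_abs_mul_le hhL (memLp_const (1:ℝ))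
    rw [hsqrt1, ← hγ] at this
    simpa using this
  rw [hNsq, hFsq] at h3
  have hτF : 0 ≤ V * η ^ 2 * F ^ 2 := by positivity
  have hNγ : N ≤ γ := by
    by_contra hc
    push Not at hc
    nlinarith
  have hFγ : V * η ^ 2 * F ^ 2 ≤ γ ^ 2 := by nlinarith
  have hres : Real.sqrt (∫ x in Ω, (h x - truncRiesz n Ω₁ j f x) ^ 2) = N := by
    rw [hN]
    congr 1
    apply integral_congr_ae
    filter_upwards [h1] with x hx
    rw [hx]
  refine ⟨f, hf, hf2, ?_, ?_⟩
  · rw [hres]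
    -- scaling of the residual that makes its `L¹` norm at most `1`
    set s := (w * γ)⁻¹ with hs
    have hs0' : 0 < s := by positivity
    have hsw : s * (w * γ) = 1 := inv_mul_cancel₀ (by positivity)
    have hdual : ∀ᵐ y ∂volume.restrict Ω₁,
        (∫ x in Ω, s * g x * ((x j - y j) / ‖x - y‖ ^ (n + 1))) ^ 2 =
          (s * (V * η ^ 2)) ^ 2 * f y ^ 2 := by
      filter_upwards [h2] with y hy
      simp_rw [mul_assoc s]
      rw [integral_const_mul, hy]
      ring
    have hp := hpair (fun x => s * g x) (hg.const_mul s)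
      (by
        simp_rw [mul_pow]
        exact hg2.const_mul _)
      (by
        simp_rw [abs_mul, abs_of_pos hs0']
        rw [integral_const_mul, ← hsw]
        refine mul_le_mul_of_nonneg_left (hg1.trans ?_) hs0'.le
        nlinarith)
      ((hf2.const_mul ((s * (V * η ^ 2)) ^ 2)).congr (by
        filter_upwards [hdual] with y hy
        exact hy.symm))
      (by
        rw [integral_congr_ae hdual, integral_const_mul, hFsq]
        calc (s * (V * η ^ 2)) ^ 2 * F ^ 2 = s ^ 2 * V * η ^ 2 * (V * η ^ 2 * F ^ 2) := by ring
          _ ≤ s ^ 2 * V * η ^ 2 * γ ^ 2 := by gcongr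
          _ = (s * (w * γ)) ^ 2 * η ^ 2 := by rw [← hsV]; ring
          _ = η ^ 2 := by rw [hsw]; ring)
    have e1 : Real.sqrt (∫ x in Ω, (s * g x) ^ 2) = s * N := by
      simp_rw [mul_pow]
      rw [integral_const_mul, hNsq, ← mul_pow, Real.sqrt_sq (by positivity)]
    have e2 : ∫ x in Ω, s * g x * h x = s * ∫ x in Ω, g x * h x := by
      simp_rw [mul_assoc s]
      rw [integral_const_mul]
    rw [e1, e2, h3] at hp
    have hp2 : s * (N ^ 2 + V * η ^ 2 * F ^ 2) ≤ a * (s * N) * Γ + b * (γ * w) :=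
      (le_abs_self _).trans (hp.trans (by gcongr))
    have hp3 : N ^ 2 ≤ a * Γ * N + b * (V * γ ^ 2) := by
      have := mul_le_mul_of_nonneg_left hp2 (by positivity : 0 ≤ w * γ)
      have l1 : w * γ * (s * (N ^ 2 + V * η ^ 2 * F ^ 2)) =
          (s * (w * γ)) * (N ^ 2 + V * η ^ 2 * F ^ 2) := by ring
      have l2 : w * γ * (a * (s * N) * Γ + b * (γ * w)) =
          (s * (w * γ)) * (a * Γ * N) + b * (w ^ 2 * γ ^ 2) := by ring
      rw [l1, l2, hsw, hsV] at this
      linarith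
    have hp4 : N ^ 2 ≤ ε / 2 * N + ε ^ 2 / 2 := by
      have := mul_le_mul_of_nonneg_right ha hN0
      linarith
    by_contra hc
    push Not at hc
    have h7 : 0 < (N - ε) * (N + ε / 2) := mul_pos (sub_pos.2 hc) (by positivity)
    have h8 : (N - ε) * (N + ε / 2) = N ^ 2 - (ε / 2 * N + ε ^ 2 / 2) := by ring
    linarith
  · have h4 : (w * η * F) ^ 2 ≤ γ ^ 2 := by
      calc (w * η * F) ^ 2 = w ^ 2 * η ^ 2 * F ^ 2 := by ring
        _ ≤ _ := by rw [hsV]; exact hFγ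
    have h5 := abs_le_of_sq_le_sq h4 hγ0.le
    have h6 := abs_le.1 h5
    calc F = w⁻¹ * η⁻¹ * (w * η * F) := by field_simp
      _ ≤ _ := by gcongr; exact h6.2

theorem stmt_19 (n : ℕ) (hn : 2 ≤ n) (Ω₁ Ω₂ : Set (EuclideanSpace ℝ (Fin n)))
    (hΩ₁o : IsOpen Ω₁) (hΩ₁b : Bornology.IsBounded Ω₁) (hΩ₁ne : Ω₁.Nonempty)
    (hΩ₂o : IsOpen Ω₂) (hΩ₂b : Bornology.IsBounded Ω₂) (hΩ₂ne : Ω₂.Nonempty)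
    (hΩ₂conv : Convex ℝ Ω₂)
    (hdisj : Disjoint (closure Ω₁) (closure Ω₂)) :
    ∃ σ C : ℝ, 0 < σ ∧ 1 < C ∧
      ∀ ε : ℝ, 0 < ε →
      ∀ h : EuclideanSpace ℝ (Fin n) → ℝ, Differentiable ℝ h →
        IntegrableOn (fun x => (h x) ^ 2) Ω₂ volume →
        IntegrableOn (fun x => ‖gradient h x‖ ^ 2) Ω₂ volume →
        ∃ (j : Fin n) (f : EuclideanSpace ℝ (Fin n) → ℝ), Measurable f ∧
          IntegrableOn (fun y => (f y) ^ 2) Ω₁ volume ∧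
          Real.sqrt (∫ x in Ω₂, (h x - truncRiesz n Ω₁ j f x) ^ 2) ≤ ε ∧
          Real.sqrt (∫ y in Ω₁, (f y) ^ 2) ≤
            Real.exp (C * (1 +
                (Real.sqrt (∫ x in Ω₂, ((h x) ^ 2 + ‖gradient h x‖ ^ 2))) ^ σ / ε ^ σ)) *
              Real.sqrt (∫ x in Ω₂, (h x) ^ 2) := by
  obtain ⟨r, hr, hsep⟩ := Metric.exists_pos_forall_lt_edist hΩ₁b.isCompact_closure
    isClosed_closure hdisj
  have hsep' : ∀ x ∈ Ω₂, ∀ y ∈ Ω₁, (r : ℝ) ≤ ‖x - y‖ := by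
    intro x hx y hy
    have := hsep y (subset_closure hy) x (subset_closure hx)
    rw [edist_nndist, ENNReal.coe_lt_coe] at this
    rw [← dist_eq_norm, dist_comm, ← coe_nndist]
    exact_mod_cast this.le
  have hr' : (0 : ℝ) < r := hr
  set j : Fin n := ⟨0, by omega⟩ with hj
  obtain ⟨K, B, c, θ, hK, hB, hc, hθ, hpair⟩ :=
    pairing_final hn hΩ₁o hΩ₁ne hΩ₂o hΩ₂b hΩ₂ne hΩ₂conv j hr' hsep'
  have hV0 : 0 < volume.real Ω₂ :=
    ENNReal.toReal_pos (hΩ₂o.measure_pos volume hΩ₂ne).ne' hΩ₂b.measure_lt_top.ne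
  obtain ⟨C, hC, hpar⟩ := parameters n (by linarith : 0 < K) hV0 hB hc hθ
  refine ⟨3, C, by norm_num, hC, ?_⟩
  intro ε hε h hh hh2 hG2
  refine ⟨j, ?_⟩
  set γ := Real.sqrt (∫ x in Ω₂, h x ^ 2) with hγ
  have hγ0 : 0 ≤ γ := Real.sqrt_nonneg _
  set H := Real.sqrt (∫ x in Ω₂, (h x ^ 2 + ‖gradient h x‖ ^ 2)) with hH
  -- for `‖h‖ ≤ ε` the zero control suffices; otherwise `Q = ‖h‖_{H¹} / ε ≥ 1`
  rcases le_or_gt γ ε with hle | hlt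
  · exact ⟨fun _ => 0, measurable_const, by simp, by simpa [truncRiesz] using hle,
      by simpa using mul_nonneg (Real.exp_pos _).le hγ0⟩
  have hγH : γ ≤ H := by
    apply Real.sqrt_le_sqrt
    apply integral_mono hh2 (hh2.add hG2)
    intro x
    simp
  have hΓH : Real.sqrt (∫ x in Ω₂, ‖gradient h x‖ ^ 2) ≤ H := by
    apply Real.sqrt_le_sqrt
    apply integral_mono hG2 (hh2.add hG2)
    intro x
    simpa using sq_nonneg (h x)
  set Q := H / ε with hQ
  have hHQ : H = Q * ε := by rw [hQ]; field_simp
  have hQ1 : 1 ≤ Q := by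
    rw [hQ, one_le_div hε]; linarith
  obtain ⟨k, η, hη, hη1, hsmall, hcost⟩ := hpar Q hQ1
  have hKQ : 0 < 2 * K * Q := by positivity
  set E := Real.exp (-(c * (1 / (2 * K * Q)) ^ 2 * k)) + B ^ (k + 1) * η ^ θ with hE
  have hE0 : 0 ≤ E := by positivity
  obtain ⟨f, hf, hf2, hf3, hf4⟩ := main_step hΩ₁o.measurableSet hΩ₂o.measurableSet
    hΩ₁b.measure_lt_top.ne hΩ₂b.measure_lt_top.ne j hr' hsep' hh.continuous.measurable hh2
    rfl hV0 hγ (hε.trans hlt) hε hη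
    (a := 1 / (2 * K * Q) * K) (Γ := Real.sqrt (∫ x in Ω₂, ‖gradient h x‖ ^ 2))
    (b := K * (2 * K * Q) ^ n * E)
    (by
      calc 1 / (2 * K * Q) * K * Real.sqrt (∫ x in Ω₂, ‖gradient h x‖ ^ 2)
          ≤ 1 / (2 * K * Q) * K * (Q * ε) := by rw [← hHQ]; gcongr
        _ = ε / 2 := by field_simp)
    (by
      have : γ ^ 2 ≤ (Q * ε) ^ 2 := by rw [← hHQ]; gcongr
      calc K * (2 * K * Q) ^ n * E * (volume.real Ω₂ * γ ^ 2)
          ≤ K * (2 * K * Q) ^ n * E * (volume.real Ω₂ * (Q * ε) ^ 2) := by gcongr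
        _ = (K * volume.real Ω₂ * (2 * K * Q) ^ n * Q ^ 2 * E) * ε ^ 2 := by ring
        _ ≤ 1 / 2 * ε ^ 2 := by gcongr
        _ = _ := by ring)
    (by positivity)
    (fun g hg hg2 hg1 hu hu2 => by
      have := hpair h g hh hh2 hG2 hg hg2 hg1 η hη hη1 hu hu2 (1 / (2 * K * Q)) (by positivity)
        (one_div_le_one_div_of_le (by norm_num) (by nlinarith)) k
      rw [one_div_one_div, ← hE] at this
      refine this.trans (le_of_eq ?_)
      ring)
  refine ⟨f, hf, hf2, hf3, hf4.trans ?_⟩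
  have hpow : H ^ (3:ℝ) / ε ^ (3:ℝ) = Q ^ 3 := by
    rw [hQ, div_pow]
    norm_cast
  rw [hpow]
  gcongr
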